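/- Assume the Riemann Hypothesis and the Strong Pair Correlation Conjecture. Then the Simple Zeros Conjecture holds: N*(T) → 1 as T → ∞. -/

import Mathlib

/-!
Integrating `F(α)` against the Fejér weight `1 - α / M` over `[0, M]` gives a sum over pairs of
zeros with a nonnegative kernel, whose diagonal is `(M / 2) N*(T)`. The Strong Pair Correlation
Conjecture bounds the part over `[1, M]` by `(1 + o(1)) M / 2`. On `[0, 1]` the weight is at most
twice the weight for `M = 2`, and the mean for `M = 2` is `O(1)`, because there are `O(T log T)`
pairs of zeros at distance `O(1 / log T)`. Hence `N*(T) ≤ 1 + o(1) + O(1 / M)`.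

The pairs are counted following Selberg. Put `L = log T / 8`. Under RH, the real part of the
logarithmic derivative of `ξ` at `1/2 + z` is a sum of positive terms over the zeros when
`Re z > 0`, so the number of zeros within `1 / L` of the height `t` is at most `O(1 / L)` times its
value at distance `1 / L` from the critical line, smoothed at scale `1 / L`. The smoothing kernel is
of exponential type, so the explicit formula turns this value into `O(log T)` plus a Dirichlet
polynomial of length `T ^ (1/8)`, whose mean square the mean value theorem controls.

Conversely `m_ρ ^ 2 ≥ m_ρ`, so `N*(T)` is at least the normalised number of zeros, and integrating
the same real part over the line `Re s = 3/2` gives `N(T) ≥ (T / 2π) log T - O(T)`.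
-/

open Complex Filter MeasureTheory Real Set

noncomputable section

/-- A non-trivial zero of the Riemann zeta function. -/
def ZetaNontrivZero (ρ : ℂ) : Prop := riemannZeta ρ = 0 ∧ 0 < ρ.re ∧ ρ.re < 1

/-- The multiplicity of `ρ` as a zero of `ζ`. -/
def zetaMult (ρ : ℂ) : ℕ := sInf {n : ℕ | iteratedDeriv n riemannZeta ρ ≠ 0}

/-- The set of non-trivial zeros with ordinate in `(0, T]`. -/
def zerosUpTo (T : ℝ) : Set ℂ := {ρ | ZetaNontrivZero ρ ∧ 0 < ρ.im ∧ ρ.im ≤ T}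

/-- Montgomery's pair correlation function `F(x,T)`, zeros counted with multiplicity. -/
def Fxt (x T : ℝ) : ℂ :=
  ∑' p : zerosUpTo T × zerosUpTo T,
    (zetaMult p.1 * zetaMult p.2 : ℂ) *
      Complex.exp (Complex.I * (((p.1 : ℂ).im - (p.2 : ℂ).im : ℝ) : ℂ) * (Real.log x : ℂ)) *
      ((4 / (4 + ((p.1 : ℂ).im - (p.2 : ℂ).im) ^ 2) : ℝ) : ℂ)

/-- The normalized form `F(α) = F(α, T)`. -/
def FF (α T : ℝ) : ℂ := ((T / (2 * π) * Real.log T : ℝ) : ℂ)⁻¹ * Fxt (T ^ α) T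

/-- The Strong Pair Correlation Conjecture: for every fixed `M ≥ 1`,
`F(α,T) = 1 + o(1)` as `T → ∞`, uniformly for `1 ≤ α ≤ M`. -/
def SPC : Prop :=
  ∀ M : ℝ, 1 ≤ M → ∀ ε : ℝ, 0 < ε → ∃ T₀ : ℝ, ∀ T : ℝ, T₀ ≤ T →
    ∀ α : ℝ, 1 ≤ α → α ≤ M → ‖FF α T - 1‖ ≤ ε

/-- `N*(T) = ((T/2π) log T)⁻¹ ∑_{0<γ≤T} m_ρ`, the sum over ordinates counted with
multiplicity (so each distinct zero contributes `m_ρ²`). -/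
def Nstar (T : ℝ) : ℝ :=
  (T / (2 * π) * Real.log T)⁻¹ * ∑' ρ : zerosUpTo T, (zetaMult (ρ : ℂ) : ℝ) ^ 2

namespace PairCorrelation

/-! ### Partial fractions of the logarithmic derivative -/

theorem exists_log_of_differentiableOn_ball {g : ℂ → ℂ} {c : ℂ} {R : ℝ}
    (hg : DifferentiableOn ℂ g (Metric.ball c R)) (hg₀ : ∀ z ∈ Metric.ball c R, g z ≠ 0) :
    ∃ l : ℂ → ℂ, l c = 0 ∧ (∀ z ∈ Metric.ball c R, HasDerivAt l (logDeriv g z) z) ∧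
      ∀ z ∈ Metric.ball c R, g z = g c * exp (l z) := by
  have hlog : DifferentiableOn ℂ (logDeriv g) (Metric.ball c R) :=
    (hg.deriv Metric.isOpen_ball).div hg hg₀
  obtain ⟨l, hlc, hl⟩ := hlog.isExactOn_ball.with_val_at c 0
  refine ⟨l, hlc, hl, fun z hz ↦ ?_⟩
  have hquot : ∀ w ∈ Metric.ball c R, HasDerivAt (fun w ↦ g w * exp (-l w)) 0 w := by
    intro w hw
    have hgw := ((hg w hw).differentiableAt (Metric.isOpen_ball.mem_nhds hw)).hasDerivAt
    have hprod := hgw.mul (hl w hw).neg.cexp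
    have hzero : deriv g w * cexp ((-l) w) + g w * (cexp ((-l) w) * -logDeriv g w) = 0 := by
      rw [logDeriv_apply]
      field_simp [hg₀ w hw]
      ring
    rwa [hzero] at hprod
  have hconst := Metric.isOpen_ball.is_const_of_deriv_eq_zero (convex_ball c R).isPreconnected
    (fun w hw ↦ (hquot w hw).differentiableAt.differentiableWithinAt)
    (fun w hw ↦ (hquot w hw).deriv) hz (Metric.mem_ball_self (Metric.pos_of_mem_ball hz))
  simp only [hlc, neg_zero, Complex.exp_zero, mul_one] at hconst
  rw [← hconst, mul_assoc, ← Complex.exp_add, neg_add_cancel, Complex.exp_zero, mul_one]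

theorem norm_le_of_re_le_of_norm_sub_le {l : ℂ → ℂ} {c z : ℂ} {R M : ℝ} (hR : 0 < R)
    (hM : 0 < M) (hl : DifferentiableOn ℂ l (Metric.ball c R))
    (hre : ∀ w ∈ Metric.ball c R, (l w).re ≤ M) (hc : l c = 0) (hz : ‖z - c‖ ≤ R / 2) :
    ‖l z‖ ≤ 2 * M := by
  have hshift : MapsTo (· + c) (Metric.ball 0 R) (Metric.ball c R) := fun u hu ↦ by
    simpa [dist_eq_norm] using hu
  have hbound := borelCaratheodory_zero (f := fun u ↦ l (u + c)) (z := z - c) hM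
    (hl.comp (by fun_prop) hshift) (fun u hu ↦ hre _ (hshift hu)) hR
    (by rw [mem_ball_zero_iff]; linarith) (by simpa using hc)
  rw [sub_add_cancel] at hbound
  refine hbound.trans ?_
  rw [div_le_iff₀ (by linarith)]
  nlinarith [norm_nonneg (z - c)]

section NonvanishingOnBall

variable {g : ℂ → ℂ} {c z : ℂ} {R M : ℝ}

theorem norm_logDeriv_le_of_norm_le_exp (hM : 0 < M)
    (hg : DifferentiableOn ℂ g (Metric.ball c R)) (hg₀ : ∀ z ∈ Metric.ball c R, g z ≠ 0)
    (hgM : ∀ z ∈ Metric.ball c R, ‖g z‖ ≤ ‖g c‖ * Real.exp M) (hz : z ∈ Metric.ball c (R / 4)) :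
    ‖logDeriv g z‖ ≤ 8 * M / R := by
  have hR : 0 < R := by linarith [Metric.pos_of_mem_ball hz]
  obtain ⟨l, hlc, hl, hgl⟩ := exists_log_of_differentiableOn_ball hg hg₀
  have hld : DifferentiableOn ℂ l (Metric.ball c R) := fun w hw ↦
    (hl w hw).differentiableAt.differentiableWithinAt
  have hre : ∀ w ∈ Metric.ball c R, (l w).re ≤ M := by
    intro w hw
    have hw' := hgM w hw
    rw [hgl w hw, norm_mul, norm_exp] at hw'
    exact Real.exp_le_exp.1
      (le_of_mul_le_mul_left hw' (norm_pos_iff.2 (hg₀ c (Metric.mem_ball_self hR))))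
  rw [mem_ball_iff_norm] at hz
  have hnear : ∀ u ∈ Metric.closedBall z (R / 4), ‖u - c‖ ≤ R / 2 := fun u hu ↦ by
    rw [mem_closedBall_iff_norm] at hu
    linarith [norm_sub_le_norm_sub_add_norm_sub u z c]
  have hball : Metric.closedBall z (R / 4) ⊆ Metric.ball c R := fun u hu ↦ by
    rw [mem_ball_iff_norm]; linarith [hnear u hu]
  have hcauchy := norm_deriv_le_of_forall_mem_sphere_norm_le (C := 2 * M)
    (by positivity : 0 < R / 4)
    (hld.mono (Metric.closure_ball_subset_closedBall.trans hball)).diffContOnCl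
    (fun u hu ↦ norm_le_of_re_le_of_norm_sub_le hR hM hld hre hlc
      (hnear u (Metric.sphere_subset_closedBall hu)))
  rw [(hl z (hball (Metric.mem_closedBall_self (by positivity)))).deriv] at hcauchy
  exact hcauchy.trans_eq (by ring)

theorem norm_logDeriv_sub_le_of_norm_le_exp (hM : 0 < M)
    (hg : DifferentiableOn ℂ g (Metric.ball c R)) (hg₀ : ∀ z ∈ Metric.ball c R, g z ≠ 0)
    (hgM : ∀ z ∈ Metric.ball c R, ‖g z‖ ≤ ‖g c‖ * Real.exp M) (hz : z ∈ Metric.ball c (R / 4)) :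
    ‖logDeriv g z - logDeriv g c‖ ≤ 64 * M / R ^ 2 * ‖z - c‖ := by
  have hR : 0 < R := by linarith [Metric.pos_of_mem_ball hz]
  have hlog : DifferentiableOn ℂ (logDeriv g) (Metric.ball c (R / 4)) :=
    ((hg.deriv Metric.isOpen_ball).div hg hg₀).mono (Metric.ball_subset_ball (by linarith))
  have hmaps : MapsTo (logDeriv g) (Metric.ball c (R / 4))
      (Metric.closedBall (logDeriv g c) (8 * M / R + 8 * M / R)) := fun w hw ↦ by
    rw [mem_closedBall_iff_norm]
    exact (norm_sub_le _ _).trans (add_le_add (norm_logDeriv_le_of_norm_le_exp hM hg hg₀ hgM hw)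
      (norm_logDeriv_le_of_norm_le_exp hM hg hg₀ hgM (Metric.mem_ball_self (by positivity))))
  have hschwarz := dist_le_div_mul_dist_of_mapsTo_ball hlog hmaps hz
  rw [dist_eq_norm, dist_eq_norm] at hschwarz
  exact hschwarz.trans_eq (by field_simp; ring)

end NonvanishingOnBall

theorem exists_eq_pow_mul_of_analyticOrderAt_ne_top {f : ℂ → ℂ} (hf : Differentiable ℂ f) {a : ℂ}
    (ha : analyticOrderAt f a ≠ ⊤) :
    ∃ g : ℂ → ℂ, Differentiable ℂ g ∧ g a ≠ 0 ∧
      ∀ z, f z = (z - a) ^ analyticOrderNatAt f a * g z := by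
  obtain ⟨h, hh, hha, hfh⟩ := (hf.analyticAt a).analyticOrderAt_ne_top.1 ha
  set n := analyticOrderNatAt f a
  let g : ℂ → ℂ := Function.update (fun z ↦ f z / (z - a) ^ n) a (h a)
  have hga : g a = h a := Function.update_self ..
  have hg : ∀ z ≠ a, g z = f z / (z - a) ^ n := fun z hz ↦ Function.update_of_ne hz ..
  have hgh : g =ᶠ[nhds a] h := by
    filter_upwards [hfh] with z hz
    rcases eq_or_ne z a with rfl | hza
    · exact hga
    · rw [hg z hza, hz, smul_eq_mul, mul_div_cancel_left₀ _ (pow_ne_zero _ (sub_ne_zero.2 hza))]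
  refine ⟨g, fun z ↦ ?_, hga ▸ hha, fun z ↦ ?_⟩ <;> rcases eq_or_ne z a with rfl | hza
  · exact hh.differentiableAt.congr_of_eventuallyEq hgh
  · have hquot : DifferentiableAt ℂ (fun z ↦ f z / (z - a) ^ n) z :=
      (hf z).div (by fun_prop) (pow_ne_zero _ (sub_ne_zero.2 hza))
    exact hquot.congr_of_eventuallyEq ((isOpen_ne.eventually_mem hza).mono hg)
  · simpa [hga] using hfh.self_of_nhds
  · rw [hg z hza, mul_div_cancel₀ _ (pow_ne_zero _ (sub_ne_zero.2 hza))]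

theorem exists_eq_prod_pow_mul {f : ℂ → ℂ} (hf : Differentiable ℂ f)
    (hord : ∀ a, analyticOrderAt f a ≠ ⊤) (S : Finset ℂ) :
    ∃ g : ℂ → ℂ, Differentiable ℂ g ∧ (∀ a ∈ S, g a ≠ 0) ∧
      ∀ z, f z = (∏ a ∈ S, (z - a) ^ analyticOrderNatAt f a) * g z := by
  classical
  induction S using Finset.induction_on with
  | empty => exact ⟨f, hf, by simp, by simp⟩
  | insert a S haS ih =>
    obtain ⟨g, hg, hgS, hfg⟩ := ih
    have hprod : Differentiable ℂ fun z ↦ ∏ b ∈ S, (z - b) ^ analyticOrderNatAt f b := by fun_prop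
    have hprod_a : ∏ b ∈ S, (a - b) ^ analyticOrderNatAt f b ≠ 0 :=
      Finset.prod_ne_zero_iff.2 fun b hb ↦ pow_ne_zero _ (sub_ne_zero.2 fun hab ↦ haS (hab ▸ hb))
    have horder : analyticOrderAt f a = analyticOrderAt g a := by
      rw [show f = (fun z ↦ ∏ b ∈ S, (z - b) ^ analyticOrderNatAt f b) * g from funext hfg,
        analyticOrderAt_mul (hprod.analyticAt a) (hg.analyticAt a),
        (hprod.analyticAt a).analyticOrderAt_eq_zero.2 hprod_a, zero_add]
    obtain ⟨h, hh, hha, hgh⟩ :=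
      exists_eq_pow_mul_of_analyticOrderAt_ne_top hg (horder ▸ hord a)
    refine ⟨h, hh, Finset.forall_mem_insert _ _ _ |>.2 ⟨hha, fun b hb ↦ ?_⟩, fun z ↦ ?_⟩
    · exact right_ne_zero_of_mul (hgh b ▸ hgS b hb)
    · rw [Finset.prod_insert haS, hfg z, hgh z, analyticOrderNatAt, analyticOrderNatAt, horder]
      ring

theorem logDeriv_prod_pow_mul {S : Finset ℂ} {n : ℂ → ℕ} {g : ℂ → ℂ} {z : ℂ}
    (hg : DifferentiableAt ℂ g z) (h₀ : (∏ a ∈ S, (z - a) ^ n a) * g z ≠ 0) :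
    logDeriv (fun w ↦ (∏ a ∈ S, (w - a) ^ n a) * g w) z =
      ∑ a ∈ S, (n a : ℂ) / (z - a) + logDeriv g z := by
  have hprod := left_ne_zero_of_mul h₀
  rw [logDeriv_mul z hprod (right_ne_zero_of_mul h₀) (by fun_prop) hg,
    logDeriv_prod (Finset.prod_ne_zero_iff.1 hprod) (by intros; fun_prop)]
  congr 1
  refine Finset.sum_congr rfl fun a _ ↦ ?_
  rw [logDeriv_fun_pow (by fun_prop), logDeriv_apply]
  simp [div_eq_mul_inv]

theorem finite_zeros_inter_closedBall {f : ℂ → ℂ} (hf : Differentiable ℂ f)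
    (hord : ∀ a, analyticOrderAt f a ≠ ⊤) (c : ℂ) (R : ℝ) :
    (Metric.closedBall c R ∩ {z | f z = 0}).Finite := by
  by_contra hinf
  obtain ⟨x, -, hx⟩ := Set.Infinite.exists_accPt_of_subset_isCompact hinf
    (isCompact_closedBall c R) inter_subset_left
  rcases (hf.analyticAt x).eventually_eq_zero_or_eventually_ne_zero with h | h
  · exact hord x (analyticOrderAt_eq_top.2 h)
  · rw [eventually_nhdsWithin_iff] at h
    exact accPt_iff_frequently.1 hx (h.mono fun z hz hz' ↦ hz hz'.1 hz'.2.2)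

theorem analyticOrderAt_ne_top_of_ne_zero {f : ℂ → ℂ} (hf : Differentiable ℂ f) {c : ℂ}
    (hc : f c ≠ 0) (a : ℂ) : analyticOrderAt f a ≠ ⊤ := by
  refine AnalyticOnNhd.analyticOrderAt_ne_top_of_isPreconnected (x := c) (U := univ)
    (fun x _ ↦ hf.analyticAt x) isPreconnected_univ (mem_univ _) (mem_univ _) ?_
  rw [(hf.analyticAt c).analyticOrderAt_eq_zero.2 hc]
  exact ENat.zero_ne_top

open scoped Classical in
/-- The zeros of `f` in the closed disc of radius `R` about `c`. The junk value `∅` is taken when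
there are infinitely many, which does not happen for an entire function `f ≠ 0`. -/
def zerosInBall (f : ℂ → ℂ) (c : ℂ) (R : ℝ) : Finset ℂ :=
  if h : (Metric.closedBall c R ∩ {z | f z = 0}).Finite then h.toFinset else ∅

/-- The principal part `∑ m_a / (z - a)` of `f' / f` over the zeros `a` in a closed disc. -/
def zerosPrincipalPart (f : ℂ → ℂ) (c : ℂ) (R : ℝ) (z : ℂ) : ℂ :=
  ∑ a ∈ zerosInBall f c R, (analyticOrderNatAt f a : ℂ) / (z - a)

theorem re_zerosPrincipalPart (f : ℂ → ℂ) (c : ℂ) (R : ℝ) (z : ℂ) :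
    (zerosPrincipalPart f c R z).re =
      ∑ a ∈ zerosInBall f c R, (analyticOrderNatAt f a : ℝ) * (1 / (z - a)).re := by
  rw [zerosPrincipalPart, re_sum]
  refine Finset.sum_congr rfl fun a _ ↦ ?_
  rw [div_eq_mul_one_div, ← ofReal_natCast, re_ofReal_mul]

section EntireFunction

variable {f : ℂ → ℂ} (hf : Differentiable ℂ f) {c : ℂ} (hc : f c ≠ 0)
include hf hc

theorem mem_zerosInBall {R : ℝ} {z : ℂ} : z ∈ zerosInBall f c R ↔ ‖z - c‖ ≤ R ∧ f z = 0 := by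
  rw [zerosInBall, dif_pos (finite_zeros_inter_closedBall hf
    (analyticOrderAt_ne_top_of_ne_zero hf hc) c R)]
  simp [dist_eq_norm]

theorem norm_le_of_eq_prod_zerosInBall_mul {g : ℂ → ℂ} {R A : ℝ}
    (hfg : ∀ z, f z = (∏ a ∈ zerosInBall f c R, (z - a) ^ analyticOrderNatAt f a) * g z)
    {w : ℂ} (hw : ‖w - c‖ = 2 * R) (hfw : ‖f w‖ ≤ ‖f c‖ * A) : ‖g w‖ ≤ ‖g c‖ * A := by
  have hprod_le : ‖∏ a ∈ zerosInBall f c R, (c - a) ^ analyticOrderNatAt f a‖ ≤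
      ‖∏ a ∈ zerosInBall f c R, (w - a) ^ analyticOrderNatAt f a‖ := by
    simp only [norm_prod, norm_pow]
    refine Finset.prod_le_prod (fun _ _ ↦ by positivity) fun a ha ↦
      pow_le_pow_left₀ (norm_nonneg _) ?_ _
    have hac := ((mem_zerosInBall hf hc).1 ha).1
    rw [norm_sub_rev]
    linarith [norm_sub_le_norm_sub_add_norm_sub w a c]
  have hprod_pos : 0 < ‖∏ a ∈ zerosInBall f c R, (c - a) ^ analyticOrderNatAt f a‖ :=
    norm_pos_iff.2 (left_ne_zero_of_mul (hfg c ▸ hc))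
  rw [hfg w, hfg c, norm_mul, norm_mul, mul_assoc] at hfw
  exact le_of_mul_le_mul_left
    ((mul_le_mul_of_nonneg_right hprod_le (norm_nonneg _)).trans hfw) hprod_pos

theorem norm_logDeriv_sub_zerosPrincipalPart_sub_le {R M : ℝ} (hM : 0 < M)
    (hfM : ∀ z, ‖z - c‖ = 2 * R → ‖f z‖ ≤ ‖f c‖ * Real.exp M) {z : ℂ} (hz : ‖z - c‖ < R / 4)
    (hfz : f z ≠ 0) :
    ‖(logDeriv f z - zerosPrincipalPart f c R z) - (logDeriv f c - zerosPrincipalPart f c R c)‖ ≤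
      64 * M / R ^ 2 * ‖z - c‖ := by
  have hR : 0 < R := by linarith [norm_nonneg (z - c)]
  obtain ⟨g, hg, hg₀, hfg⟩ :=
    exists_eq_prod_pow_mul hf (analyticOrderAt_ne_top_of_ne_zero hf hc) (zerosInBall f c R)
  have hlogDeriv : ∀ w, f w ≠ 0 → logDeriv f w - zerosPrincipalPart f c R w = logDeriv g w := by
    intro w hw
    have hw' := logDeriv_prod_pow_mul (hg w) (hfg w ▸ hw)
    rw [← funext hfg] at hw'
    rw [hw', zerosPrincipalPart, add_sub_cancel_left]
  rw [hlogDeriv z hfz, hlogDeriv c hc]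
  refine norm_logDeriv_sub_le_of_norm_le_exp hM hg.differentiableOn (fun w hw hgw ↦ ?_)
    (fun w hw ↦ ?_) (mem_ball_iff_norm.2 hz)
  · refine hg₀ w ((mem_zerosInBall hf hc).2 ⟨(mem_ball_iff_norm.1 hw).le, ?_⟩) hgw
    rw [hfg w, hgw, mul_zero]
  · refine norm_le_of_forall_mem_frontier_norm_le (U := Metric.ball c (2 * R))
      Metric.isBounded_ball hg.diffContOnCl (fun u hu ↦ ?_)
      (subset_closure (Metric.ball_subset_ball (by linarith) hw))
    rw [frontier_ball c (by positivity), mem_sphere_iff_norm] at hu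
    exact norm_le_of_eq_prod_zerosInBall_mul hf hc hfg hu (hfM u hu)

omit hf in
theorem norm_le_norm_mul_exp_of_growth {C ρ : ℝ} (hρ₀ : 0 ≤ ρ)
    (hgrowth : ∀ z, ‖f z‖ ≤ Real.exp (C * (1 + ‖z‖) ^ ρ)) {R : ℝ} (hR : 1 ≤ R) {z : ℂ}
    (hz : ‖z - c‖ = 2 * R) :
    ‖f z‖ ≤ ‖f c‖ * Real.exp ((|C| * (3 + ‖c‖) ^ ρ + |Real.log ‖f c‖|) * R ^ ρ) := by
  refine (hgrowth z).trans ?_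
  nth_rewrite 1 [← Real.exp_log (norm_pos_iff.2 hc)]
  rw [← Real.exp_add, Real.exp_le_exp]
  have hnorm : 1 + ‖z‖ ≤ (3 + ‖c‖) * R := by
    have := norm_le_norm_sub_add z c
    nlinarith [norm_nonneg c]
  have hpow : C * (1 + ‖z‖) ^ ρ ≤ |C| * (3 + ‖c‖) ^ ρ * R ^ ρ := by
    rw [mul_assoc, ← Real.mul_rpow (by positivity) (by positivity)]
    gcongr
    exact le_abs_self C
  have hlog : |Real.log ‖f c‖| ≤ |Real.log ‖f c‖| * R ^ ρ :=
    le_mul_of_one_le_right (abs_nonneg _) (Real.one_le_rpow hR hρ₀)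
  linarith [neg_abs_le (Real.log ‖f c‖)]

theorem tendsto_logDeriv_sub_zerosPrincipalPart_sub {C ρ : ℝ} (hρ₀ : 0 ≤ ρ) (hρ₂ : ρ < 2)
    (hgrowth : ∀ z, ‖f z‖ ≤ Real.exp (C * (1 + ‖z‖) ^ ρ)) {z : ℂ} (hfz : f z ≠ 0) :
    Tendsto (fun R : ℝ ↦ (logDeriv f z - zerosPrincipalPart f c R z) -
      (logDeriv f c - zerosPrincipalPart f c R c)) atTop (nhds 0) := by
  set K := |C| * (3 + ‖c‖) ^ ρ + |Real.log ‖f c‖| + 1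
  have : 0 < K := by positivity
  have hdecay : Tendsto (fun R : ℝ ↦ 64 * K * ‖z - c‖ * R ^ (-(2 - ρ))) atTop (nhds 0) := by
    simpa using (tendsto_rpow_neg_atTop (sub_pos.2 hρ₂)).const_mul (64 * K * ‖z - c‖)
  refine squeeze_zero_norm' ?_ hdecay
  filter_upwards [eventually_ge_atTop 1, eventually_gt_atTop (4 * ‖z - c‖)] with R hR₁ hRz
  have hR : 0 < R := by positivity
  refine (norm_logDeriv_sub_zerosPrincipalPart_sub_le hf hc (M := K * R ^ ρ) (by positivity)
    (fun w hw ↦ (norm_le_norm_mul_exp_of_growth hc hρ₀ hgrowth hR₁ hw).trans ?_)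
    (by linarith) hfz).trans_eq ?_
  · gcongr
    exact le_add_of_nonneg_right zero_le_one
  · rw [neg_sub, Real.rpow_sub hR, Real.rpow_two]
    ring

end EntireFunction

theorem logDeriv_neg_of_even {f : ℂ → ℂ} (heven : ∀ z, f (-z) = f z) (z : ℂ) :
    logDeriv f (-z) = -logDeriv f z := by
  have hderiv := deriv_comp_neg f z
  rw [funext heven] at hderiv
  rw [logDeriv_apply, logDeriv_apply, heven, hderiv,]
  ring

theorem re_zerosPrincipalPart_neg {f : ℂ → ℂ} (hf : Differentiable ℂ f) {c : ℂ} (hc : f c ≠ 0)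
    (him : ∀ a, f a = 0 → a.re = 0) (R : ℝ) {z : ℂ} (hz : z.im = 0) :
    (zerosPrincipalPart f c R (-z)).re = -(zerosPrincipalPart f c R z).re := by
  simp only [zerosPrincipalPart, re_sum, ← Finset.sum_neg_distrib]
  refine Finset.sum_congr rfl fun a ha ↦ ?_
  simp [div_re, normSq_apply, hz, him a ((mem_zerosInBall hf hc).1 ha).2]
  ring

-- Hadamard's factorization without the exponential factor: `f' / f` minus the sum over the zeros
-- is a constant, whose real part vanishes because it is odd under `z ↦ -z`.
theorem tendsto_re_zerosPrincipalPart {f : ℂ → ℂ} (hf : Differentiable ℂ f) {c : ℂ} (hc : f c ≠ 0)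
    (hc_im : c.im = 0) (heven : ∀ z, f (-z) = f z) (him : ∀ a, f a = 0 → a.re = 0) {C ρ : ℝ}
    (hρ₀ : 0 ≤ ρ) (hρ₂ : ρ < 2) (hgrowth : ∀ z, ‖f z‖ ≤ Real.exp (C * (1 + ‖z‖) ^ ρ)) {z : ℂ}
    (hfz : f z ≠ 0) :
    Tendsto (fun R ↦ (zerosPrincipalPart f c R z).re) atTop (nhds (logDeriv f z).re) := by
  have hvar : ∀ w, f w ≠ 0 → Tendsto (fun R ↦ ((logDeriv f w - zerosPrincipalPart f c R w) -
      (logDeriv f c - zerosPrincipalPart f c R c)).re) atTop (nhds 0) := fun w hw ↦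
    (continuous_re.tendsto 0).comp
      (tendsto_logDeriv_sub_zerosPrincipalPart_sub hf hc hρ₀ hρ₂ hgrowth hw)
  have hlim := ((hvar z hfz).sub ((hvar (-c) (heven c ▸ hc)).const_mul (1 / 2))).const_sub
    (logDeriv f z).re
  simp only [sub_zero, mul_zero] at hlim
  refine hlim.congr fun R ↦ ?_
  simp only [sub_re, logDeriv_neg_of_even heven, neg_re,
    re_zerosPrincipalPart_neg hf hc him R hc_im]
  ring

/-! ### The completed zeta function about the critical line -/

/-- The entire function `s (1 - s) Λ(s)` with `s = 1/2 + z`, that is `-2 ξ(1/2 + z)` for the Riemann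
`ξ`-function. It is even, and its zeros are the points `ρ - 1/2`, `ρ` a non-trivial zero of `ζ`. -/
def shiftedXi (z : ℂ) : ℂ := (1 / 4 - z ^ 2) * completedRiemannZeta₀ (1 / 2 + z) - 1

theorem differentiable_shiftedXi : Differentiable ℂ shiftedXi := by
  have := differentiable_completedZeta₀
  unfold shiftedXi
  fun_prop

theorem shiftedXi_neg (z : ℂ) : shiftedXi (-z) = shiftedXi z := by
  have hfe := completedRiemannZeta₀_one_sub (1 / 2 + z)
  rw [show (1 : ℂ) - (1 / 2 + z) = 1 / 2 + -z by ring] at hfe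
  rw [shiftedXi, shiftedXi, hfe, neg_sq]

theorem shiftedXi_sub_half_eq_completedRiemannZeta {s : ℂ} (hs₀ : s ≠ 0) (hs₁ : s ≠ 1) :
    shiftedXi (s - 1 / 2) = s * (1 - s) * completedRiemannZeta s := by
  have : 1 - s ≠ 0 := sub_ne_zero.2 hs₁.symm
  rw [shiftedXi, completedRiemannZeta_eq, add_sub_cancel]
  field_simp
  ring

theorem shiftedXi_sub_half {s : ℂ} (hs : 0 < s.re) (hs₁ : s ≠ 1) :
    shiftedXi (s - 1 / 2) = s * (1 - s) * Gammaℝ s * riemannZeta s := by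
  have hs₀ := ne_zero_of_re_pos hs
  have := Gammaℝ_ne_zero_of_re_pos hs
  rw [shiftedXi_sub_half_eq_completedRiemannZeta hs₀ hs₁, riemannZeta_def_of_ne_zero hs₀]
  field_simp

theorem shiftedXi_sub_half_eq_zero_iff {s : ℂ} (hs : 0 < s.re) (hs₁ : s ≠ 1) :
    shiftedXi (s - 1 / 2) = 0 ↔ riemannZeta s = 0 := by
  rw [shiftedXi_sub_half hs hs₁]
  simp [ne_zero_of_re_pos hs, Gammaℝ_ne_zero_of_re_pos hs, sub_ne_zero.2 hs₁.symm]

theorem shiftedXi_ne_zero_of_half_le_re {z : ℂ} (hz : 1 / 2 ≤ z.re) : shiftedXi z ≠ 0 := by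
  rcases eq_or_ne z (1 / 2) with rfl | hz₁
  · norm_num [shiftedXi]
  · rw [← add_sub_cancel_right z (1 / 2), Ne, shiftedXi_sub_half_eq_zero_iff]
    · exact riemannZeta_ne_zero_of_one_le_re (by norm_num; linarith)
    · norm_num; linarith
    · intro h
      exact hz₁ (by linear_combination h)

theorem shiftedXi_half_ne_zero : shiftedXi (1 / 2) ≠ 0 :=
  shiftedXi_ne_zero_of_half_le_re (by simp)

theorem re_mem_Ioo_of_shiftedXi_eq_zero {z : ℂ} (hz : shiftedXi z = 0) :
    z.re ∈ Ioo (-(1 / 2)) (1 / 2) := by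
  constructor <;> by_contra! hre
  · exact shiftedXi_ne_zero_of_half_le_re (z := -z) (by simp at hre ⊢; linarith)
      (shiftedXi_neg z ▸ hz)
  · exact shiftedXi_ne_zero_of_half_le_re hre hz

theorem shiftedXi_eq_zero_iff {z : ℂ} : shiftedXi z = 0 ↔ ZetaNontrivZero (1 / 2 + z) := by
  have hre : (1 / 2 + z).re = 1 / 2 + z.re := by simp
  have hiff : 0 < (1 / 2 + z).re → (1 / 2 + z).re < 1 →
      (shiftedXi z = 0 ↔ riemannZeta (1 / 2 + z) = 0) := fun h₀ h₁ ↦ by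
    rw [← shiftedXi_sub_half_eq_zero_iff h₀ (fun h ↦ by rw [h] at h₁; simp at h₁),
      add_sub_cancel_left]
  refine ⟨fun hz ↦ ?_, fun ⟨hζ, h₀, h₁⟩ ↦ (hiff h₀ h₁).2 hζ⟩
  obtain ⟨hlo, hhi⟩ := re_mem_Ioo_of_shiftedXi_eq_zero hz
  have h₀ : 0 < (1 / 2 + z).re := by linarith
  have h₁ : (1 / 2 + z).re < 1 := by linarith
  exact ⟨(hiff h₀ h₁).1 hz, h₀, h₁⟩

theorem re_eq_half_of_zetaNontrivZero (hRH : RiemannHypothesis) {ρ : ℂ}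
    (hρ : ZetaNontrivZero ρ) : ρ.re = 1 / 2 := by
  obtain ⟨hζ, h₀, h₁⟩ := hρ
  refine hRH ρ hζ ?_ (fun h ↦ by simp [h] at h₁)
  rintro ⟨n, rfl⟩
  have : (-2 * ((n : ℂ) + 1)).re = -2 * (n + 1) := by simp
  rw [this] at h₀
  linarith [(Nat.cast_nonneg n : (0 : ℝ) ≤ n)]

theorem re_eq_zero_of_shiftedXi_eq_zero (hRH : RiemannHypothesis) {z : ℂ}
    (hz : shiftedXi z = 0) : z.re = 0 := by
  have := re_eq_half_of_zetaNontrivZero hRH (shiftedXi_eq_zero_iff.1 hz)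
  simpa using this

theorem differentiableAt_Gammaℝ {s : ℂ} (hs : 0 < s.re) : DifferentiableAt ℂ Gammaℝ s := by
  simpa only [inv_inv] using
    (differentiable_Gammaℝ_inv s).fun_inv (inv_ne_zero (Gammaℝ_ne_zero_of_re_pos hs))

theorem analyticAt_riemannZeta {s : ℂ} (hs : s ≠ 1) : AnalyticAt ℂ riemannZeta s :=
  DifferentiableOn.analyticAt
    (fun _ hz ↦ (differentiableAt_riemannZeta hz).differentiableWithinAt)
    (isOpen_compl_singleton.mem_nhds hs)

theorem analyticOrderAt_shiftedXi {ρ : ℂ} (hρ : 0 < ρ.re) (hρ₁ : ρ ≠ 1) :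
    analyticOrderAt shiftedXi (ρ - 1 / 2) = analyticOrderAt riemannZeta ρ := by
  have hhalf : {s : ℂ | 0 < s.re} ∈ nhds ρ :=
    (isOpen_lt continuous_const continuous_re).mem_nhds hρ
  have hfactor : AnalyticAt ℂ (fun s ↦ s * (1 - s) * Gammaℝ s) ρ :=
    DifferentiableOn.analyticAt (fun z hz ↦ DifferentiableAt.differentiableWithinAt <|
      DifferentiableAt.mul (by fun_prop) (differentiableAt_Gammaℝ hz)) hhalf
  have hfactor_ne : ρ * (1 - ρ) * Gammaℝ ρ ≠ 0 :=
    mul_ne_zero (mul_ne_zero (ne_zero_of_re_pos hρ) (sub_ne_zero.2 hρ₁.symm))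
      (Gammaℝ_ne_zero_of_re_pos hρ)
  have heq : shiftedXi ∘ (fun s ↦ s - 1 / 2) =ᶠ[nhds ρ]
      (fun s ↦ s * (1 - s) * Gammaℝ s) * riemannZeta := by
    filter_upwards [hhalf, isOpen_compl_singleton.mem_nhds hρ₁] with s hs hs₁
    exact shiftedXi_sub_half hs hs₁
  have hshift : deriv (fun s : ℂ ↦ s - 1 / 2) ρ ≠ 0 := by simp
  rw [← analyticOrderAt_comp_of_deriv_ne_zero (f := shiftedXi) (by fun_prop) hshift,
    analyticOrderAt_congr heq, analyticOrderAt_mul hfactor (analyticAt_riemannZeta hρ₁),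
    hfactor.analyticOrderAt_eq_zero.2 hfactor_ne, zero_add]

theorem analyticOrderNatAt_shiftedXi {ρ : ℂ} (hρ : 0 < ρ.re) (hρ₁ : ρ ≠ 1) :
    analyticOrderNatAt shiftedXi (ρ - 1 / 2) = zetaMult ρ := by
  have hne_top := analyticOrderAt_ne_top_of_ne_zero differentiable_shiftedXi
    shiftedXi_half_ne_zero (ρ - 1 / 2)
  rw [analyticOrderNatAt]
  rw [analyticOrderAt_shiftedXi hρ hρ₁] at hne_top ⊢
  obtain ⟨n, hn⟩ := ENat.ne_top_iff_exists.1 hne_top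
  obtain ⟨hlt, hne⟩ := (analyticOrderAt_eq_nat_iff_iteratedDeriv_eq_zero
    (analyticAt_riemannZeta hρ₁)).1 hn.symm
  rw [← hn, ENat.toNat_natCast, zetaMult]
  exact le_antisymm (le_csInf ⟨n, hne⟩ fun m hm ↦ not_lt.1 fun hmn ↦ hm (hlt m hmn))
    (Nat.sInf_le hne)

theorem zerosUpTo_finite (T : ℝ) : (zerosUpTo T).Finite := by
  have hmaps : MapsTo (fun ρ : ℂ ↦ ρ - 1 / 2) (zerosUpTo T)
      ↑(zerosInBall shiftedXi (1 / 2) (1 + |T|)) := by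
    rintro ρ ⟨hρ, h₀, hT⟩
    rw [Finset.mem_coe, mem_zerosInBall differentiable_shiftedXi shiftedXi_half_ne_zero,
      shiftedXi_eq_zero_iff, add_sub_cancel]
    refine ⟨(norm_le_abs_re_add_abs_im _).trans (add_le_add ?_ ?_), hρ⟩
    · have := hρ.2
      rw [abs_le]
      constructor <;> norm_num <;> linarith
    · simpa using abs_le_abs_of_nonneg h₀.le hT
  exact Finite.of_injOn hmaps (sub_left_injective.injOn) (Finset.finite_toSet _)

/-! ### Growth of the completed zeta function -/

theorem norm_Gamma_le_Gamma_re {s : ℂ} (hs : 0 < s.re) :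
    ‖Complex.Gamma s‖ ≤ Real.Gamma s.re := by
  rw [Complex.Gamma_eq_integral hs, Real.Gamma_eq_integral hs, Complex.GammaIntegral]
  refine (norm_integral_le_integral_norm _).trans_eq
    (setIntegral_congr_fun measurableSet_Ioi fun x hx ↦ ?_)
  rw [norm_mul, norm_cpow_eq_rpow_re_of_pos hx, Complex.norm_of_nonneg (Real.exp_pos _).le,
    sub_re, one_re]

theorem Real_Gamma_le_exp_mul_log {x : ℝ} (hx : 1 ≤ x) :
    Real.Gamma x ≤ Real.exp ((x + 1) * Real.log (x + 1)) := by
  set n := ⌈x⌉₊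
  have hxn : x ≤ n := Nat.le_ceil x
  have hn : (n : ℝ) ≤ x + 1 := (Nat.ceil_lt_add_one (by linarith)).le
  calc Real.Gamma x ≤ x * Real.Gamma x :=
        le_mul_of_one_le_left (Real.Gamma_pos_of_pos (by linarith)).le hx
    _ = Real.Gamma (x + 1) := (Real.Gamma_add_one (by linarith)).symm
    _ ≤ Real.Gamma (n + 1) := Real.Gamma_strictMonoOn_Ici.monotoneOn
        (by rw [mem_Ici]; linarith) (by rw [mem_Ici]; linarith) (by linarith)
    _ = n.factorial := Real.Gamma_nat_eq_factorial n
    _ ≤ (n : ℝ) ^ n := by exact_mod_cast Nat.factorial_le_pow n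
    _ ≤ (x + 1) ^ n := by gcongr
    _ = Real.exp (n * Real.log (x + 1)) := by
        rw [mul_comm, Real.exp_mul, Real.exp_log (by linarith), Real.rpow_natCast]
    _ ≤ Real.exp ((x + 1) * Real.log (x + 1)) := by
        have := Real.log_nonneg (by linarith : 1 ≤ x + 1)
        gcongr

theorem mul_log_le_two_mul_rpow {x : ℝ} (hx : 0 < x) : x * Real.log x ≤ 2 * x ^ (3 / 2 : ℝ) := by
  have hlog := Real.log_le_rpow_div hx.le (ε := 1 / 2) (by norm_num)
  calc x * Real.log x ≤ x * (x ^ (1 / 2 : ℝ) / (1 / 2)) := by gcongr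
    _ = 2 * x ^ (1 + 1 / 2 : ℝ) := by rw [Real.rpow_add hx, Real.rpow_one]; ring
    _ = 2 * x ^ (3 / 2 : ℝ) := by norm_num

theorem norm_Gammaℝ_le_exp {s : ℂ} (hs : 2 ≤ s.re) :
    ‖Gammaℝ s‖ ≤ Real.exp (2 * (1 + ‖s‖) ^ (3 / 2 : ℝ)) := by
  have hre : (s / 2).re = s.re / 2 := by simp
  have hs_re := re_le_norm s
  have hpi : ‖(π : ℂ) ^ (-s / 2)‖ ≤ 1 := by
    rw [norm_cpow_eq_rpow_re_of_pos Real.pi_pos]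
    refine Real.rpow_le_one_of_one_le_of_nonpos (by linarith [Real.pi_gt_three]) ?_
    simp only [div_ofNat_re, neg_re]
    linarith
  have hGamma : ‖Complex.Gamma (s / 2)‖ ≤ Real.exp (2 * (1 + ‖s‖) ^ (3 / 2 : ℝ)) := by
    refine ((norm_Gamma_le_Gamma_re (by rw [hre]; linarith)).trans
      (Real_Gamma_le_exp_mul_log (by rw [hre]; linarith))).trans
      (Real.exp_le_exp.2 ((mul_log_le_two_mul_rpow (by rw [hre]; linarith)).trans ?_))
    rw [hre]
    have : 0 ≤ s.re / 2 + 1 := by linarith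
    gcongr 2 * ?_ ^ _
    linarith
  rw [Gammaℝ_def, norm_mul]
  exact (mul_le_of_le_one_left (norm_nonneg _) hpi).trans hGamma

theorem norm_riemannZeta_le_tsum {s : ℂ} (hs : 2 ≤ s.re) :
    ‖riemannZeta s‖ ≤ ∑' n : ℕ, 1 / (n : ℝ) ^ 2 := by
  rw [zeta_eq_tsum_one_div_nat_cpow (by linarith)]
  refine tsum_of_norm_bounded (Real.summable_one_div_nat_pow.2 one_lt_two).hasSum fun n ↦ ?_
  rcases Nat.eq_zero_or_pos n with rfl | hn
  · simp [ne_zero_of_re_pos (by linarith : 0 < s.re)]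
  · rw [norm_div, norm_one, norm_natCast_cpow_of_pos hn, ← Real.rpow_natCast]
    gcongr
    · exact_mod_cast hn
    · exact_mod_cast hs

theorem exists_norm_mellin_le_of_re_mem_Icc {f : ℝ → ℂ} {a b : ℝ} (ha : MellinConvergent f a)
    (hb : MellinConvergent f b) : ∃ C, ∀ s : ℂ, s.re ∈ Icc a b → ‖mellin f s‖ ≤ C := by
  have hint : ∀ σ : ℝ, MellinConvergent f σ →
      IntegrableOn (fun x : ℝ ↦ x ^ (σ - 1) * ‖f x‖) (Ioi 0) := fun σ hσ ↦ by
    refine IntegrableOn.congr_fun hσ.norm (fun x hx ↦ ?_) measurableSet_Ioi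
    rw [norm_smul, norm_cpow_eq_rpow_re_of_pos hx]
    simp
  refine ⟨∫ x in Ioi (0 : ℝ), (x ^ (a - 1) * ‖f x‖ + x ^ (b - 1) * ‖f x‖), fun s ⟨has, hsb⟩ ↦
    norm_integral_le_of_norm_le ((hint a ha).add (hint b hb)) ?_⟩
  refine (ae_restrict_mem measurableSet_Ioi).mono fun x (hx : 0 < x) ↦ ?_
  rw [norm_smul, norm_cpow_eq_rpow_re_of_pos hx, ← add_mul, sub_re, one_re]
  gcongr
  rcases le_total x 1 with hx₁ | hx₁
  · exact (Real.rpow_le_rpow_of_exponent_ge hx hx₁ (by linarith)).trans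
      (le_add_of_nonneg_right (by positivity))
  · exact (Real.rpow_le_rpow_of_exponent_le hx₁ (by linarith)).trans
      (le_add_of_nonneg_left (by positivity))

theorem exists_norm_completedRiemannZeta₀_le_of_re_mem_Icc (a b : ℝ) :
    ∃ C, ∀ s : ℂ, s.re ∈ Icc a b → ‖completedRiemannZeta₀ s‖ ≤ C := by
  set P := HurwitzZeta.hurwitzEvenFEPair 0
  have hmellin (s : ℂ) : MellinConvergent P.f_modif s :=
    (P.isStrongFEPair_toStrongFEPair.hasMellin s).1
  obtain ⟨C, hC⟩ := exists_norm_mellin_le_of_re_mem_Icc (a := a / 2) (b := b / 2)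
    (hmellin _) (hmellin _)
  refine ⟨C / 2, fun s ⟨has, hsb⟩ ↦ ?_⟩
  have hdef : completedRiemannZeta₀ s = mellin P.f_modif (s / 2) / 2 := rfl
  rw [hdef, norm_div, Complex.norm_ofNat]
  have hre : (s / 2).re = s.re / 2 := by simp
  gcongr
  exact hC _ ⟨by linarith, by linarith⟩

theorem norm_completedRiemannZeta₀_le_of_two_le_re {s : ℂ} (hs : 2 ≤ s.re) :
    ‖completedRiemannZeta₀ s‖ ≤
      (∑' n : ℕ, 1 / (n : ℝ) ^ 2 + 2) * Real.exp (2 * (1 + ‖s‖) ^ (3 / 2 : ℝ)) := by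
  have hs_pos : 0 < s.re := by linarith
  have hs₀ := ne_zero_of_re_pos hs_pos
  have hΛ : completedRiemannZeta s = riemannZeta s * Gammaℝ s := by
    rw [riemannZeta_def_of_ne_zero hs₀, div_mul_cancel₀ _ (Gammaℝ_ne_zero_of_re_pos hs_pos)]
  have hsplit : completedRiemannZeta₀ s = riemannZeta s * Gammaℝ s + 1 / s + 1 / (1 - s) := by
    rw [← hΛ, completedRiemannZeta_eq]
    ring
  have hpole₀ : ‖1 / s‖ ≤ 1 := by
    rw [norm_div, norm_one]
    exact div_le_one_of_le₀ (by linarith [re_le_norm s]) (norm_nonneg s)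
  have hpole₁ : ‖1 / (1 - s)‖ ≤ 1 := by
    rw [norm_div, norm_one]
    refine div_le_one_of_le₀ ?_ (norm_nonneg _)
    have := re_le_norm (s - 1)
    rw [norm_sub_rev, sub_re, one_re] at this
    linarith
  have hexp : 1 ≤ Real.exp (2 * (1 + ‖s‖) ^ (3 / 2 : ℝ)) := Real.one_le_exp (by positivity)
  calc ‖completedRiemannZeta₀ s‖ ≤ ‖riemannZeta s‖ * ‖Gammaℝ s‖ + ‖1 / s‖ + ‖1 / (1 - s)‖ := by
        rw [hsplit, ← norm_mul]
        exact norm_add₃_le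
    _ ≤ (∑' n : ℕ, 1 / (n : ℝ) ^ 2) * Real.exp (2 * (1 + ‖s‖) ^ (3 / 2 : ℝ)) + 1 + 1 := by
        gcongr
        · exact norm_riemannZeta_le_tsum hs
        · exact norm_Gammaℝ_le_exp hs
    _ ≤ (∑' n : ℕ, 1 / (n : ℝ) ^ 2 + 2) * Real.exp (2 * (1 + ‖s‖) ^ (3 / 2 : ℝ)) := by linarith

theorem exists_norm_completedRiemannZeta₀_half_add_le : ∃ C, 0 ≤ C ∧ ∀ z : ℂ,
    ‖completedRiemannZeta₀ (1 / 2 + z)‖ ≤ C * Real.exp (2 * (2 + ‖z‖) ^ (3 / 2 : ℝ)) := by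
  obtain ⟨C, hC⟩ := exists_norm_completedRiemannZeta₀_le_of_re_mem_Icc (1 / 2) 2
  have hC₀ : 0 ≤ C := (norm_nonneg _).trans (hC 1 (by norm_num))
  set Z : ℝ := ∑' n : ℕ, 1 / (n : ℝ) ^ 2 + 2
  refine ⟨C + Z, by positivity, fun z ↦ ?_⟩
  wlog hz : 0 ≤ z.re generalizing z
  · have hneg := this (-z) (by rw [neg_re]; linarith)
    rwa [norm_neg, show (1 / 2 + -z : ℂ) = 1 - (1 / 2 + z) by ring,
      completedRiemannZeta₀_one_sub] at hneg
  have hre : (1 / 2 + z).re = 1 / 2 + z.re := by simp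
  have hnorm : 1 + ‖1 / 2 + z‖ ≤ 2 + ‖z‖ := by
    have := norm_add_le (1 / 2) z
    norm_num at this
    linarith
  have hexp : 1 ≤ Real.exp (2 * (2 + ‖z‖) ^ (3 / 2 : ℝ)) := Real.one_le_exp (by positivity)
  rcases le_total (1 / 2 + z).re 2 with h₂ | h₂
  · calc ‖completedRiemannZeta₀ (1 / 2 + z)‖ ≤ C := hC _ ⟨by linarith, h₂⟩
      _ ≤ C + Z := le_add_of_nonneg_right (by positivity)
      _ ≤ _ := le_mul_of_one_le_right (by positivity) hexp
  · refine (norm_completedRiemannZeta₀_le_of_two_le_re h₂).trans ?_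
    gcongr ?_ * Real.exp (2 * ?_ ^ _)
    exact le_add_of_nonneg_left hC₀

theorem exists_norm_shiftedXi_le :
    ∃ C, ∀ z, ‖shiftedXi z‖ ≤ Real.exp (C * (1 + ‖z‖) ^ (3 / 2 : ℝ)) := by
  obtain ⟨C, hC₀, hC⟩ := exists_norm_completedRiemannZeta₀_half_add_le
  refine ⟨C + (2 + 2 * 2 ^ (3 / 2 : ℝ)), fun z ↦ ?_⟩
  set q := (1 + ‖z‖) ^ (3 / 2 : ℝ)
  have hr : 1 ≤ 1 + ‖z‖ := le_add_of_nonneg_right (norm_nonneg z)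
  have hrq : 1 + ‖z‖ ≤ q := Real.self_le_rpow_of_one_le hr (by norm_num)
  have hpoly : ‖1 / 4 - z ^ 2‖ ≤ Real.exp (2 * q) := calc
    ‖1 / 4 - z ^ 2‖ ≤ 1 / 4 + ‖z‖ ^ 2 := (norm_sub_le _ _).trans_eq (by simp)
    _ ≤ (1 + ‖z‖) ^ 2 := by nlinarith [norm_nonneg z]
    _ ≤ Real.exp q ^ 2 := by
        gcongr
        linarith [Real.add_one_le_exp q]
    _ = Real.exp (2 * q) := by rw [← Real.exp_nat_mul, Nat.cast_ofNat]
  have hexp : Real.exp (2 * (2 + ‖z‖) ^ (3 / 2 : ℝ)) ≤ Real.exp (2 * 2 ^ (3 / 2 : ℝ) * q) := by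
    rw [mul_assoc, ← Real.mul_rpow zero_le_two (by positivity)]
    gcongr
    linarith [norm_nonneg z]
  have hone : 1 ≤ Real.exp ((2 + 2 * 2 ^ (3 / 2 : ℝ)) * q) := Real.one_le_exp (by positivity)
  calc ‖shiftedXi z‖ ≤ ‖1 / 4 - z ^ 2‖ * ‖completedRiemannZeta₀ (1 / 2 + z)‖ + 1 :=
        (norm_sub_le _ _).trans_eq (by rw [norm_mul, norm_one])
    _ ≤ Real.exp (2 * q) * (C * Real.exp (2 * 2 ^ (3 / 2 : ℝ) * q)) + 1 := by
        gcongr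
        exact (hC z).trans (by gcongr)
    _ = C * Real.exp ((2 + 2 * 2 ^ (3 / 2 : ℝ)) * q) + 1 := by
        rw [add_mul, Real.exp_add]
        ring
    _ ≤ (C + 1) * Real.exp ((2 + 2 * 2 ^ (3 / 2 : ℝ)) * q) := by linarith
    _ ≤ Real.exp (C * q) * Real.exp ((2 + 2 * 2 ^ (3 / 2 : ℝ)) * q) := by
        gcongr
        nlinarith [Real.add_one_le_exp (C * q)]
    _ = Real.exp ((C + (2 + 2 * 2 ^ (3 / 2 : ℝ))) * q) := by rw [← Real.exp_add, ← add_mul]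

theorem tendsto_re_zerosPrincipalPart_shiftedXi (hRH : RiemannHypothesis) {z : ℂ}
    (hz : 0 < z.re) :
    Tendsto (fun R ↦ (zerosPrincipalPart shiftedXi (1 / 2) R z).re) atTop
      (nhds (logDeriv shiftedXi z).re) := by
  obtain ⟨C, hC⟩ := exists_norm_shiftedXi_le
  exact tendsto_re_zerosPrincipalPart differentiable_shiftedXi shiftedXi_half_ne_zero (by simp)
    shiftedXi_neg (fun a ↦ re_eq_zero_of_shiftedXi_eq_zero hRH) (by norm_num) (by norm_num) hC
    fun h ↦ hz.ne' (re_eq_zero_of_shiftedXi_eq_zero hRH h)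

/-! ### The digamma function -/

theorem tendsto_deriv_of_norm_le_of_tendsto {f : ℕ → ℂ → ℂ} {g : ℂ → ℂ} {U : Set ℂ}
    (hU : IsOpen U) {c : ℂ} {R M : ℝ} (hR : 0 < R) (hc : Metric.closedBall c R ⊆ U)
    (hf : ∀ᶠ n in atTop, DifferentiableOn ℂ (f n) U) (hg : DifferentiableOn ℂ g U)
    (hM : ∀ᶠ n in atTop, ∀ z ∈ Metric.sphere c R, ‖f n z‖ ≤ M)
    (hlim : ∀ z ∈ Metric.sphere c R, Tendsto (f · z) atTop (nhds (g z))) :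
    Tendsto (fun n ↦ deriv (f n) c) atTop (nhds (deriv g c)) := by
  rw [← cderiv_eq_deriv hU hg hR hc]
  refine Tendsto.congr' (hf.mono fun n hn ↦ cderiv_eq_deriv hU hn hR hc) ?_
  refine (intervalIntegral.tendsto_integral_filter_of_dominated_convergence
    (fun _ ↦ R * ((R ^ 2)⁻¹ * M)) ?_ ?_ intervalIntegrable_const ?_).const_smul _
  · filter_upwards [hf] with n hn
    have hfn : Continuous fun θ ↦ f n (circleMap c R θ) :=
      hn.continuousOn.comp_continuous (continuous_circleMap c R)
        fun θ ↦ hc (circleMap_mem_closedBall c hR.le θ)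
    have hinv : Continuous fun θ ↦ ((circleMap c R θ - c) ^ 2)⁻¹ :=
      Continuous.inv₀ (by fun_prop) fun θ ↦ by simp [hR.ne']
    have hderiv : Continuous fun θ ↦ deriv (circleMap c R) θ := by
      simp only [deriv_circleMap]
      fun_prop
    exact (hderiv.smul (hinv.smul hfn)).aestronglyMeasurable
  · filter_upwards [hM] with n hn
    refine Eventually.of_forall fun θ _ ↦ ?_
    have hderiv : ‖deriv (circleMap c R) θ‖ = R := by simp [abs_of_pos hR]
    have hinv : ‖((circleMap c R θ - c) ^ 2)⁻¹‖ = (R ^ 2)⁻¹ := by simp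
    rw [norm_smul, norm_smul, hderiv, hinv]
    gcongr
    exact hn _ (circleMap_mem_sphere c hR.le θ)
  · exact Eventually.of_forall fun θ _ ↦
      ((hlim _ (circleMap_mem_sphere c hR.le θ)).const_smul _).const_smul _

section GammaSeq

variable {s : ℂ} (hs : 0 < s.re) {n : ℕ} (hn : n ≠ 0)
include hs

theorem add_natCast_ne_zero_of_re_pos (j : ℕ) : s + j ≠ 0 :=
  ne_zero_of_re_pos (by simpa using add_pos_of_pos_of_nonneg hs j.cast_nonneg)

include hn

theorem norm_GammaSeq_le_Gamma_re : ‖Complex.GammaSeq s n‖ ≤ Real.Gamma s.re := by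
  have hn_pos : (0 : ℝ) < n := by exact_mod_cast Nat.pos_of_ne_zero hn
  have hint := Real.GammaIntegral_convergent hs
  rw [GammaSeq_eq_approx_Gamma_integral hs hn, Real.Gamma_eq_integral hs,
    intervalIntegral.integral_of_le hn_pos.le]
  refine (norm_integral_le_of_norm_le (hint.mono_set Ioc_subset_Ioi_self) ?_).trans
    (setIntegral_mono_set hint ?_ Ioc_subset_Ioi_self.eventuallyLE)
  · refine (ae_restrict_mem measurableSet_Ioc).mono fun x ⟨hx₀, hxn⟩ ↦ ?_
    have hbase : 0 ≤ 1 - x / n := sub_nonneg.2 ((div_le_one hn_pos).2 hxn)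
    rw [norm_mul, norm_cpow_eq_rpow_re_of_pos hx₀, Complex.norm_of_nonneg (by positivity), sub_re,
      one_re]
    gcongr
    exact Real.one_sub_div_pow_le_exp_neg hxn
  · refine (ae_restrict_mem measurableSet_Ioi).mono fun x (hx : 0 < x) ↦ ?_
    rw [Pi.zero_apply]
    positivity

theorem differentiableAt_GammaSeq : DifferentiableAt ℂ (Complex.GammaSeq · n) s := by
  have hn_cast : (n : ℂ) ≠ 0 := by exact_mod_cast hn
  unfold Complex.GammaSeq
  exact ((differentiableAt_id.const_cpow (Or.inl hn_cast)).mul_const _).div (by fun_prop)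
    (Finset.prod_ne_zero_iff.2 fun j _ ↦ add_natCast_ne_zero_of_re_pos hs j)

theorem logDeriv_GammaSeq :
    logDeriv (Complex.GammaSeq · n) s = Real.log n - ∑ j ∈ Finset.range (n + 1), 1 / (s + j) := by
  have hn_cast : (n : ℂ) ≠ 0 := by exact_mod_cast hn
  have hfactorial : (n.factorial : ℂ) ≠ 0 := by exact_mod_cast n.factorial_ne_zero
  have hpow := (hasDerivAt_id' s).const_cpow (c := n) (Or.inl hn_cast)
  have hpow_ne : (n : ℂ) ^ s ≠ 0 := by simp [hn_cast]
  have hlog_pow : logDeriv (fun s : ℂ ↦ (n : ℂ) ^ s) s = Real.log n := by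
    simp [logDeriv_apply, hpow.deriv, hn_cast]
  have hlog_prod : logDeriv (fun s : ℂ ↦ ∏ j ∈ Finset.range (n + 1), (s + j)) s =
      ∑ j ∈ Finset.range (n + 1), 1 / (s + j) := by
    rw [logDeriv_prod (fun j _ ↦ add_natCast_ne_zero_of_re_pos hs j) (fun j _ ↦ by fun_prop)]
    simp [logDeriv_apply]
  unfold Complex.GammaSeq
  rw [logDeriv_div (f := fun z : ℂ ↦ (n : ℂ) ^ z * n.factorial) s (mul_ne_zero hpow_ne hfactorial)
    (Finset.prod_ne_zero_iff.2 fun j _ ↦ add_natCast_ne_zero_of_re_pos hs j)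
    (hpow.differentiableAt.mul_const _) (by fun_prop), logDeriv_mul_const s _ hfactorial, hlog_pow,
    hlog_prod]

end GammaSeq

theorem differentiableAt_Gamma_of_re_pos {s : ℂ} (hs : 0 < s.re) :
    DifferentiableAt ℂ Complex.Gamma s :=
  differentiableAt_Gamma s fun m hm ↦
    add_natCast_ne_zero_of_re_pos hs m (by rw [hm, neg_add_cancel])

theorem continuousOn_Gamma_re : ContinuousOn (fun z : ℂ ↦ Real.Gamma z.re) {z | 0 < z.re} := by
  intro z hz
  have hGamma : ContinuousAt Real.Gamma z.re :=
    (Real.differentiableAt_Gamma fun m hm ↦ by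
      have : 0 < z.re := hz
      linarith [(Nat.cast_nonneg m : (0 : ℝ) ≤ m)]).continuousAt
  exact (ContinuousAt.comp (f := re) hGamma continuous_re.continuousAt).continuousWithinAt

theorem tendsto_log_sub_sum_digamma {s : ℂ} (hs : 0 < s.re) :
    Tendsto (fun n : ℕ ↦ (Real.log n : ℂ) - ∑ j ∈ Finset.range (n + 1), 1 / (s + j)) atTop
      (nhds (digamma s)) := by
  have hU : IsOpen {s : ℂ | 0 < s.re} := isOpen_lt continuous_const continuous_re
  obtain ⟨R, hR, hball⟩ := Metric.nhds_basis_closedBall.mem_iff.1 (hU.mem_nhds hs)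
  obtain ⟨M, hM⟩ := (isCompact_closedBall s R).exists_bound_of_continuousOn
    (continuousOn_Gamma_re.mono hball)
  have hderiv := tendsto_deriv_of_norm_le_of_tendsto (f := fun n z ↦ Complex.GammaSeq z n)
    (M := M) hU hR hball
    ((eventually_ne_atTop 0).mono fun n hn z hz ↦
      (differentiableAt_GammaSeq hz hn).differentiableWithinAt)
    (fun z hz ↦ (differentiableAt_Gamma_of_re_pos hz).differentiableWithinAt)
    ((eventually_ne_atTop 0).mono fun n hn z hz ↦
      (norm_GammaSeq_le_Gamma_re (hball (Metric.sphere_subset_closedBall hz)) hn).trans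
        ((le_abs_self _).trans (hM z (Metric.sphere_subset_closedBall hz))))
    fun z _ ↦ GammaSeq_tendsto_Gamma z
  refine (hderiv.div (GammaSeq_tendsto_Gamma s) (Gamma_ne_zero_of_re_pos hs)).congr' ?_
  filter_upwards [eventually_ne_atTop 0] with n hn
  rw [← logDeriv_GammaSeq hs hn]
  rfl

theorem norm_le_norm_add_ofReal {w : ℂ} (hw : 0 ≤ w.re) {u : ℝ} (hu : 0 ≤ u) :
    ‖w‖ ≤ ‖w + u‖ := by
  rw [Complex.norm_def, Complex.norm_def]
  refine Real.sqrt_le_sqrt ?_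
  simp only [normSq_apply, add_re, ofReal_re, add_im, ofReal_im, add_zero]
  nlinarith

theorem norm_log_add_one_sub_log_sub_le {w : ℂ} (hw : 0 < w.re) :
    ‖log (w + 1) - log w - 1 / w‖ ≤ 1 / ‖w‖ ^ 2 := by
  have hw₀ := ne_zero_of_re_pos hw
  have hderiv : ∀ u ∈ Icc (0 : ℝ) 1, HasDerivWithinAt (fun u : ℝ ↦ log (w + u) - u * (1 / w))
      (1 / (w + u) - 1 / w) (Icc 0 1) u := by
    intro u hu
    have hslit : w + (u : ℂ) ∈ slitPlane := Or.inl (by simpa using add_pos_of_pos_of_nonneg hw hu.1)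
    have hcast : HasDerivAt (fun u : ℝ ↦ (u : ℂ)) 1 u := ofRealCLM.hasDerivAt
    have hsub := ((hcast.const_add w).clog_real hslit).sub (hcast.mul_const (1 / w))
    rw [one_mul] at hsub
    exact hsub.hasDerivWithinAt
  have hbound : ∀ u ∈ Ico (0 : ℝ) 1, ‖1 / (w + u) - 1 / w‖ ≤ 1 / ‖w‖ ^ 2 := by
    intro u hu
    have hnorm := norm_le_norm_add_ofReal hw.le hu.1
    have hw_pos := norm_pos_iff.2 hw₀
    have hwu₀ : w + u ≠ 0 := norm_pos_iff.1 (hw_pos.trans_le hnorm)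
    rw [show 1 / (w + u) - 1 / w = -u / ((w + u) * w) by field_simp; ring, norm_div, norm_mul,
      norm_neg, Complex.norm_of_nonneg hu.1, sq]
    gcongr
    exact hu.2.le
  have hmvt := norm_image_sub_le_of_norm_deriv_le_segment_01' hderiv hbound
  simpa [sub_right_comm] using hmvt

theorem tendsto_log_add_succ_sub_log {s : ℂ} (hs : 0 < s.re) :
    Tendsto (fun n : ℕ ↦ log (s + (n + 1 : ℕ)) - Real.log n) atTop (nhds 0) := by
  have hratio : Tendsto (fun n : ℕ ↦ (s + 1) / (n : ℂ) + 1) atTop (nhds 1) := by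
    simpa using (tendsto_const_div_atTop_nhds_zero_nat (s + 1)).add_const 1
  have hlog := hratio.clog (by simp)
  rw [Complex.log_one] at hlog
  refine hlog.congr' ?_
  filter_upwards [eventually_gt_atTop 0] with n hn
  have hn_cast : (n : ℂ) ≠ 0 := by exact_mod_cast hn.ne'
  have hfactor : s + (n + 1 : ℕ) = ((n : ℝ) : ℂ) * ((s + 1) / n + 1) := by
    push_cast
    field_simp
    ring
  have hne : (s + 1) / n + 1 ≠ 0 :=
    right_ne_zero_of_mul (hfactor ▸ add_natCast_ne_zero_of_re_pos hs (n + 1))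
  rw [hfactor, Complex.log_ofReal_mul (by exact_mod_cast hn) hne, add_sub_cancel_left]

theorem exists_norm_digamma_sub_log_le {δ : ℝ} (hδ : 0 < δ) :
    ∃ C, ∀ s : ℂ, δ ≤ s.re → ‖digamma s - log s‖ ≤ C := by
  have hsummable : Summable fun j : ℕ ↦ 1 / ((j : ℝ) + δ) ^ 2 := by
    refine ((Real.summable_one_div_nat_add_rpow δ 2).2 one_lt_two).congr fun j ↦ ?_
    rw [abs_of_pos (by positivity), Real.rpow_two]
  refine ⟨∑' j : ℕ, 1 / ((j : ℝ) + δ) ^ 2, fun s hs ↦ ?_⟩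
  have hs_pos : 0 < s.re := hδ.trans_le hs
  have hlim := ((tendsto_log_sub_sum_digamma hs_pos).sub_const (log s)).add
    (tendsto_log_add_succ_sub_log hs_pos)
  rw [add_zero] at hlim
  refine le_of_tendsto hlim.norm (Eventually.of_forall fun n ↦ ?_)
  have htelescope : Real.log n - ∑ j ∈ Finset.range (n + 1), 1 / (s + j) - log s +
      (log (s + (n + 1 : ℕ)) - Real.log n) = ∑ j ∈ Finset.range (n + 1),
        (log (s + (j + 1 : ℕ)) - log (s + j) - 1 / (s + j)) := by
    rw [Finset.sum_sub_distrib, Finset.sum_range_sub (fun j : ℕ ↦ log (s + j)), Nat.cast_zero,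
      add_zero]
    ring
  rw [htelescope]
  refine (norm_sum_le_of_le _ fun j _ ↦ ?_).trans
    (hsummable.sum_le_tsum (Finset.range (n + 1)) fun j _ ↦ by positivity)
  have hre : j + δ ≤ (s + j).re := by
    rw [add_re, natCast_re]
    linarith
  rw [Nat.cast_succ, ← add_assoc]
  refine (norm_log_add_one_sub_log_sub_le ((by positivity : 0 < j + δ).trans_le hre)).trans ?_
  gcongr
  exact hre.trans (re_le_norm _)

/-! ### The logarithmic derivative of the completed zeta function -/

/-- The contribution of the polynomial and Gamma factors to `logDeriv shiftedXi z`, up to the term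
`-1 / (1/2 - z)` coming from the pole of `ζ`, which belongs to `arithmeticPart`. -/
def archimedeanPart (z : ℂ) : ℂ :=
  1 / (1 / 2 + z) - (Real.log π : ℂ) / 2 + digamma ((1 / 2 + z) / 2) / 2

/-- What remains of `logDeriv shiftedXi z` without the archimedean part:
`ζ'/ζ (1/2 + z) + 1 / (z - 1/2)`, defined here on the whole half-plane `0 < z.re`. -/
def arithmeticPart (z : ℂ) : ℂ :=
  logDeriv shiftedXi z - archimedeanPart z

theorem differentiableAt_logDeriv {f : ℂ → ℂ} {z : ℂ} (hf : AnalyticAt ℂ f z) (hz : f z ≠ 0) :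
    DifferentiableAt ℂ (logDeriv f) z :=
  hf.deriv.differentiableAt.div hf.differentiableAt hz

theorem differentiableAt_digamma {s : ℂ} (hs : 0 < s.re) : DifferentiableAt ℂ digamma s :=
  differentiableAt_logDeriv
    (DifferentiableOn.analyticAt
      (fun _ hz ↦ (differentiableAt_Gamma_of_re_pos hz).differentiableWithinAt)
      ((isOpen_lt continuous_const continuous_re).mem_nhds hs))
    (Gamma_ne_zero_of_re_pos hs)

theorem differentiableAt_logDeriv_shiftedXi (hRH : RiemannHypothesis) {z : ℂ} (hz : 0 < z.re) :
    DifferentiableAt ℂ (logDeriv shiftedXi) z :=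
  differentiableAt_logDeriv (differentiable_shiftedXi.analyticAt z)
    fun h ↦ hz.ne' (re_eq_zero_of_shiftedXi_eq_zero hRH h)

theorem differentiableAt_archimedeanPart {z : ℂ} (hz : 0 ≤ z.re) :
    DifferentiableAt ℂ archimedeanPart z := by
  have hre : 0 < (1 / 2 + z).re := by
    norm_num
    linarith
  have hne := ne_zero_of_re_pos hre
  have hdigamma : DifferentiableAt ℂ (fun z : ℂ ↦ digamma ((1 / 2 + z) / 2)) z :=
    (differentiableAt_digamma (by rw [div_ofNat_re]; positivity)).comp z
      (f := fun z : ℂ ↦ (1 / 2 + z) / 2) (by fun_prop)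
  unfold archimedeanPart
  fun_prop (disch := exact hne)

theorem differentiableAt_arithmeticPart (hRH : RiemannHypothesis) {z : ℂ} (hz : 0 < z.re) :
    DifferentiableAt ℂ arithmeticPart z :=
  (differentiableAt_logDeriv_shiftedXi hRH hz).sub (differentiableAt_archimedeanPart hz.le)

theorem logDeriv_Gammaℝ {s : ℂ} (hs : 0 < s.re) :
    logDeriv Gammaℝ s = -(Real.log π : ℂ) / 2 + digamma (s / 2) / 2 := by
  have hs₂ : 0 < (s / 2).re := by
    rw [div_ofNat_re]
    positivity
  have hπ : (π : ℂ) ≠ 0 := ofReal_ne_zero.2 Real.pi_ne_zero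
  have hpow : HasDerivAt (fun s : ℂ ↦ (π : ℂ) ^ (-s / 2))
      ((π : ℂ) ^ (-s / 2) * Complex.log π * (-1 / 2)) s :=
    ((hasDerivAt_id' s).neg.div_const 2).const_cpow (Or.inl hπ)
  have hGamma : HasDerivAt (fun s : ℂ ↦ Complex.Gamma (s / 2))
      (deriv Complex.Gamma (s / 2) * (1 / 2)) s :=
    (differentiableAt_Gamma_of_re_pos hs₂).hasDerivAt.comp s ((hasDerivAt_id' s).div_const 2)
  have hGamma_ne := Gamma_ne_zero_of_re_pos hs₂
  rw [show Gammaℝ = fun s ↦ (π : ℂ) ^ (-s / 2) * Complex.Gamma (s / 2) from funext Gammaℝ_def,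
    logDeriv_mul (f := fun s : ℂ ↦ (π : ℂ) ^ (-s / 2)) (g := fun s : ℂ ↦ Complex.Gamma (s / 2)) s
      (by simp [hπ]) hGamma_ne hpow.differentiableAt hGamma.differentiableAt,
    logDeriv_apply, logDeriv_apply, hpow.deriv, hGamma.deriv, digamma_def, logDeriv_apply,
    ofReal_log Real.pi_pos.le]
  field_simp

theorem logDeriv_mul_Gammaℝ_mul_riemannZeta {s : ℂ} (hs : 1 < s.re) :
    logDeriv (fun s ↦ s * (1 - s) * (Gammaℝ s * riemannZeta s)) s =
      1 / s - 1 / (1 - s) + (logDeriv Gammaℝ s + logDeriv riemannZeta s) := by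
  have hs_pos := one_pos.trans hs
  have hs₀ : s ≠ 0 := ne_zero_of_re_pos hs_pos
  have hs₁ : s ≠ 1 := ne_of_apply_ne re (by simpa using hs.ne')
  have h1s : 1 - s ≠ 0 := sub_ne_zero.2 hs₁.symm
  have hζ := riemannZeta_ne_zero_of_one_le_re hs.le
  have hζ' := differentiableAt_riemannZeta hs₁
  have hΓ := Gammaℝ_ne_zero_of_re_pos hs_pos
  have hΓ' := differentiableAt_Gammaℝ hs_pos
  have hpoly : logDeriv (fun s : ℂ ↦ s * (1 - s)) s = 1 / s - 1 / (1 - s) := by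
    rw [logDeriv_mul (f := fun s : ℂ ↦ s) (g := fun s : ℂ ↦ 1 - s) s hs₀ h1s (by fun_prop)
      (by fun_prop)]
    simp [logDeriv_apply, sub_eq_add_neg, neg_div]
  rw [logDeriv_mul (f := fun s : ℂ ↦ s * (1 - s)) (g := fun s ↦ Gammaℝ s * riemannZeta s) s
    (mul_ne_zero hs₀ h1s) (mul_ne_zero hΓ hζ) (by fun_prop) (hΓ'.mul hζ'), hpoly,
    logDeriv_mul (f := Gammaℝ) (g := riemannZeta) s hΓ hζ hΓ' hζ']

theorem arithmeticPart_eq_sub_LSeries {z : ℂ} (hz : 1 / 2 < z.re) :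
    arithmeticPart z =
      1 / (z - 1 / 2) - LSeries (fun n ↦ (ArithmeticFunction.vonMangoldt n : ℂ)) (1 / 2 + z) := by
  have hre {w : ℂ} (hw : 1 / 2 < w.re) : 1 < (1 / 2 + w).re := by
    norm_num
    linarith
  have hs := hre hz
  have hxi : shiftedXi =ᶠ[nhds z]
      fun w ↦ (fun s ↦ s * (1 - s) * (Gammaℝ s * riemannZeta s)) (1 / 2 + w) := by
    filter_upwards [(isOpen_lt continuous_const continuous_re).mem_nhds hz] with w hw
    have heq := shiftedXi_sub_half (one_pos.trans (hre hw))
      (ne_of_apply_ne re (by simpa only [one_re] using (hre hw).ne'))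
    rwa [add_sub_cancel_left, mul_assoc] at heq
  have hlog : logDeriv shiftedXi z =
      logDeriv (fun s ↦ s * (1 - s) * (Gammaℝ s * riemannZeta s)) (1 / 2 + z) := by
    rw [(logDeriv_congr_nhds hxi).eq_of_nhds, logDeriv_apply, logDeriv_apply,
      deriv_comp_const_add (f := fun s ↦ s * (1 - s) * (Gammaℝ s * riemannZeta s))]
  rw [ArithmeticFunction.LSeries_vonMangoldt_eq_deriv_riemannZeta_div hs, arithmeticPart,
    archimedeanPart, hlog, logDeriv_mul_Gammaℝ_mul_riemannZeta hs,
    logDeriv_Gammaℝ (one_pos.trans hs), logDeriv_apply riemannZeta,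
    show z - 1 / 2 = -(1 - (1 / 2 + z)) by ring, div_neg]
  ring

theorem re_one_div_sub {z a : ℂ} (ha : a.re = 0) : (1 / (z - a)).re = z.re / normSq (z - a) := by
  simp [inv_re, ha]

theorem re_one_div_sub_eq_div_sq_add_sq {z a : ℂ} (ha : a.re = 0) :
    (1 / (z - a)).re = z.re / (z.re ^ 2 + (z.im - a.im) ^ 2) := by
  rw [re_one_div_sub ha, normSq_apply, sub_re, sub_im, ha, sub_zero, sq, sq]

theorem sum_le_re_logDeriv_shiftedXi (hRH : RiemannHypothesis) {z : ℂ} (hz : 0 < z.re)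
    (S : Finset ℂ) (hS : ∀ a ∈ S, shiftedXi a = 0) :
    ∑ a ∈ S, (analyticOrderNatAt shiftedXi a : ℝ) * (1 / (z - a)).re ≤
      (logDeriv shiftedXi z).re := by
  refine ge_of_tendsto (tendsto_re_zerosPrincipalPart_shiftedXi hRH hz) ?_
  have hmem {R : ℝ} {a : ℂ} : a ∈ zerosInBall shiftedXi (1 / 2) R ↔
      ‖a - 1 / 2‖ ≤ R ∧ shiftedXi a = 0 :=
    mem_zerosInBall differentiable_shiftedXi shiftedXi_half_ne_zero
  filter_upwards [eventually_ge_atTop (∑ a ∈ S, ‖a - 1 / 2‖)] with R hR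
  rw [re_zerosPrincipalPart]
  refine Finset.sum_le_sum_of_subset_of_nonneg
    (fun a ha ↦ hmem.2 ⟨(Finset.single_le_sum (f := fun a ↦ ‖a - 1 / 2‖)
      (fun _ _ ↦ norm_nonneg _) ha).trans hR, hS a ha⟩) fun a ha _ ↦ ?_
  rw [re_one_div_sub (re_eq_zero_of_shiftedXi_eq_zero hRH (hmem.1 ha).2)]
  exact mul_nonneg (Nat.cast_nonneg _) (div_nonneg hz.le (normSq_nonneg _))

theorem re_logDeriv_shiftedXi_le (hRH : RiemannHypothesis) {z : ℂ} (hz : 0 < z.re) {B : ℝ}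
    (hB : ∀ S : Finset ℂ, (∀ a ∈ S, shiftedXi a = 0) →
      ∑ a ∈ S, (analyticOrderNatAt shiftedXi a : ℝ) * (1 / (z - a)).re ≤ B) :
    (logDeriv shiftedXi z).re ≤ B := by
  refine le_of_tendsto' (tendsto_re_zerosPrincipalPart_shiftedXi hRH hz) fun R ↦ ?_
  rw [re_zerosPrincipalPart]
  exact hB _ fun a ha ↦
    ((mem_zerosInBall differentiable_shiftedXi shiftedXi_half_ne_zero).1 ha).2

theorem re_logDeriv_shiftedXi_nonneg (hRH : RiemannHypothesis) {z : ℂ} (hz : 0 < z.re) :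
    0 ≤ (logDeriv shiftedXi z).re := by
  simpa using sum_le_re_logDeriv_shiftedXi hRH hz ∅ (by simp)

theorem norm_log_half_sub_log_one_add_norm_le {z : ℂ} (hz : 0 ≤ z.re) :
    ‖Complex.log ((1 / 2 + z) / 2) - Real.log (1 + ‖z‖)‖ ≤ Real.log 6 + π := by
  set s := 1 / 2 + z with hs
  have hs_half : 1 / 2 ≤ ‖s‖ := by
    refine le_trans ?_ (re_le_norm s)
    rw [hs]
    norm_num
    exact hz
  have hz_le : ‖z‖ ≤ ‖s‖ := by
    simpa [hs, add_comm] using norm_le_norm_add_ofReal hz (one_half_pos (α := ℝ)).le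
  have hs_le : ‖s‖ ≤ 1 + ‖z‖ := (norm_add_le _ _).trans (by norm_num)
  have hlower : Real.log ((1 + ‖z‖) / 6) ≤ Real.log ‖s / 2‖ := by
    refine Real.log_le_log (by positivity) ?_
    rw [norm_div, Complex.norm_ofNat]
    linarith
  have hupper : Real.log ‖s / 2‖ ≤ Real.log (1 + ‖z‖) := by
    refine Real.log_le_log ?_ ?_ <;> rw [norm_div, Complex.norm_ofNat] <;>
      linarith [norm_nonneg z]
  rw [Real.log_div (by positivity) (by norm_num)] at hlower
  refine (norm_le_abs_re_add_abs_im _).trans (add_le_add ?_ ?_)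
  · rw [sub_re, log_re, ofReal_re, abs_le]
    constructor <;> linarith [Real.log_nonneg (show (1 : ℝ) ≤ 6 by norm_num)]
  · rw [sub_im, ofReal_im, sub_zero, log_im]
    exact abs_arg_le_pi _

theorem exists_norm_archimedeanPart_sub_le :
    ∃ C, ∀ z : ℂ, 0 ≤ z.re → ‖archimedeanPart z - Real.log (1 + ‖z‖) / 2‖ ≤ C := by
  obtain ⟨C, hC⟩ := exists_norm_digamma_sub_log_le (show (0 : ℝ) < 1 / 4 by norm_num)
  refine ⟨2 + Real.log π / 2 + C / 2 + (Real.log 6 + π) / 2, fun z hz ↦ ?_⟩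
  have hlog := norm_log_half_sub_log_one_add_norm_le hz
  set s := 1 / 2 + z with hs
  have hs_re : 1 / 2 ≤ s.re := by
    rw [hs]
    norm_num
    exact hz
  have hs_half : 1 / 2 ≤ ‖s‖ := hs_re.trans (re_le_norm s)
  have hlogπ : 0 ≤ Real.log π := Real.log_nonneg (by linarith [Real.pi_gt_three])
  have hsplit : archimedeanPart z - Real.log (1 + ‖z‖) / 2 = 1 / s - (Real.log π : ℂ) / 2 +
      (digamma (s / 2) - Complex.log (s / 2)) / 2 +
        (Complex.log (s / 2) - Real.log (1 + ‖z‖)) / 2 := by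
    rw [archimedeanPart, ← hs]
    ring
  rw [hsplit]
  refine norm_add_le_of_le (norm_add_le_of_le (norm_sub_le_of_le ?_ ?_) ?_) ?_
  · rw [norm_div, norm_one, div_le_iff₀ (by positivity)]
    linarith
  · rw [norm_div, Complex.norm_of_nonneg hlogπ, Complex.norm_ofNat]
  · rw [norm_div, Complex.norm_ofNat]
    gcongr
    refine hC _ ?_
    rw [div_ofNat_re]
    linarith
  · rw [norm_div, Complex.norm_ofNat]
    gcongr

theorem re_one_add_div_one_sub_pos {w : ℂ} (hw : ‖w‖ < 1) : 0 < ((1 + w) / (1 - w)).re := by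
  have hw_ne : 1 - w ≠ 0 := fun h ↦ hw.ne (by rw [← sub_eq_zero.1 h, norm_one])
  have hnormSq : normSq w < 1 := by
    rw [normSq_eq_norm_sq]
    exact pow_lt_one₀ (norm_nonneg _) hw two_ne_zero
  rw [div_re, ← add_div]
  refine div_pos ?_ (normSq_pos.2 hw_ne)
  simp only [normSq_apply, add_re, one_re, sub_re, add_im, one_im, zero_add, sub_im, zero_sub]
    at hnormSq ⊢
  linarith

theorem norm_sub_one_div_add_one_le {z : ℂ} (hz : 0 < z.re) :
    ‖(z - 1) / (z + 1)‖ ≤ 1 - 2 * z.re / ‖z + 1‖ ^ 2 := by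
  have hz₁ : z + 1 ≠ 0 := ne_zero_of_re_pos (by rw [add_re, one_re]; positivity)
  have hz₁_norm : ‖z + 1‖ ≠ 0 := norm_ne_zero_iff.2 hz₁
  have hsq : ‖(z - 1) / (z + 1)‖ ^ 2 = 1 - 2 * (2 * z.re / ‖z + 1‖ ^ 2) := by
    rw [norm_div]
    field_simp
    rw [← normSq_eq_norm_sq, ← normSq_eq_norm_sq]
    simp only [normSq_apply, sub_re, one_re, sub_im, one_im, add_re, add_im]
    ring
  linarith [sq_nonneg (‖(z - 1) / (z + 1)‖ - 1)]

/-- Borel–Carathéodory on the disc, transported to the half-plane by the Cayley transform. -/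
theorem norm_le_of_re_nonneg_of_re_pos {f : ℂ → ℂ} (hf : DifferentiableOn ℂ f {z | 0 < z.re})
    (hre : ∀ z : ℂ, 0 < z.re → 0 ≤ (f z).re) {z : ℂ} (hz : 0 < z.re) :
    ‖f z‖ ≤ (1 + ‖f 1‖) * (1 + ‖z‖) ^ 2 / z.re := by
  have hz₁ : z + 1 ≠ 0 := ne_zero_of_re_pos (by rw [add_re, one_re]; positivity)
  have hw := norm_sub_one_div_add_one_le hz
  set w := (z - 1) / (z + 1) with hw_def
  have hgap : 0 < 2 * z.re / ‖z + 1‖ ^ 2 :=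
    div_pos (mul_pos two_pos hz) (pow_pos (norm_pos_iff.2 hz₁) 2)
  have hw₁ : ‖w‖ < 1 := by linarith
  have hcayley : (1 + w) / (1 - w) = z := by
    rw [hw_def, one_add_div hz₁, one_sub_div hz₁, div_div_div_cancel_right₀ hz₁]
    ring
  have hmaps : MapsTo (fun w : ℂ ↦ (1 + w) / (1 - w)) (Metric.ball 0 1) {z | 0 < z.re} :=
    fun w hw ↦ re_one_add_div_one_sub_pos (mem_ball_zero_iff.1 hw)
  have hdiff : DifferentiableOn ℂ (fun w : ℂ ↦ -f ((1 + w) / (1 - w))) (Metric.ball 0 1) := by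
    refine (hf.comp (fun w hw ↦ ?_) hmaps).neg
    have hw_ne : 1 - w ≠ 0 := fun h ↦ by simp [← sub_eq_zero.1 h] at hw
    fun_prop (disch := exact hw_ne)
  have hbound := borelCaratheodory one_pos hdiff
    (fun w hw ↦ show (-f _).re ≤ 1 by rw [neg_re]; linarith [hre _ (hmaps hw)]) one_pos
    (mem_ball_zero_iff.2 hw₁)
  simp only [norm_neg, hcayley, add_zero, sub_zero, div_one, mul_one] at hbound
  calc ‖f z‖ ≤ (2 * ‖w‖ + ‖f 1‖ * (1 + ‖w‖)) / (1 - ‖w‖) := by rwa [add_div]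
    _ ≤ (2 * 1 + ‖f 1‖ * (1 + 1)) / (2 * z.re / ‖z + 1‖ ^ 2) := by
      gcongr
      linarith
    _ = (1 + ‖f 1‖) * ‖z + 1‖ ^ 2 / z.re := by
      field_simp
      ring
    _ ≤ _ := by
      gcongr
      rw [add_comm 1]
      simpa using norm_add_le z 1

/-! ### Shifting integrals over vertical lines -/

section VerticalShift

variable {E : Type*} [NormedAddCommGroup E] [NormedSpace ℂ E] {a b C : ℝ}

theorem add_mul_I_mem_re_preimage_iff {s : Set ℝ} {c t : ℝ} :
    (c + t * I : ℂ) ∈ re ⁻¹' s ↔ c ∈ s := by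
  simp

variable {f : ℂ → E} (hf : DifferentiableOn ℂ f (re ⁻¹' Icc a b))
  (hC : ∀ z ∈ re ⁻¹' Icc a b, ‖f z‖ ≤ C / (1 + z.im ^ 2))
include hf hC

theorem integrable_comp_verticalLine {c : ℝ} (hc : c ∈ Icc a b) :
    Integrable fun t : ℝ ↦ f (c + t * I) := by
  refine (integrable_inv_one_add_sq.const_mul C).mono'
    (hf.continuousOn.comp_continuous (by fun_prop)
      fun _ ↦ add_mul_I_mem_re_preimage_iff.2 hc).aestronglyMeasurable
    (Eventually.of_forall fun t ↦ ?_)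
  simpa [div_eq_mul_inv] using hC (c + t * I) (add_mul_I_mem_re_preimage_iff.2 hc)

omit hf in
theorem tendsto_integral_horizontalSegment_zero {s : ℝ → ℝ} (hs : ∀ R, s R ^ 2 = R ^ 2)
    (hab : a ≤ b) : Tendsto (fun R ↦ ∫ x in a..b, f (x + s R * I)) atTop (nhds 0) := by
  have hbound (R : ℝ) : ‖∫ x in a..b, f (x + s R * I)‖ ≤ C / (1 + R ^ 2) * |b - a| := by
    refine intervalIntegral.norm_integral_le_of_norm_le_const fun x hx ↦ ?_
    rw [uIoc_of_le hab] at hx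
    simpa [hs] using hC (x + s R * I) (add_mul_I_mem_re_preimage_iff.2 (Ioc_subset_Icc_self hx))
  refine squeeze_zero_norm hbound ?_
  have hden : Tendsto (fun R : ℝ ↦ 1 + R ^ 2) atTop atTop :=
    tendsto_atTop_add_const_left _ _ (tendsto_pow_atTop two_ne_zero)
  simpa using (hden.const_div_atTop C).mul_const |b - a|

theorem integral_comp_verticalLine_eq (hab : a ≤ b) :
    ∫ t : ℝ, f (a + t * I) = ∫ t : ℝ, f (b + t * I) := by
  have hrect (R : ℝ) : (∫ x in a..b, f (x + (-R : ℝ) * I)) - (∫ x in a..b, f (x + R * I)) +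
      I • (∫ y in (-R)..R, f (b + y * I)) - I • (∫ y in (-R)..R, f (a + y * I)) = 0 :=
    integral_boundary_rect_eq_zero_of_differentiableOn f ⟨a, -R⟩ ⟨b, R⟩
      (hf.mono fun z hz ↦ uIcc_of_le hab ▸ hz.1)
  have hvert {c : ℝ} (hc : c ∈ Icc a b) :
      Tendsto (fun R ↦ I • ∫ y in (-R)..R, f (c + y * I)) atTop
        (nhds (I • ∫ t : ℝ, f (c + t * I))) :=
    (intervalIntegral_tendsto_integral (integrable_comp_verticalLine hf hC hc)
      tendsto_neg_atTop_atBot tendsto_id).const_smul I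
  have hlim := (((tendsto_integral_horizontalSegment_zero hC (s := (-·)) neg_sq hab).sub
    (tendsto_integral_horizontalSegment_zero hC (s := id) (fun _ ↦ rfl) hab)).add
      (hvert (right_mem_Icc.2 hab))).sub (hvert (left_mem_Icc.2 hab))
  have hzero := tendsto_nhds_unique (hlim.congr hrect) tendsto_const_nhds
  rw [sub_zero, zero_add, sub_eq_zero] at hzero
  exact (smul_right_injective E I_ne_zero hzero).symm

end VerticalShift

/-! ### The smoothing kernel -/

/-- The entire function `w ↦ sinh w / w`. -/
def sinhc (w : ℂ) : ℂ :=
  dslope Complex.sinh 0 w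

theorem differentiable_sinhc : Differentiable ℂ sinhc := fun _ ↦
  ((differentiableOn_dslope univ_mem).2
    Complex.differentiable_sinh.differentiableOn).differentiableAt univ_mem

theorem sinhc_zero : sinhc 0 = 1 := by
  simp [sinhc]

theorem sinhc_of_ne_zero {w : ℂ} (hw : w ≠ 0) : sinhc w = Complex.sinh w / w := by
  simp [sinhc, dslope_of_ne _ hw, slope_def_field]

theorem sinhc_ofReal_mul_I (x : ℝ) : sinhc (x * I) = Real.sinc x := by
  rcases eq_or_ne x 0 with rfl | hx
  · simp [sinhc_zero]
  have hx_cast : (x : ℂ) ≠ 0 := ofReal_ne_zero.2 hx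
  rw [Real.sinc_of_ne_zero hx, sinhc_of_ne_zero (mul_ne_zero hx_cast I_ne_zero), Complex.sinh_mul_I,
    mul_div_mul_right _ _ I_ne_zero, ofReal_div, ofReal_sin]

theorem norm_exp_add_norm_exp_neg_le (w : ℂ) :
    ‖Complex.exp w‖ + ‖Complex.exp (-w)‖ ≤ 2 * Real.exp |w.re| := by
  rw [Complex.norm_exp, Complex.norm_exp, neg_re, two_mul]
  gcongr
  · exact le_abs_self _
  · exact neg_le_abs _

theorem norm_cosh_le (w : ℂ) : ‖Complex.cosh w‖ ≤ Real.exp |w.re| := by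
  rw [Complex.cosh, norm_div, Complex.norm_ofNat, div_le_iff₀' two_pos]
  exact (norm_add_le _ _).trans (norm_exp_add_norm_exp_neg_le w)

theorem norm_sinh_le (w : ℂ) : ‖Complex.sinh w‖ ≤ Real.exp |w.re| := by
  rw [Complex.sinh, norm_div, Complex.norm_ofNat, div_le_iff₀' two_pos]
  exact (norm_sub_le _ _).trans (norm_exp_add_norm_exp_neg_le w)

theorem norm_sinh_le_norm_mul_exp (w : ℂ) : ‖Complex.sinh w‖ ≤ ‖w‖ * Real.exp |w.re| := by
  have hderiv : ∀ u ∈ Icc (0 : ℝ) 1, HasDerivWithinAt (fun u : ℝ ↦ Complex.sinh (u * w))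
      (Complex.cosh (u * w) * w) (Icc 0 1) u := by
    intro u _
    have hlin : HasDerivAt (fun u : ℝ ↦ (u : ℂ) * w) (1 * w) u :=
      (ofRealCLM.hasDerivAt (x := u)).mul_const w
    rw [one_mul] at hlin
    exact ((Complex.hasDerivAt_sinh (u * w)).comp u hlin).hasDerivWithinAt
  have hbound : ∀ u ∈ Ico (0 : ℝ) 1,
      ‖Complex.cosh (u * w) * w‖ ≤ ‖w‖ * Real.exp |w.re| := by
    intro u hu
    rw [norm_mul, mul_comm]
    gcongr
    refine (norm_cosh_le _).trans (Real.exp_le_exp.2 ?_)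
    rw [re_ofReal_mul, abs_mul, abs_of_nonneg hu.1]
    exact mul_le_of_le_one_left (abs_nonneg _) hu.2.le
  simpa using norm_image_sub_le_of_norm_deriv_le_segment_01' hderiv hbound

theorem norm_sinhc_sq_le (w : ℂ) :
    ‖sinhc w‖ ^ 2 ≤ 2 * Real.exp |w.re| ^ 2 / (1 + ‖w‖ ^ 2) := by
  rcases eq_or_ne w 0 with rfl | hw
  · simp [sinhc_zero]
  have hw_pos := norm_pos_iff.2 hw
  have hsmall : ‖sinhc w‖ ≤ Real.exp |w.re| := by
    rw [sinhc_of_ne_zero hw, norm_div, div_le_iff₀' hw_pos]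
    exact norm_sinh_le_norm_mul_exp w
  have hlarge : ‖sinhc w‖ * ‖w‖ ≤ Real.exp |w.re| := by
    rw [sinhc_of_ne_zero hw, norm_div, div_mul_cancel₀ _ hw_pos.ne']
    exact norm_sinh_le w
  rw [le_div_iff₀ (by positivity), mul_one_add, ← mul_pow, two_mul]
  gcongr

/-- The kernel `(sinh (L w / 4) / (L w / 4)) ^ 4`: entire, of exponential type `L`, and equal on the
imaginary axis to the non-negative function `smoothingWeight L`. -/
def smoothingKernel (L : ℝ) (w : ℂ) : ℂ :=
  sinhc (L / 4 * w) ^ 4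

/-- The restriction of `smoothingKernel L` to the imaginary axis; its mass is concentrated at
`|u| ≪ 1 / L`. -/
def smoothingWeight (L u : ℝ) : ℝ :=
  Real.sinc (L / 4 * u) ^ 4

theorem differentiable_smoothingKernel (L : ℝ) : Differentiable ℂ (smoothingKernel L) := by
  unfold smoothingKernel
  have := differentiable_sinhc
  fun_prop

theorem smoothingKernel_ofReal_mul_I (L u : ℝ) :
    smoothingKernel L (u * I) = smoothingWeight L u := by
  rw [smoothingKernel, smoothingWeight, ofReal_pow, ← sinhc_ofReal_mul_I]
  push_cast
  ring_nf

theorem norm_smoothingKernel_le {L : ℝ} (hL : 0 < L) (w : ℂ) :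
    ‖smoothingKernel L w‖ ≤ 4 * Real.exp (L * |w.re|) / (1 + (L / 4 * ‖w‖) ^ 2) ^ 2 := by
  have hscale : (L / 4 * w : ℂ) = (L / 4 : ℝ) * w := by
    push_cast
    rfl
  have hL₄ : 0 < L / 4 := by positivity
  calc ‖smoothingKernel L w‖ = (‖sinhc ((L / 4 : ℝ) * w)‖ ^ 2) ^ 2 := by
        rw [smoothingKernel, norm_pow, hscale, ← pow_mul]
    _ ≤ (2 * Real.exp (L / 4 * |w.re|) ^ 2 / (1 + (L / 4 * ‖w‖) ^ 2)) ^ 2 := by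
        have h := norm_sinhc_sq_le ((L / 4 : ℝ) * w)
        rw [re_ofReal_mul, abs_mul, norm_mul, Complex.norm_of_nonneg hL₄.le, abs_of_pos hL₄] at h
        gcongr
    _ = _ := by
        rw [div_pow, mul_pow, ← pow_mul, ← Real.exp_nat_mul]
        ring_nf

theorem norm_smoothingKernel_le_of_four_le {L : ℝ} (hL : 4 ≤ L) (w : ℂ) :
    ‖smoothingKernel L w‖ ≤ 4 * Real.exp (L * |w.re|) / (1 + ‖w‖ ^ 2) ^ 2 := by
  refine (norm_smoothingKernel_le (by linarith) w).trans ?_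
  gcongr
  exact le_mul_of_one_le_left (norm_nonneg w) (by linarith)

theorem smoothingWeight_nonneg (L u : ℝ) : 0 ≤ smoothingWeight L u :=
  Even.pow_nonneg ⟨2, rfl⟩ _

theorem continuous_smoothingWeight (L : ℝ) : Continuous (smoothingWeight L) := by
  unfold smoothingWeight
  have := Real.continuous_sinc
  fun_prop

theorem half_le_sinc {x : ℝ} (hx : |x| ≤ 1) : 1 / 2 ≤ Real.sinc x := by
  wlog hx₀ : 0 ≤ x generalizing x
  · rw [← Real.sinc_neg]
    exact this (by rwa [abs_neg]) (by linarith)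
  rcases hx₀.eq_or_lt with rfl | hx_pos
  · norm_num
  rw [abs_of_pos hx_pos] at hx
  rw [Real.sinc_of_ne_zero hx_pos.ne', le_div_iff₀ hx_pos]
  nlinarith [Real.sin_gt_sub_cube hx_pos, mul_nonneg hx_pos.le (mul_nonneg hx_pos.le
    (sub_nonneg.2 hx)), mul_nonneg hx_pos.le (sub_nonneg.2 hx)]

section Weight

variable {L : ℝ} (hL : 0 < L)
include hL

theorem one_sixteenth_le_smoothingWeight {u : ℝ} (hu : |u| ≤ L⁻¹) :
    1 / 16 ≤ smoothingWeight L u := by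
  have hLu : |L / 4 * u| ≤ 1 := by
    rw [abs_mul, abs_of_pos (by positivity : 0 < L / 4)]
    calc L / 4 * |u| ≤ L / 4 * L⁻¹ := by gcongr
      _ ≤ 1 := by
        field_simp
        norm_num
  calc (1 / 16 : ℝ) = (1 / 2) ^ 4 := by norm_num
    _ ≤ _ := by
      unfold smoothingWeight
      gcongr
      exact half_le_sinc hLu

theorem smoothingWeight_le_div_sq (u : ℝ) :
    smoothingWeight L u ≤ 4 / (1 + (L / 4 * u) ^ 2) ^ 2 := by
  have h := norm_smoothingKernel_le hL (u * I)
  rw [smoothingKernel_ofReal_mul_I, Complex.norm_of_nonneg (smoothingWeight_nonneg L u)] at h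
  simpa [mul_pow] using h

theorem smoothingWeight_le (u : ℝ) : smoothingWeight L u ≤ 4 * (1 + (L / 4 * u) ^ 2)⁻¹ := by
  refine (smoothingWeight_le_div_sq hL u).trans ?_
  rw [← div_eq_mul_inv]
  gcongr
  exact le_self_pow₀ (by linarith [sq_nonneg (L / 4 * u)]) two_ne_zero

theorem integrable_inv_one_add_scaled_sq :
    Integrable fun u : ℝ ↦ (1 + (L / 4 * u) ^ 2)⁻¹ :=
  integrable_inv_one_add_sq.comp_mul_left' (by positivity)

theorem integral_inv_one_add_scaled_sq : ∫ u : ℝ, (1 + (L / 4 * u) ^ 2)⁻¹ = 4 * π / L := by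
  rw [Measure.integral_comp_mul_left (fun x : ℝ ↦ (1 + x ^ 2)⁻¹), integral_univ_inv_one_add_sq,
    abs_of_pos (by positivity), smul_eq_mul]
  field_simp

theorem integrable_smoothingWeight : Integrable (smoothingWeight L) := by
  refine ((integrable_inv_one_add_scaled_sq hL).const_mul 4).mono'
    (continuous_smoothingWeight L).aestronglyMeasurable (Eventually.of_forall fun u ↦ ?_)
  rw [Real.norm_of_nonneg (smoothingWeight_nonneg _ _)]
  exact smoothingWeight_le hL u

theorem integral_smoothingWeight_le : ∫ u, smoothingWeight L u ≤ 16 * π / L :=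
  calc ∫ u, smoothingWeight L u ≤ ∫ u, 4 * (1 + (L / 4 * u) ^ 2)⁻¹ :=
        integral_mono (integrable_smoothingWeight hL)
          ((integrable_inv_one_add_scaled_sq hL).const_mul 4) (smoothingWeight_le hL)
    _ = _ := by
        rw [integral_const_mul, integral_inv_one_add_scaled_sq hL]
        ring

end Weight

theorem abs_mul_smoothingWeight_le {L : ℝ} (hL : 4 ≤ L) (u : ℝ) :
    |u| * smoothingWeight L u ≤ 4 * (1 + (L / 4 * u) ^ 2)⁻¹ := by
  have hweight := smoothingWeight_le_div_sq (by linarith : 0 < L) u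
  set x := L / 4 * u with hx
  have hux : |u| ≤ |x| := by
    rw [hx, abs_mul, abs_of_nonneg (by linarith : 0 ≤ L / 4)]
    exact le_mul_of_one_le_left (abs_nonneg u) (by linarith)
  have hx_sq : |x| ≤ 1 + x ^ 2 := by
    rw [← sq_abs x]
    nlinarith [sq_nonneg (|x| - 1)]
  calc |u| * smoothingWeight L u ≤ (1 + x ^ 2) * (4 / (1 + x ^ 2) ^ 2) :=
        mul_le_mul (hux.trans hx_sq) hweight (smoothingWeight_nonneg L u) (by positivity)
    _ = _ := by field_simp

/-! ### Smoothed values of the logarithmic derivative -/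

/-- The integral of `f` along the vertical line through `z₀`, weighted by `smoothingWeight L`, so
that only heights within about `1 / L` of `z₀.im` contribute. -/
def smoothedValue (L : ℝ) (f : ℂ → ℂ) (z₀ : ℂ) : ℂ :=
  ∫ u : ℝ, f (z₀ + u * I) * smoothingWeight L u

theorem one_add_norm_add_sq_le (z w : ℂ) :
    (1 + ‖z + w‖) ^ 2 ≤ 2 * (1 + ‖z‖) ^ 2 * (1 + ‖w‖ ^ 2) :=
  calc (1 + ‖z + w‖) ^ 2 ≤ ((1 + ‖z‖) * (1 + ‖w‖)) ^ 2 := by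
        gcongr
        nlinarith [norm_add_le z w, mul_nonneg (norm_nonneg z) (norm_nonneg w)]
    _ ≤ (1 + ‖z‖) ^ 2 * (2 * (1 + ‖w‖ ^ 2)) := by
        rw [mul_pow]
        gcongr
        nlinarith [sq_nonneg (1 - ‖w‖)]
    _ = _ := by ring

theorem sq_im_le_sq_norm (w : ℂ) : w.im ^ 2 ≤ ‖w‖ ^ 2 :=
  sq_le_sq.2 ((Complex.abs_im_le_norm w).trans (le_abs_self _))

section Smoothing

variable {L : ℝ} (hL : 4 ≤ L)
include hL

theorem norm_smoothingKernel_le_of_mem_strip {w : ℂ} (hw : w ∈ re ⁻¹' Icc 0 1) :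
    ‖smoothingKernel L w‖ ≤ 4 * Real.exp L / (1 + ‖w‖ ^ 2) ^ 2 := by
  refine (norm_smoothingKernel_le_of_four_le hL w).trans ?_
  have hre : L * |w.re| ≤ L := by
    rw [abs_of_nonneg hw.1]
    exact mul_le_of_le_one_right (by linarith) hw.2
  gcongr

section QuadraticGrowth

variable {f : ℂ → ℂ} {z₀ : ℂ} {B : ℝ} (hB : ∀ z : ℂ, z₀.re ≤ z.re → ‖f z‖ ≤ B * (1 + ‖z‖) ^ 2)
include hB

theorem norm_mul_smoothingKernel_le {w : ℂ} (hw : w ∈ re ⁻¹' Icc 0 1) :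
    ‖f (z₀ + w) * smoothingKernel L w‖ ≤
      8 * B * (1 + ‖z₀‖) ^ 2 * Real.exp L / (1 + w.im ^ 2) := by
  have hf := hB (z₀ + w) (by simpa using hw.1)
  have hB_nonneg : 0 ≤ B :=
    nonneg_of_mul_nonneg_left ((norm_nonneg _).trans hf) (by positivity)
  calc ‖f (z₀ + w) * smoothingKernel L w‖
      ≤ (B * (2 * (1 + ‖z₀‖) ^ 2 * (1 + ‖w‖ ^ 2))) * (4 * Real.exp L / (1 + ‖w‖ ^ 2) ^ 2) := by
        rw [norm_mul]
        gcongr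
        · exact hf.trans (by gcongr; exact one_add_norm_add_sq_le z₀ w)
        · exact norm_smoothingKernel_le_of_mem_strip hL hw
    _ = 8 * B * (1 + ‖z₀‖) ^ 2 * Real.exp L / (1 + ‖w‖ ^ 2) := by
        field_simp
        ring
    _ ≤ _ := by
        gcongr _ / (1 + ?_)
        exact sq_im_le_sq_norm w

variable (hf : ∀ z : ℂ, z₀.re ≤ z.re → DifferentiableAt ℂ f z)
include hf

omit hL hB in
theorem differentiableOn_mul_smoothingKernel :
    DifferentiableOn ℂ (fun w ↦ f (z₀ + w) * smoothingKernel L w) (re ⁻¹' Icc 0 1) := by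
  intro w hw
  have hshift : DifferentiableAt ℂ (fun w ↦ f (z₀ + w)) w :=
    (hf _ (by simpa using hw.1)).comp w (differentiableAt_id.const_add z₀)
  exact (hshift.mul (differentiable_smoothingKernel L w)).differentiableWithinAt

theorem integrable_mul_smoothingKernel {c : ℝ} (hc : c ∈ Icc 0 1) :
    Integrable fun u : ℝ ↦ f (z₀ + (c + u * I)) * smoothingKernel L (c + u * I) :=
  integrable_comp_verticalLine (differentiableOn_mul_smoothingKernel hf)
    (fun _ ↦ norm_mul_smoothingKernel_le hL hB) hc

theorem integrable_mul_smoothingWeight :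
    Integrable fun u : ℝ ↦ f (z₀ + u * I) * smoothingWeight L u := by
  simpa [smoothingKernel_ofReal_mul_I] using
    integrable_mul_smoothingKernel hL hB hf (left_mem_Icc.2 zero_le_one)

theorem smoothedValue_eq_integral_smoothingKernel :
    smoothedValue L f z₀ = ∫ u : ℝ, f (z₀ + (1 + u * I)) * smoothingKernel L (1 + u * I) := by
  simpa [smoothedValue, smoothingKernel_ofReal_mul_I] using
    integral_comp_verticalLine_eq (differentiableOn_mul_smoothingKernel (L := L) hf)
      (fun _ ↦ norm_mul_smoothingKernel_le hL hB) zero_le_one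

theorem integrable_re_mul_smoothingWeight :
    Integrable fun u : ℝ ↦ (f (z₀ + u * I)).re * smoothingWeight L u := by
  simpa [re_mul_ofReal] using (integrable_mul_smoothingWeight hL hB hf).re

theorem re_smoothedValue :
    (smoothedValue L f z₀).re = ∫ u : ℝ, (f (z₀ + u * I)).re * smoothingWeight L u := by
  simpa [smoothedValue, re_mul_ofReal] using
    (integral_re (integrable_mul_smoothingWeight hL hB hf)).symm

end QuadraticGrowth

end Smoothing

theorem exists_norm_logDeriv_shiftedXi_le (hRH : RiemannHypothesis) {a : ℝ} (ha : 0 < a) :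
    ∃ B, ∀ z : ℂ, a ≤ z.re → ‖logDeriv shiftedXi z‖ ≤ B * (1 + ‖z‖) ^ 2 := by
  refine ⟨(1 + ‖logDeriv shiftedXi 1‖) / a, fun z hz ↦ ?_⟩
  have hz₀ := ha.trans_le hz
  refine (norm_le_of_re_nonneg_of_re_pos
    (fun w hw ↦ (differentiableAt_logDeriv_shiftedXi hRH hw).differentiableWithinAt)
    (fun w hw ↦ re_logDeriv_shiftedXi_nonneg hRH hw) hz₀).trans ?_
  rw [div_mul_eq_mul_div]
  gcongr

theorem exists_norm_archimedeanPart_le :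
    ∃ B, ∀ z : ℂ, 0 ≤ z.re → ‖archimedeanPart z‖ ≤ B * (1 + ‖z‖) ^ 2 := by
  obtain ⟨C, hC⟩ := exists_norm_archimedeanPart_sub_le
  refine ⟨|C| + 1, fun z hz ↦ ?_⟩
  have hlog_nonneg : 0 ≤ Real.log (1 + ‖z‖) := Real.log_nonneg (by linarith [norm_nonneg z])
  have hlog_le : Real.log (1 + ‖z‖) ≤ ‖z‖ := by
    linarith [Real.log_le_sub_one_of_pos (by positivity : 0 < 1 + ‖z‖)]
  have hnorm_log : ‖(Real.log (1 + ‖z‖) : ℂ) / 2‖ = Real.log (1 + ‖z‖) / 2 := by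
    rw [norm_div, Complex.norm_of_nonneg hlog_nonneg, Complex.norm_ofNat]
  have h := norm_le_norm_sub_add (archimedeanPart z) ((Real.log (1 + ‖z‖) : ℂ) / 2)
  nlinarith [hC z hz, le_abs_self C, abs_nonneg C, norm_nonneg z, sq_nonneg ‖z‖]

theorem exists_norm_arithmeticPart_le (hRH : RiemannHypothesis) {a : ℝ} (ha : 0 < a) :
    ∃ B, ∀ z : ℂ, a ≤ z.re → ‖arithmeticPart z‖ ≤ B * (1 + ‖z‖) ^ 2 := by
  obtain ⟨B₁, hB₁⟩ := exists_norm_logDeriv_shiftedXi_le hRH ha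
  obtain ⟨B₂, hB₂⟩ := exists_norm_archimedeanPart_le
  refine ⟨B₁ + B₂, fun z hz ↦ (norm_sub_le _ _).trans ?_⟩
  rw [add_mul]
  exact add_le_add (hB₁ z hz) (hB₂ z (ha.le.trans hz))

theorem smoothedValue_logDeriv_shiftedXi (hRH : RiemannHypothesis) {L : ℝ} (hL : 4 ≤ L) {z₀ : ℂ}
    (hz₀ : 0 < z₀.re) :
    smoothedValue L (logDeriv shiftedXi) z₀ =
      smoothedValue L archimedeanPart z₀ + smoothedValue L arithmeticPart z₀ := by
  obtain ⟨B₁, hB₁⟩ := exists_norm_archimedeanPart_le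
  obtain ⟨B₂, hB₂⟩ := exists_norm_arithmeticPart_le hRH hz₀
  rw [smoothedValue, smoothedValue, smoothedValue,
    ← integral_add
      (integrable_mul_smoothingWeight hL (fun z hz ↦ hB₁ z (hz₀.le.trans hz))
        fun z hz ↦ differentiableAt_archimedeanPart (hz₀.le.trans hz))
      (integrable_mul_smoothingWeight hL hB₂
        fun z hz ↦ differentiableAt_arithmeticPart hRH (hz₀.trans_le hz))]
  congr with u
  rw [arithmeticPart]
  ring

theorem sum_mul_le_re_logDeriv_shiftedXi (hRH : RiemannHypothesis) {L : ℝ} (hL : 0 < L) {z : ℂ}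
    (hz : z.re = L⁻¹) (S : Finset ℂ)
    (hS : ∀ a ∈ S, shiftedXi a = 0 ∧ |z.im - a.im| ≤ 2 * L⁻¹) :
    (∑ a ∈ S, (analyticOrderNatAt shiftedXi a : ℝ)) * (L / 5) ≤ (logDeriv shiftedXi z).re := by
  have hz_pos : 0 < z.re := hz ▸ inv_pos.2 hL
  refine le_trans ?_ (sum_le_re_logDeriv_shiftedXi hRH hz_pos S fun a ha ↦ (hS a ha).1)
  rw [Finset.sum_mul]
  gcongr with a ha
  have ha_re := re_eq_zero_of_shiftedXi_eq_zero hRH (hS a ha).1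
  have hnormSq : normSq (z - a) ≤ 5 * L⁻¹ ^ 2 := by
    have him := sq_le_sq' (abs_le.1 (hS a ha).2).1 (abs_le.1 (hS a ha).2).2
    rw [normSq_apply, sub_re, sub_im, ha_re, hz]
    linarith
  have hnormSq_pos : 0 < normSq (z - a) :=
    normSq_pos.2 (sub_ne_zero.2 fun h ↦ by simp [h, ha_re] at hz_pos)
  rw [re_one_div_sub ha_re, hz, le_div_iff₀ hnormSq_pos]
  calc L / 5 * normSq (z - a) ≤ L / 5 * (5 * L⁻¹ ^ 2) := by gcongr
    _ = L⁻¹ := by field_simp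

theorem sum_le_re_smoothedValue_logDeriv_shiftedXi (hRH : RiemannHypothesis) {L : ℝ} (hL : 4 ≤ L)
    {z₀ : ℂ} (hz₀ : z₀.re = L⁻¹) (S : Finset ℂ)
    (hS : ∀ a ∈ S, shiftedXi a = 0 ∧ |a.im - z₀.im| ≤ L⁻¹) :
    ∑ a ∈ S, (analyticOrderNatAt shiftedXi a : ℝ) ≤
      40 * (smoothedValue L (logDeriv shiftedXi) z₀).re := by
  have hL_pos : 0 < L := by linarith
  have hz₀_pos : 0 < z₀.re := hz₀ ▸ inv_pos.2 hL_pos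
  set m : ℝ := ∑ a ∈ S, (analyticOrderNatAt shiftedXi a : ℝ)
  have hre_nonneg (u : ℝ) : 0 ≤ (logDeriv shiftedXi (z₀ + u * I)).re :=
    re_logDeriv_shiftedXi_nonneg hRH (by simpa using hz₀_pos)
  have hle (u : ℝ) : (Icc (-L⁻¹) L⁻¹).indicator (fun _ ↦ m * L / 80) u ≤
      (logDeriv shiftedXi (z₀ + u * I)).re * smoothingWeight L u := by
    refine indicator_apply_le' (fun hu ↦ ?_) fun _ ↦ ?_
    · have hu_abs := abs_le.2 hu
      have hsum : m * (L / 5) ≤ (logDeriv shiftedXi (z₀ + u * I)).re := by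
        refine sum_mul_le_re_logDeriv_shiftedXi hRH hL_pos (by simpa using hz₀) S
          fun a ha ↦ ⟨(hS a ha).1, ?_⟩
        have him : (z₀ + u * I).im - a.im = u - (a.im - z₀.im) := by
          simp
          ring
        rw [him, two_mul]
        exact (abs_sub _ _).trans (add_le_add hu_abs (hS a ha).2)
      calc m * L / 80 = m * (L / 5) * (1 / 16) := by ring
        _ ≤ _ := mul_le_mul hsum (one_sixteenth_le_smoothingWeight hL_pos hu_abs) (by norm_num)
            (hre_nonneg u)
    · exact mul_nonneg (hre_nonneg u) (smoothingWeight_nonneg L u)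
  obtain ⟨B, hB⟩ := exists_norm_logDeriv_shiftedXi_le hRH hz₀_pos
  have hdiff : ∀ z : ℂ, z₀.re ≤ z.re → DifferentiableAt ℂ (logDeriv shiftedXi) z :=
    fun z hz ↦ differentiableAt_logDeriv_shiftedXi hRH (hz₀_pos.trans_le hz)
  have hindicator : Integrable ((Icc (-L⁻¹) L⁻¹).indicator fun _ : ℝ ↦ m * L / 80) :=
    (integrable_indicator_iff measurableSet_Icc).2 (integrableOn_const (by simp) (by simp))
  have hmono := integral_mono hindicator (integrable_re_mul_smoothingWeight hL hB hdiff) hle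
  rw [← re_smoothedValue hL hB hdiff, integral_indicator measurableSet_Icc, setIntegral_const,
    Real.volume_real_Icc_of_le (by linarith [inv_pos.2 hL_pos]), smul_eq_mul] at hmono
  calc m = 40 * ((L⁻¹ - -L⁻¹) * (m * L / 80)) := by
        field_simp
        ring
    _ ≤ _ := by gcongr

theorem re_archimedeanPart_mul_smoothingWeight_le {C L : ℝ} {z₀ : ℂ} (hL : 4 ≤ L)
    (hC : ∀ z : ℂ, 0 ≤ z.re → ‖archimedeanPart z - Real.log (1 + ‖z‖) / 2‖ ≤ C)
    (hz₀ : z₀.re ∈ Icc 0 1) (u : ℝ) :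
    (archimedeanPart (z₀ + u * I)).re * smoothingWeight L u ≤
      (Real.log (2 + |z₀.im|) + C) * smoothingWeight L u + 4 * (1 + (L / 4 * u) ^ 2)⁻¹ := by
  set z : ℂ := z₀ + u * I with hz
  have hz_im : z.im = z₀.im + u := by simp [hz]
  have hz_re : z.re = z₀.re := by simp [hz]
  have hnorm : ‖z‖ ≤ 1 + |z₀.im| + |u| := by
    have h := Complex.norm_le_abs_re_add_abs_im z
    rw [hz_im, hz_re, abs_of_nonneg hz₀.1] at h
    linarith [abs_add_le z₀.im u, hz₀.2]
  have hlog_nonneg : 0 ≤ Real.log (1 + ‖z‖) := Real.log_nonneg (by linarith [norm_nonneg z])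
  have hlog : Real.log (1 + ‖z‖) ≤ Real.log (2 + |z₀.im|) + |u| :=
    calc Real.log (1 + ‖z‖) ≤ Real.log ((2 + |z₀.im|) * (1 + |u|)) := by
          gcongr
          nlinarith [mul_nonneg (abs_nonneg z₀.im) (abs_nonneg u), abs_nonneg u]
      _ = Real.log (2 + |z₀.im|) + Real.log (1 + |u|) :=
          Real.log_mul (by positivity) (by positivity)
      _ ≤ _ := by
          gcongr
          linarith [Real.log_le_sub_one_of_pos (by positivity : 0 < 1 + |u|)]
  have hre : (archimedeanPart z).re ≤ Real.log (1 + ‖z‖) / 2 + C := by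
    have h := (Complex.re_le_norm _).trans (hC z (hz_re ▸ hz₀.1))
    have hcast : ((Real.log (1 + ‖z‖) : ℂ) / 2).re = Real.log (1 + ‖z‖) / 2 := by
      exact_mod_cast ofReal_re _
    rw [sub_re, hcast] at h
    linarith
  calc (archimedeanPart z).re * smoothingWeight L u
      ≤ (Real.log (2 + |z₀.im|) + C + |u|) * smoothingWeight L u := by
        gcongr
        · exact smoothingWeight_nonneg L u
        · linarith
    _ = (Real.log (2 + |z₀.im|) + C) * smoothingWeight L u + |u| * smoothingWeight L u := by ring
    _ ≤ _ := by linarith [abs_mul_smoothingWeight_le hL u]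

theorem exists_re_smoothedValue_archimedeanPart_le :
    ∃ C > 0, ∀ L : ℝ, 4 ≤ L → ∀ z₀ : ℂ, z₀.re ∈ Icc 0 1 →
      (smoothedValue L archimedeanPart z₀).re ≤ C * ((Real.log (2 + |z₀.im|) + 1) / L) := by
  obtain ⟨C, hC⟩ := exists_norm_archimedeanPart_sub_le
  obtain ⟨B, hB⟩ := exists_norm_archimedeanPart_le
  have hC_nonneg : 0 ≤ C := (norm_nonneg _).trans (hC 0 le_rfl)
  refine ⟨(C + 2) * (16 * π), by positivity, fun L hL z₀ hz₀ ↦ ?_⟩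
  have hL_pos : 0 < L := by linarith
  have hlog_nonneg : 0 ≤ Real.log (2 + |z₀.im|) :=
    Real.log_nonneg (by linarith [abs_nonneg z₀.im])
  have hB' : ∀ z : ℂ, z₀.re ≤ z.re → ‖archimedeanPart z‖ ≤ B * (1 + ‖z‖) ^ 2 :=
    fun z hz ↦ hB z (hz₀.1.trans hz)
  have hdiff : ∀ z : ℂ, z₀.re ≤ z.re → DifferentiableAt ℂ archimedeanPart z :=
    fun z hz ↦ differentiableAt_archimedeanPart (hz₀.1.trans hz)
  have hweight := (integrable_smoothingWeight hL_pos).const_mul (Real.log (2 + |z₀.im|) + C)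
  have htail := (integrable_inv_one_add_scaled_sq hL_pos).const_mul 4
  calc (smoothedValue L archimedeanPart z₀).re
      ≤ ∫ u : ℝ, ((Real.log (2 + |z₀.im|) + C) * smoothingWeight L u +
          4 * (1 + (L / 4 * u) ^ 2)⁻¹) := by
        rw [re_smoothedValue hL hB' hdiff]
        exact integral_mono (integrable_re_mul_smoothingWeight hL hB' hdiff) (hweight.add htail)
          (re_archimedeanPart_mul_smoothingWeight_le hL hC hz₀)
    _ = (Real.log (2 + |z₀.im|) + C) * (∫ u, smoothingWeight L u) + 4 * (4 * π / L) := by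
        rw [integral_add hweight htail, integral_const_mul, integral_const_mul,
          integral_inv_one_add_scaled_sq hL_pos]
    _ ≤ (Real.log (2 + |z₀.im|) + C) * (16 * π / L) + 4 * (4 * π / L) := by
        gcongr
        exact integral_smoothingWeight_le hL_pos
    _ = (Real.log (2 + |z₀.im|) + C + 1) * (16 * π / L) := by ring
    _ ≤ ((C + 2) * (Real.log (2 + |z₀.im|) + 1)) * (16 * π / L) := by
        gcongr
        nlinarith
    _ = _ := by ring

/-! ### The prime side of the explicit formula -/

/-- The Fourier transform of `smoothingWeight L`, up to the normalisation of frequencies; it is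
supported in `[-L, L]`. -/
def smoothingTransform (L x : ℝ) : ℂ :=
  ∫ u : ℝ, Complex.exp (-(u * I) * x) * smoothingWeight L u

section Transform

variable {L : ℝ}

theorem norm_smoothingTransform_le (hL : 0 < L) (x : ℝ) :
    ‖smoothingTransform L x‖ ≤ 16 * π / L := by
  refine ((norm_integral_le_integral_norm _).trans_eq ?_).trans (integral_smoothingWeight_le hL)
  congr with u
  rw [norm_mul, Complex.norm_exp, Complex.norm_of_nonneg (smoothingWeight_nonneg L u)]
  simp

theorem norm_exp_mul_smoothingKernel_le (hL : 4 ≤ L) (x : ℝ) {w : ℂ} (hw : 0 ≤ w.re) :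
    ‖Complex.exp (-w * x) * smoothingKernel L w‖ ≤
      4 * Real.exp ((L - x) * w.re) / (1 + w.im ^ 2) := by
  have hkernel := norm_smoothingKernel_le_of_four_le hL w
  rw [abs_of_nonneg hw] at hkernel
  have hden : 1 + w.im ^ 2 ≤ (1 + ‖w‖ ^ 2) ^ 2 := by
    nlinarith [sq_im_le_sq_norm w, sq_nonneg ‖w‖]
  calc ‖Complex.exp (-w * x) * smoothingKernel L w‖
      ≤ Real.exp (-w.re * x) * (4 * Real.exp (L * w.re) / (1 + ‖w‖ ^ 2) ^ 2) := by
        rw [norm_mul, Complex.norm_exp, re_mul_ofReal, neg_re]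
        gcongr
    _ ≤ Real.exp (-w.re * x) * (4 * Real.exp (L * w.re) / (1 + w.im ^ 2)) := by gcongr
    _ = _ := by
        rw [show (L - x) * w.re = -w.re * x + L * w.re by ring, Real.exp_add]
        ring

section Shift

variable (hL : 4 ≤ L) (x : ℝ) {c : ℝ} (hc : 0 ≤ c)
include hL hc

omit hc in
theorem norm_exp_mul_smoothingKernel_le_of_re_le {w : ℂ} (hw : w ∈ re ⁻¹' Icc 0 c) :
    ‖Complex.exp (-w * x) * smoothingKernel L w‖ ≤
      4 * Real.exp (|L - x| * c) / (1 + w.im ^ 2) := by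
  refine (norm_exp_mul_smoothingKernel_le hL x hw.1).trans ?_
  have hexp : (L - x) * w.re ≤ |L - x| * c :=
    mul_le_mul (le_abs_self _) hw.2 hw.1 (abs_nonneg _)
  gcongr

omit hL hc in
theorem differentiable_exp_mul_smoothingKernel (L : ℝ) :
    Differentiable ℂ fun w : ℂ ↦ Complex.exp (-w * x) * smoothingKernel L w := by
  have := differentiable_smoothingKernel L
  fun_prop

theorem integrable_exp_mul_smoothingKernel :
    Integrable fun u : ℝ ↦ Complex.exp (-(c + u * I) * x) * smoothingKernel L (c + u * I) :=
  integrable_comp_verticalLine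
    (differentiable_exp_mul_smoothingKernel x L).differentiableOn
    (fun _ ↦ norm_exp_mul_smoothingKernel_le_of_re_le hL x) (right_mem_Icc.2 hc)

theorem integral_exp_mul_smoothingKernel :
    ∫ u : ℝ, Complex.exp (-(c + u * I) * x) * smoothingKernel L (c + u * I) =
      smoothingTransform L x := by
  have h := integral_comp_verticalLine_eq
    (differentiable_exp_mul_smoothingKernel x L).differentiableOn
    (fun _ ↦ norm_exp_mul_smoothingKernel_le_of_re_le hL x) hc
  rw [← h]
  simp [smoothingTransform, smoothingKernel_ofReal_mul_I]

theorem norm_smoothingTransform_le_exp :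
    ‖smoothingTransform L x‖ ≤ 4 * π * Real.exp ((L - x) * c) := by
  have hbound (u : ℝ) : ‖Complex.exp (-(c + u * I) * x) * smoothingKernel L (c + u * I)‖ ≤
      4 * Real.exp ((L - x) * c) * (1 + u ^ 2)⁻¹ := by
    simpa [div_eq_mul_inv] using
      norm_exp_mul_smoothingKernel_le hL x (w := c + u * I) (by simpa using hc)
  rw [← integral_exp_mul_smoothingKernel hL x hc]
  refine (norm_integral_le_of_norm_le (integrable_inv_one_add_sq.const_mul _)
    (Eventually.of_forall hbound)).trans_eq ?_
  rw [integral_const_mul, integral_univ_inv_one_add_sq]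
  ring

end Shift

theorem smoothingTransform_eq_zero (hL : 4 ≤ L) {x : ℝ} (hx : L < x) :
    smoothingTransform L x = 0 := by
  have hexp : Tendsto (fun c : ℝ ↦ 4 * π * Real.exp ((L - x) * c)) atTop (nhds (4 * π * 0)) :=
    (Real.tendsto_exp_atBot.comp
      (tendsto_id.const_mul_atTop_of_neg (sub_neg.2 hx))).const_mul (4 * π)
  have h := ge_of_tendsto hexp
    ((eventually_ge_atTop 0).mono fun c hc ↦ norm_smoothingTransform_le_exp hL x hc)
  simpa using h

end Transform

theorem LSeries_term_add (f : ℕ → ℂ) (s w : ℂ) (n : ℕ) :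
    LSeries.term f (s + w) n = LSeries.term f s n * Complex.exp (-w * Real.log n) := by
  rcases eq_or_ne n 0 with rfl | hn
  · simp
  have hn_cast : (n : ℂ) ≠ 0 := Nat.cast_ne_zero.2 hn
  rw [LSeries.term_of_ne_zero hn, LSeries.term_of_ne_zero hn, Complex.cpow_add _ _ hn_cast,
    Complex.cpow_def_of_ne_zero hn_cast w, ← natCast_log, neg_mul, Complex.exp_neg,
    mul_comm w, div_mul_eq_div_div, div_eq_mul_inv (_ / _)]

section LSeries

variable {L : ℝ} (hL : 4 ≤ L) {f : ℕ → ℂ} {s : ℂ}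
include hL

theorem integrable_LSeries_term_mul_smoothingKernel (n : ℕ) :
    Integrable fun u : ℝ ↦
      LSeries.term f (s + (1 + u * I)) n * smoothingKernel L (1 + u * I) := by
  simpa [LSeries_term_add f s, mul_assoc] using
    (integrable_exp_mul_smoothingKernel hL (Real.log n) zero_le_one).const_mul
      (LSeries.term f s n)

theorem integral_LSeries_term_mul_smoothingKernel (n : ℕ) :
    ∫ u : ℝ, LSeries.term f (s + (1 + u * I)) n * smoothingKernel L (1 + u * I) =
      LSeries.term f s n * smoothingTransform L (Real.log n) := by
  rw [← integral_exp_mul_smoothingKernel hL (Real.log n) zero_le_one, ← integral_const_mul]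
  simp [LSeries_term_add f s, mul_assoc]

theorem LSeries_term_mul_smoothingTransform_eq_zero {n : ℕ}
    (hn : n ∉ Finset.Ioc 0 ⌊Real.exp L⌋₊) :
    LSeries.term f s n * smoothingTransform L (Real.log n) = 0 := by
  rcases n.eq_zero_or_pos with rfl | hn_pos
  · simp
  have hexp : Real.exp L < n := Nat.lt_of_floor_lt (by simpa [hn_pos] using hn)
  rw [smoothingTransform_eq_zero hL
    ((Real.lt_log_iff_exp_lt (Nat.cast_pos.2 hn_pos)).2 hexp), mul_zero]

/-- Since `smoothingTransform L` has compact support, smoothing truncates the Dirichlet series. -/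
theorem integral_LSeries_mul_smoothingKernel (hf : LSeriesSummable f (s + 1)) :
    ∫ u : ℝ, LSeries f (s + (1 + u * I)) * smoothingKernel L (1 + u * I) =
      ∑ n ∈ Finset.Ioc 0 ⌊Real.exp L⌋₊,
        LSeries.term f s n * smoothingTransform L (Real.log n) := by
  have hnorm (n : ℕ) (u : ℝ) :
      ‖LSeries.term f (s + (1 + u * I)) n‖ = ‖LSeries.term f (s + 1) n‖ := by
    rw [LSeries.norm_term_eq, LSeries.norm_term_eq]
    simp
  have hsum := hasSum_integral_of_summable_integral_norm
    (integrable_LSeries_term_mul_smoothingKernel hL (f := f) (s := s)) (by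
      simp_rw [norm_mul, hnorm, integral_const_mul]
      exact hf.norm.mul_right _)
  simp only [tsum_mul_right, integral_LSeries_term_mul_smoothingKernel hL] at hsum
  exact hsum.unique
    (hasSum_sum_of_ne_finset_zero fun _ ↦ LSeries_term_mul_smoothingTransform_eq_zero hL)

theorem norm_inv_half_add_mul_smoothingKernel_le {z₀ : ℂ} (hz₀ : 0 ≤ z₀.re) (u : ℝ) :
    ‖1 / (z₀ + (1 + u * I) - 1 / 2) * smoothingKernel L (1 + u * I)‖ ≤
      24 * (Real.exp L / (1 + |z₀.im|)) * (1 + u ^ 2)⁻¹ := by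
  set z : ℂ := z₀ + (1 + u * I) - 1 / 2 with hz
  have hz_re : 1 / 2 ≤ |z.re| := by
    refine le_trans ?_ (le_abs_self _)
    norm_num [hz]
    linarith
  have hz_im : |z₀.im + u| = |z.im| := by norm_num [hz]
  have hz_norm : 1 + |z₀.im| ≤ 3 * (1 + |u|) * ‖z‖ := by
    have him : |z₀.im| ≤ |z.im| + |u| := by
      rw [← hz_im]
      simpa using abs_sub (z₀.im + u) u
    nlinarith [Complex.abs_re_le_norm z, Complex.abs_im_le_norm z, abs_nonneg u]
  have hz_pos : 0 < ‖z‖ := by linarith [Complex.abs_re_le_norm z]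
  have hkernel : ‖smoothingKernel L (1 + u * I)‖ ≤ 4 * Real.exp L / (1 + u ^ 2) ^ 2 := by
    refine (norm_smoothingKernel_le_of_mem_strip hL (w := 1 + u * I) (by simp)).trans ?_
    have hu_sq : u ^ 2 ≤ ‖1 + u * I‖ ^ 2 := by simpa using sq_im_le_sq_norm (1 + u * I)
    gcongr _ / (1 + ?_) ^ 2
  have hu : 1 + |u| ≤ 2 * (1 + u ^ 2) := by
    rw [← sq_abs u]
    nlinarith [sq_nonneg (|u| - 1)]
  calc ‖1 / z * smoothingKernel L (1 + u * I)‖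
      ≤ (6 * (1 + u ^ 2) / (1 + |z₀.im|)) * (4 * Real.exp L / (1 + u ^ 2) ^ 2) := by
        rw [norm_mul, norm_div, norm_one]
        refine mul_le_mul ?_ hkernel (norm_nonneg _) (by positivity)
        rw [div_le_div_iff₀ hz_pos (by positivity), one_mul]
        exact hz_norm.trans (mul_le_mul_of_nonneg_right (by linarith) hz_pos.le)
    _ = _ := by
        field_simp
        ring

section Pole

variable {z₀ : ℂ} (hz₀ : 0 ≤ z₀.re)
include hz₀

theorem integrable_inv_half_add_mul_smoothingKernel :
    Integrable fun u : ℝ ↦ 1 / (z₀ + (1 + u * I) - 1 / 2) * smoothingKernel L (1 + u * I) := by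
  have hne (u : ℝ) : z₀ + (1 + u * I) - 1 / 2 ≠ 0 := by
    intro h
    have hre := congrArg re h
    norm_num at hre
    linarith
  have hcont : Continuous fun u : ℝ ↦
      1 / (z₀ + (1 + u * I) - 1 / 2) * smoothingKernel L (1 + u * I) :=
    (continuous_const.div (by fun_prop) hne).mul
      ((differentiable_smoothingKernel L).continuous.comp (by fun_prop))
  exact (integrable_inv_one_add_sq.const_mul _).mono' hcont.aestronglyMeasurable
    (Eventually.of_forall (norm_inv_half_add_mul_smoothingKernel_le hL hz₀))

theorem norm_integral_inv_half_add_mul_smoothingKernel_le :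
    ‖∫ u : ℝ, 1 / (z₀ + (1 + u * I) - 1 / 2) * smoothingKernel L (1 + u * I)‖ ≤
      24 * π * (Real.exp L / (1 + |z₀.im|)) := by
  refine (norm_integral_le_of_norm_le (integrable_inv_one_add_sq.const_mul _)
    (Eventually.of_forall (norm_inv_half_add_mul_smoothingKernel_le hL hz₀))).trans_eq ?_
  rw [integral_const_mul, integral_univ_inv_one_add_sq]
  ring

end Pole

end LSeries

/-- The coefficients of `primePolynomial`. -/
def primeCoeff (L : ℝ) (n : ℕ) : ℂ :=
  LSeries.term (fun n ↦ (ArithmeticFunction.vonMangoldt n : ℂ)) (1 / 2 + (L⁻¹ : ℝ)) n *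
    smoothingTransform L (Real.log n)

/-- The Dirichlet polynomial of length `exp L`, supported on prime powers, by which the explicit
formula represents the zeros near height `t`; the phase `n ^ (-it)` is written as an exponential. -/
def primePolynomial (L t : ℝ) : ℂ :=
  ∑ n ∈ Finset.Ioc 0 ⌊Real.exp L⌋₊, primeCoeff L n * Complex.exp (-(t * I) * Real.log n)

section PrimePolynomial

variable (hRH : RiemannHypothesis) {L : ℝ} (hL : 4 ≤ L) {z₀ : ℂ} (hz₀ : z₀.re = L⁻¹)
include hL hz₀

theorem integral_LSeries_vonMangoldt_mul_smoothingKernel :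
    ∫ u : ℝ, LSeries (fun n ↦ (ArithmeticFunction.vonMangoldt n : ℂ)) (1 / 2 + z₀ + (1 + u * I)) *
      smoothingKernel L (1 + u * I) = primePolynomial L z₀.im := by
  have hre : 1 < (1 / 2 + z₀ + 1).re := by
    have := inv_pos.2 (by linarith : 0 < L)
    norm_num [hz₀]
    linarith
  rw [integral_LSeries_mul_smoothingKernel hL
    (ArithmeticFunction.LSeriesSummable_vonMangoldt hre), primePolynomial]
  refine Finset.sum_congr rfl fun n _ ↦ ?_
  have hbase : 1 / 2 + z₀ = 1 / 2 + (L⁻¹ : ℝ) + z₀.im * I := by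
    rw [add_assoc, ← hz₀, re_add_im]
  rw [hbase, LSeries_term_add, primeCoeff]
  ring

include hRH in
theorem smoothedValue_arithmeticPart :
    smoothedValue L arithmeticPart z₀ =
      (∫ u : ℝ, 1 / (z₀ + (1 + u * I) - 1 / 2) * smoothingKernel L (1 + u * I)) -
        primePolynomial L z₀.im := by
  have hz₀_pos : 0 < z₀.re := hz₀ ▸ inv_pos.2 (by linarith)
  obtain ⟨B, hB⟩ := exists_norm_arithmeticPart_le hRH hz₀_pos
  have hdiff : ∀ z : ℂ, z₀.re ≤ z.re → DifferentiableAt ℂ arithmeticPart z :=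
    fun z hz ↦ differentiableAt_arithmeticPart hRH (hz₀_pos.trans_le hz)
  have hpole := integrable_inv_half_add_mul_smoothingKernel hL hz₀_pos.le
  have harith := integrable_mul_smoothingKernel hL hB hdiff (right_mem_Icc.2 zero_le_one)
  rw [ofReal_one] at harith
  rw [smoothedValue_eq_integral_smoothingKernel hL hB hdiff, eq_sub_iff_add_eq',
    ← eq_sub_iff_add_eq, ← integral_LSeries_vonMangoldt_mul_smoothingKernel hL hz₀,
    ← integral_sub hpole harith]
  congr with u
  have hre : 1 / 2 < (z₀ + (1 + u * I)).re := by
    norm_num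
    linarith
  rw [arithmeticPart_eq_sub_LSeries hre, add_assoc]
  ring

include hRH in
theorem re_smoothedValue_arithmeticPart_le :
    (smoothedValue L arithmeticPart z₀).re ≤
      24 * π * (Real.exp L / (1 + |z₀.im|)) + ‖primePolynomial L z₀.im‖ := by
  have hz₀_nonneg : 0 ≤ z₀.re := hz₀ ▸ inv_nonneg.2 (by linarith)
  rw [smoothedValue_arithmeticPart hRH hL hz₀]
  refine (Complex.re_le_norm _).trans ((norm_sub_le _ _).trans ?_)
  gcongr
  exact norm_integral_inv_half_add_mul_smoothingKernel_le hL hz₀_nonneg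

end PrimePolynomial

/-- The majorant, given by the explicit formula, of the number of zeros within `1 / L` of height
`t`. -/
def localZerosBound (L t : ℝ) : ℝ :=
  (Real.log (2 + |t|) + 1) / L + Real.exp L / (1 + |t|) + ‖primePolynomial L t‖

theorem exists_sum_order_le_localZerosBound (hRH : RiemannHypothesis) :
    ∃ C > 0, ∀ L : ℝ, 4 ≤ L → ∀ t : ℝ, ∀ S : Finset ℂ,
      (∀ a ∈ S, shiftedXi a = 0 ∧ |a.im - t| ≤ L⁻¹) →
        ∑ a ∈ S, (analyticOrderNatAt shiftedXi a : ℝ) ≤ C * localZerosBound L t := by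
  obtain ⟨C, hC, harch⟩ := exists_re_smoothedValue_archimedeanPart_le
  refine ⟨40 * (C + 24 * π + 1), by positivity, fun L hL t S hS ↦ ?_⟩
  have hL_pos : 0 < L := by linarith
  have hz₀ : (⟨L⁻¹, t⟩ : ℂ).re = L⁻¹ := rfl
  have hsum := sum_le_re_smoothedValue_logDeriv_shiftedXi hRH hL hz₀ S hS
  have harch_le := harch L hL ⟨L⁻¹, t⟩ ⟨(inv_pos.2 hL_pos).le, inv_le_one_of_one_le₀ (by linarith)⟩
  have harith_le := re_smoothedValue_arithmeticPart_le hRH hL hz₀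
  rw [smoothedValue_logDeriv_shiftedXi hRH hL (hz₀ ▸ inv_pos.2 hL_pos), add_re] at hsum
  have hmain_nonneg : 0 ≤ (Real.log (2 + |t|) + 1) / L :=
    div_nonneg (by linarith [Real.log_nonneg (by linarith [abs_nonneg t] : 1 ≤ 2 + |t|)]) hL_pos.le
  calc ∑ a ∈ S, (analyticOrderNatAt shiftedXi a : ℝ)
      ≤ 40 * (C * ((Real.log (2 + |t|) + 1) / L) +
          (24 * π * (Real.exp L / (1 + |t|)) + ‖primePolynomial L t‖)) :=
        hsum.trans (by gcongr)
    _ ≤ 40 * ((C + 24 * π + 1) * ((Real.log (2 + |t|) + 1) / L) +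
          ((C + 24 * π + 1) * (Real.exp L / (1 + |t|)) +
            (C + 24 * π + 1) * ‖primePolynomial L t‖)) := by
        gcongr
        · linarith [Real.pi_pos]
        · linarith
        · exact le_mul_of_one_le_left (norm_nonneg _) (by linarith [Real.pi_pos])
    _ = _ := by
        rw [localZerosBound]
        ring

/-! ### Mean values of Dirichlet polynomials -/

section MeanValue

theorem norm_integral_exp_le {ω : ℝ} (hω : ω ≠ 0) (T : ℝ) :
    ‖∫ t in (0 : ℝ)..T, Complex.exp (-(t * I) * ω)‖ ≤ 2 / |ω| := by
  have hlinear (t : ℝ) : -(t * I) * (ω : ℂ) = -(ω * I) * t := by ring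
  simp_rw [hlinear]
  rw [integral_exp_mul_complex (by simp [hω]), norm_div,
    show ‖-(ω * I : ℂ)‖ = |ω| by simp]
  gcongr
  calc _ ≤ _ := norm_sub_le _ _
    _ = 2 := by
      rw [Complex.norm_exp, Complex.norm_exp]
      simp
      norm_num

variable {ι : Type*} (a : ι → ℂ) (ω : ι → ℝ) (S : Finset ι)

theorem norm_sq_sum_exp (t : ℝ) :
    ((‖∑ n ∈ S, a n * Complex.exp (-(t * I) * ω n)‖ ^ 2 : ℝ) : ℂ) =
      ∑ m ∈ S, ∑ n ∈ S, a m * starRingEnd ℂ (a n) *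
        Complex.exp (-(t * I) * (ω m - ω n : ℝ)) := by
  rw [← Complex.normSq_eq_norm_sq, ← Complex.mul_conj, map_sum, Finset.sum_mul_sum]
  refine Finset.sum_congr rfl fun m _ ↦ Finset.sum_congr rfl fun n _ ↦ ?_
  have hconj : starRingEnd ℂ (-(t * I) * ω n) = t * I * ω n := by simp
  have hexp : Complex.exp (-(t * I) * (ω m - ω n : ℝ)) =
      Complex.exp (-(t * I) * ω m) * Complex.exp (t * I * ω n) := by
    rw [← Complex.exp_add]
    push_cast
    ring_nf
  rw [map_mul, ← Complex.exp_conj, hconj, hexp]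
  ring

theorem integral_norm_sq_sum_exp (T : ℝ) :
    ((∫ t in (0 : ℝ)..T, ‖∑ n ∈ S, a n * Complex.exp (-(t * I) * ω n)‖ ^ 2 : ℝ) : ℂ) =
      ∑ m ∈ S, ∑ n ∈ S, a m * starRingEnd ℂ (a n) *
        ∫ t in (0 : ℝ)..T, Complex.exp (-(t * I) * (ω m - ω n : ℝ)) := by
  rw [← intervalIntegral.integral_ofReal]
  simp_rw [norm_sq_sum_exp]
  rw [intervalIntegral.integral_finsetSum]
  · refine Finset.sum_congr rfl fun m _ ↦ ?_
    rw [intervalIntegral.integral_finsetSum]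
    · simp_rw [intervalIntegral.integral_const_mul]
    · exact fun n _ ↦ Continuous.intervalIntegrable (by fun_prop) _ _
  · exact fun m _ ↦ Continuous.intervalIntegrable (by fun_prop) _ _

variable {ω S} in
theorem integral_norm_sq_sum_exp_le {δ : ℝ} (hδ : 0 < δ)
    (hω : (S : Set ι).Pairwise fun m n ↦ δ ≤ |ω m - ω n|) {T : ℝ} (hT : 0 ≤ T) :
    ∫ t in (0 : ℝ)..T, ‖∑ n ∈ S, a n * Complex.exp (-(t * I) * ω n)‖ ^ 2 ≤
      T * ∑ n ∈ S, ‖a n‖ ^ 2 + 2 / δ * (∑ n ∈ S, ‖a n‖) ^ 2 := by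
  classical
  have hterm : ∀ m ∈ S, ∀ n ∈ S, ‖a m * starRingEnd ℂ (a n) *
      ∫ t in (0 : ℝ)..T, Complex.exp (-(t * I) * (ω m - ω n : ℝ))‖ ≤
        (if m = n then T * ‖a m‖ ^ 2 else 0) + 2 / δ * (‖a m‖ * ‖a n‖) := by
    intro m hm n hn
    rw [norm_mul, norm_mul, RCLike.norm_conj, mul_comm (_ * _)]
    split_ifs with hmn
    · subst hmn
      have hdiag : ‖∫ t in (0 : ℝ)..T, Complex.exp (-(t * I) * (ω m - ω m : ℝ))‖ = T := by
        simp [abs_of_nonneg hT]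
      rw [hdiag, ← sq]
      exact le_add_of_nonneg_right (by positivity)
    · have hgap := hω hm hn hmn
      rw [zero_add]
      gcongr
      refine (norm_integral_exp_le (abs_pos.1 (hδ.trans_le hgap)) T).trans ?_
      gcongr
  have hnonneg : 0 ≤ ∫ t in (0 : ℝ)..T, ‖∑ n ∈ S, a n * Complex.exp (-(t * I) * ω n)‖ ^ 2 :=
    intervalIntegral.integral_nonneg hT fun _ _ ↦ by positivity
  rw [← Complex.norm_of_nonneg hnonneg, integral_norm_sq_sum_exp]
  calc _ ≤ ∑ m ∈ S, ∑ n ∈ S,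
          ((if m = n then T * ‖a m‖ ^ 2 else 0) + 2 / δ * (‖a m‖ * ‖a n‖)) :=
        norm_sum_le_of_le _ fun m hm ↦ norm_sum_le_of_le _ (hterm m hm)
    _ = _ := by
        simp_rw [Finset.sum_add_distrib, Finset.sum_ite_eq, ← Finset.mul_sum, ← Finset.sum_mul,
          ← sq, Finset.sum_ite_mem, Finset.inter_self, ← Finset.mul_sum]

end MeanValue

section PrimePolynomial

theorem inv_le_abs_log_sub_log {m n : ℕ} {N : ℝ} (hm : 0 < m) (hn : 0 < n) (hmn : m ≠ n)
    (hmN : m ≤ N) (hnN : n ≤ N) : N⁻¹ ≤ |Real.log m - Real.log n| := by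
  wlog hlt : m < n generalizing m n
  · rw [abs_sub_comm]
    exact this hn hm hmn.symm hnN hmN (by lia)
  have hm₀ : (0 : ℝ) < m := mod_cast hm
  have hn₀ : (0 : ℝ) < n := mod_cast hn
  have hle : (m : ℝ) + 1 ≤ n := mod_cast hlt
  calc N⁻¹ ≤ (n : ℝ)⁻¹ := by gcongr
    _ ≤ 1 - m / n := by
      rw [one_sub_div hn₀.ne', inv_eq_one_div]
      gcongr
      linarith
    _ ≤ -Real.log (m / n) := by
      linarith [Real.log_le_sub_one_of_pos (div_pos hm₀ hn₀)]
    _ = -(Real.log m - Real.log n) := by rw [Real.log_div hm₀.ne' hn₀.ne']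
    _ ≤ _ := neg_le_abs _

theorem natCast_div_two_le_mul_natDiv {N n : ℕ} (hn : 0 < n) (hnN : n ≤ N) :
    (N : ℝ) / 2 / n ≤ (N / n : ℕ) := by
  have hlt : (N : ℝ) / n < (N / n : ℕ) + 1 := by
    rw [← Nat.floor_div_eq_div (K := ℝ)]
    exact Nat.lt_floor_add_one _
  have hone : (1 : ℝ) ≤ (N / n : ℕ) := mod_cast Nat.div_pos hnN hn
  rw [div_right_comm]
  linarith

theorem sum_vonMangoldt_mul_natDiv_le (N : ℕ) :
    ∑ n ∈ Finset.Ioc 0 N, ArithmeticFunction.vonMangoldt n * (N / n : ℕ) ≤ N * Real.log N := by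
  rw [← ArithmeticFunction.sum_Ioc_mul_zeta_eq_sum, ArithmeticFunction.vonMangoldt_mul_zeta]
  have hlog : ∀ n ∈ Finset.Ioc 0 N, ArithmeticFunction.log n ≤ Real.log N := by
    intro n hn
    rw [Finset.mem_Ioc] at hn
    exact Real.log_le_log (mod_cast hn.1) (mod_cast hn.2)
  exact (Finset.sum_le_card_nsmul _ _ _ hlog).trans_eq (by simp)

theorem sum_vonMangoldt_div_le (N : ℕ) :
    ∑ n ∈ Finset.Ioc 0 N, ArithmeticFunction.vonMangoldt n / n ≤ 2 * Real.log N := by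
  obtain rfl | hN := Nat.eq_zero_or_pos N
  · simp
  have hle : (N / 2 : ℝ) * ∑ n ∈ Finset.Ioc 0 N, ArithmeticFunction.vonMangoldt n / n ≤
      N * Real.log N := by
    refine le_trans ?_ (sum_vonMangoldt_mul_natDiv_le N)
    rw [Finset.mul_sum]
    refine Finset.sum_le_sum fun n hn ↦ ?_
    rw [Finset.mem_Ioc] at hn
    rw [mul_div_left_comm]
    have := natCast_div_two_le_mul_natDiv hn.1 hn.2
    have := ArithmeticFunction.vonMangoldt_nonneg (n := n)
    gcongr
  refine le_of_mul_le_mul_left ?_ (by positivity : (0 : ℝ) < N / 2)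
  linarith

variable {L : ℝ}

theorem norm_sq_primeCoeff_le (hL : 0 < L) (n : ℕ) :
    ‖primeCoeff L n‖ ^ 2 ≤ ArithmeticFunction.vonMangoldt n ^ 2 / n * (16 * π / L) ^ 2 := by
  obtain rfl | hn := Nat.eq_zero_or_pos n
  · simp [primeCoeff]
  have hn₁ : (1 : ℝ) ≤ n := mod_cast hn
  have hterm : ‖LSeries.term (fun n ↦ (ArithmeticFunction.vonMangoldt n : ℂ))
      (1 / 2 + (L⁻¹ : ℝ)) n‖ ≤ ArithmeticFunction.vonMangoldt n / √n := by
    rw [LSeries.norm_term_eq, if_neg hn.ne', Real.sqrt_eq_rpow,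
      Complex.norm_of_nonneg ArithmeticFunction.vonMangoldt_nonneg]
    have hre : (1 / 2 : ℝ) ≤ (1 / 2 + (L⁻¹ : ℝ) : ℂ).re := by
      simpa using hL.le
    have := ArithmeticFunction.vonMangoldt_nonneg (n := n)
    gcongr
  calc ‖primeCoeff L n‖ ^ 2
      ≤ (ArithmeticFunction.vonMangoldt n / √n * (16 * π / L)) ^ 2 := by
        rw [primeCoeff, norm_mul]
        gcongr
        exact norm_smoothingTransform_le hL _
    _ = _ := by rw [mul_pow, div_pow, Real.sq_sqrt n.cast_nonneg]

theorem norm_primeCoeff_le (hL : 0 < L) (n : ℕ) :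
    ‖primeCoeff L n‖ ≤ ArithmeticFunction.vonMangoldt n * (16 * π / L) := by
  have hΛ := ArithmeticFunction.vonMangoldt_nonneg (n := n)
  obtain rfl | hn := Nat.eq_zero_or_pos n
  · simp [primeCoeff]
  have hn₁ : (1 : ℝ) ≤ n := mod_cast hn
  refine le_of_sq_le_sq ((norm_sq_primeCoeff_le hL n).trans ?_) (by positivity)
  rw [mul_pow]
  gcongr
  exact div_le_self (sq_nonneg _) hn₁

theorem vonMangoldt_le_of_le_exp {n : ℕ} (hn : 0 < n) (hnL : n ≤ Real.exp L) :
    ArithmeticFunction.vonMangoldt n ≤ L :=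
  ArithmeticFunction.vonMangoldt_le_log.trans
    ((Real.log_le_iff_le_exp (mod_cast hn)).2 hnL)

theorem pos_and_le_exp_of_mem_Ioc {n : ℕ} (hn : n ∈ Finset.Ioc 0 ⌊Real.exp L⌋₊) :
    0 < n ∧ (n : ℝ) ≤ Real.exp L := by
  rw [Finset.mem_Ioc, Nat.le_floor_iff (Real.exp_nonneg _)] at hn
  exact hn

theorem sum_norm_primeCoeff_le (hL : 0 < L) :
    ∑ n ∈ Finset.Ioc 0 ⌊Real.exp L⌋₊, ‖primeCoeff L n‖ ≤ 16 * π * Real.exp L := by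
  have hcoeff : ∀ n ∈ Finset.Ioc 0 ⌊Real.exp L⌋₊, ‖primeCoeff L n‖ ≤ 16 * π := by
    intro n hn
    obtain ⟨hn, hnL⟩ := pos_and_le_exp_of_mem_Ioc hn
    have := vonMangoldt_le_of_le_exp hn hnL
    calc ‖primeCoeff L n‖ ≤ ArithmeticFunction.vonMangoldt n * (16 * π / L) :=
          norm_primeCoeff_le hL n
      _ ≤ L * (16 * π / L) := by gcongr
      _ = 16 * π := by field_simp
  refine (Finset.sum_le_card_nsmul _ _ _ hcoeff).trans ?_
  rw [Nat.card_Ioc, tsub_zero, nsmul_eq_mul, mul_comm]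
  gcongr
  exact Nat.floor_le (Real.exp_nonneg _)

theorem sum_norm_sq_primeCoeff_le (hL : 0 < L) :
    ∑ n ∈ Finset.Ioc 0 ⌊Real.exp L⌋₊, ‖primeCoeff L n‖ ^ 2 ≤ 2 * (16 * π) ^ 2 := by
  have hcoeff : ∀ n ∈ Finset.Ioc 0 ⌊Real.exp L⌋₊, ‖primeCoeff L n‖ ^ 2 ≤
      L * (16 * π / L) ^ 2 * (ArithmeticFunction.vonMangoldt n / n) := by
    intro n hn
    obtain ⟨hn, hnL⟩ := pos_and_le_exp_of_mem_Ioc hn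
    have := ArithmeticFunction.vonMangoldt_nonneg (n := n)
    calc ‖primeCoeff L n‖ ^ 2
        ≤ ArithmeticFunction.vonMangoldt n ^ 2 / n * (16 * π / L) ^ 2 :=
          norm_sq_primeCoeff_le hL n
      _ = ArithmeticFunction.vonMangoldt n *
            ((16 * π / L) ^ 2 * (ArithmeticFunction.vonMangoldt n / n)) := by ring
      _ ≤ L * ((16 * π / L) ^ 2 * (ArithmeticFunction.vonMangoldt n / n)) := by
          gcongr
          exact vonMangoldt_le_of_le_exp hn hnL
      _ = _ := by ring
  have hlog : Real.log ⌊Real.exp L⌋₊ ≤ L := by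
    refine (Real.log_le_iff_le_exp ?_).2 (Nat.floor_le (Real.exp_nonneg _))
    exact_mod_cast Nat.floor_pos.2 (Real.one_le_exp hL.le)
  calc _ ≤ ∑ n ∈ Finset.Ioc 0 ⌊Real.exp L⌋₊,
          L * (16 * π / L) ^ 2 * (ArithmeticFunction.vonMangoldt n / n) :=
        Finset.sum_le_sum hcoeff
    _ ≤ L * (16 * π / L) ^ 2 * (2 * L) := by
        rw [← Finset.mul_sum]
        gcongr
        exact (sum_vonMangoldt_div_le _).trans (by gcongr)
    _ = _ := by field_simp

theorem exists_integral_norm_sq_primePolynomial_le :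
    ∃ C > 0, ∀ L : ℝ, 0 < L → ∀ T : ℝ, 0 ≤ T →
      ∫ t in (0 : ℝ)..T, ‖primePolynomial L t‖ ^ 2 ≤ C * (T + Real.exp (3 * L)) := by
  refine ⟨2 * (16 * π) ^ 2, by positivity, fun L hL T hT ↦ ?_⟩
  have hgap : (Finset.Ioc 0 ⌊Real.exp L⌋₊ : Set ℕ).Pairwise
      fun m n ↦ (Real.exp L)⁻¹ ≤ |Real.log m - Real.log n| := by
    intro m hm n hn hmn
    obtain ⟨hm, hmL⟩ := pos_and_le_exp_of_mem_Ioc hm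
    obtain ⟨hn, hnL⟩ := pos_and_le_exp_of_mem_Ioc hn
    exact inv_le_abs_log_sub_log hm hn hmn hmL hnL
  calc ∫ t in (0 : ℝ)..T, ‖primePolynomial L t‖ ^ 2
      ≤ T * ∑ n ∈ Finset.Ioc 0 ⌊Real.exp L⌋₊, ‖primeCoeff L n‖ ^ 2 +
          2 / (Real.exp L)⁻¹ * (∑ n ∈ Finset.Ioc 0 ⌊Real.exp L⌋₊, ‖primeCoeff L n‖) ^ 2 :=
        integral_norm_sq_sum_exp_le _ (by positivity) hgap hT
    _ ≤ T * (2 * (16 * π) ^ 2) + 2 / (Real.exp L)⁻¹ * (16 * π * Real.exp L) ^ 2 := by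
        gcongr
        exacts [sum_norm_sq_primeCoeff_le hL, sum_norm_primeCoeff_le hL]
    _ = 2 * (16 * π) ^ 2 * (T + Real.exp (3 * L)) := by
        rw [show 3 * L = L + L + L by ring, Real.exp_add, Real.exp_add, div_inv_eq_mul]
        ring

end PrimePolynomial

/-! ### Pairs of close zeros -/

/-- The finite set of zeros `ρ` with `0 < Im ρ ≤ T`, each listed once. -/
def zerosFinset (T : ℝ) : Finset ℂ :=
  (zerosUpTo_finite T).toFinset

theorem mem_zerosFinset {T : ℝ} {ρ : ℂ} :
    ρ ∈ zerosFinset T ↔ ZetaNontrivZero ρ ∧ 0 < ρ.im ∧ ρ.im ≤ T :=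
  (zerosUpTo_finite T).mem_toFinset

theorem exists_sum_zetaMult_le_localZerosBound (hRH : RiemannHypothesis) :
    ∃ C > 0, ∀ L, 4 ≤ L → ∀ T t : ℝ,
      ∑ ρ ∈ zerosFinset T with |ρ.im - t| ≤ L⁻¹, (zetaMult ρ : ℝ) ≤
        C * localZerosBound L t := by
  obtain ⟨C, hC, hbound⟩ := exists_sum_order_le_localZerosBound hRH
  refine ⟨C, hC, fun L hL T t ↦ ?_⟩
  set Z := (zerosFinset T).filter fun ρ ↦ |ρ.im - t| ≤ L⁻¹
  have hZ {ρ : ℂ} (hρ : ρ ∈ Z) : ZetaNontrivZero ρ ∧ 0 < ρ.im ∧ |ρ.im - t| ≤ L⁻¹ := by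
    rw [Finset.mem_filter, mem_zerosFinset] at hρ
    exact ⟨hρ.1.1, hρ.1.2.1, hρ.2⟩
  have hshift : ∀ a ∈ Z.image (· - 1 / 2), shiftedXi a = 0 ∧ |a.im - t| ≤ L⁻¹ := by
    simp only [Finset.forall_mem_image]
    intro ρ hρ
    refine ⟨shiftedXi_eq_zero_iff.2 ?_, ?_⟩
    · simpa using (hZ hρ).1
    · simpa using (hZ hρ).2.2
  refine le_of_eq_of_le ?_ (hbound L hL t _ hshift)
  rw [Finset.sum_image (sub_left_injective.injOn)]
  refine Finset.sum_congr rfl fun ρ hρ ↦ ?_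
  obtain ⟨hzero, him, -⟩ := hZ hρ
  rw [analyticOrderNatAt_shiftedXi hzero.2.1]
  rintro rfl
  simp at him

section Bins

theorem summable_one_div_one_add_intCast_sq : Summable fun i : ℤ ↦ 1 / (1 + (i : ℝ) ^ 2) := by
  refine Summable.of_norm_bounded_eventually
    (Real.summable_one_div_int_pow.2 one_lt_two) ?_
  filter_upwards [(Set.finite_singleton (0 : ℤ)).compl_mem_cofinite] with i hi
  have : (i : ℝ) ≠ 0 := mod_cast hi
  rw [Real.norm_of_nonneg (by positivity)]
  gcongr
  linarith

theorem exists_sum_one_div_one_add_sub_sq_le :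
    ∃ K > 0, ∀ (J : Finset ℕ) (j : ℕ), ∑ k ∈ J, 1 / (1 + ((j : ℝ) - k) ^ 2) ≤ K := by
  refine ⟨∑' i : ℤ, 1 / (1 + (i : ℝ) ^ 2),
    summable_one_div_one_add_intCast_sq.tsum_pos (fun _ ↦ by positivity) 0 (by simp),
    fun J j ↦ ?_⟩
  have himage : ∑ k ∈ J, 1 / (1 + ((j : ℝ) - k) ^ 2) =
      ∑ i ∈ J.image (fun k : ℕ ↦ (j : ℤ) - k), 1 / (1 + (i : ℝ) ^ 2) := by
    rw [Finset.sum_image fun _ _ _ _ h ↦ by simpa using h]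
    simp
  rw [himage]
  exact summable_one_div_one_add_intCast_sq.sum_le_tsum _ fun _ _ ↦ by positivity

theorem one_add_natFloor_sub_sq_le {x y : ℝ} (hx : 0 ≤ x) (hy : 0 ≤ y) :
    1 + ((⌊x⌋₊ : ℝ) - ⌊y⌋₊) ^ 2 ≤ 3 * (1 + (x - y) ^ 2) := by
  have hsq : ((⌊x⌋₊ : ℝ) - ⌊y⌋₊ - (x - y)) ^ 2 ≤ 1 := by
    rw [sq_le_one_iff_abs_le_one, abs_le]
    constructor <;>
      linarith [Nat.floor_le hx, Nat.floor_le hy, Nat.lt_floor_add_one x, Nat.lt_floor_add_one y]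
  nlinarith [sq_nonneg ((⌊x⌋₊ : ℝ) - ⌊y⌋₊ - 2 * (x - y))]

/-- Schur's test for a symmetric kernel. -/
theorem sum_sum_mul_le_of_sum_le {ι : Type*} {s : Finset ι} {κ : ι → ι → ℝ} {K : ℝ}
    (hκ : ∀ i j, 0 ≤ κ i j) (hsymm : ∀ i j, κ i j = κ j i)
    (hK : ∀ i ∈ s, ∑ j ∈ s, κ i j ≤ K) (b : ι → ℝ) :
    ∑ i ∈ s, ∑ j ∈ s, b i * b j * κ i j ≤ K * ∑ i ∈ s, b i ^ 2 := by
  have hrow : ∑ i ∈ s, ∑ j ∈ s, b i ^ 2 * κ i j ≤ K * ∑ i ∈ s, b i ^ 2 := by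
    rw [Finset.mul_sum]
    refine Finset.sum_le_sum fun i hi ↦ ?_
    rw [← Finset.mul_sum, mul_comm]
    gcongr
    exact hK i hi
  have hcol : ∑ i ∈ s, ∑ j ∈ s, b j ^ 2 * κ i j = ∑ i ∈ s, ∑ j ∈ s, b i ^ 2 * κ i j := by
    rw [Finset.sum_comm]
    simp_rw [hsymm]
  calc _ ≤ ∑ i ∈ s, ∑ j ∈ s, (b i ^ 2 * κ i j + b j ^ 2 * κ i j) / 2 := by
        refine Finset.sum_le_sum fun i _ ↦ Finset.sum_le_sum fun j _ ↦ ?_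
        rw [← add_mul, mul_div_right_comm]
        have := hκ i j
        gcongr
        linarith [two_mul_le_add_sq (b i) (b j)]
    _ = ∑ i ∈ s, ∑ j ∈ s, b i ^ 2 * κ i j := by
        simp_rw [← Finset.sum_div, Finset.sum_add_distrib]
        rw [hcol, add_self_div_two]
    _ ≤ _ := hrow

theorem sum_sum_mul_comp_eq_sum_sum_fiber {ι κ : Type*} [DecidableEq κ] {s : Finset ι}
    {t : Finset κ} {g : ι → κ} (hg : ∀ i ∈ s, g i ∈ t) (m : ι → ℝ) (φ : κ → κ → ℝ) :
    ∑ i ∈ s, ∑ i' ∈ s, m i * m i' * φ (g i) (g i') =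
      ∑ j ∈ t, ∑ k ∈ t, (∑ i ∈ s with g i = j, m i) * (∑ i ∈ s with g i = k, m i) * φ j k := by
  have hfiber (F : κ → ℝ) :
      ∑ i ∈ s, m i * F (g i) = ∑ j ∈ t, (∑ i ∈ s with g i = j, m i) * F j := by
    rw [← Finset.sum_fiberwise_of_maps_to hg]
    refine Finset.sum_congr rfl fun j _ ↦ ?_
    rw [Finset.sum_mul]
    refine Finset.sum_congr rfl fun i hi ↦ ?_
    rw [(Finset.mem_filter.1 hi).2]
  simp_rw [mul_assoc, ← Finset.mul_sum, hfiber (φ _)]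
  exact hfiber fun j ↦ ∑ k ∈ t, (∑ i ∈ s with g i = k, m i) * φ j k

theorem exists_sum_sum_mul_div_one_add_sq_le :
    ∃ K > 0, ∀ {ι : Type*} {s : Finset ι} {m x : ι → ℝ} {J : Finset ℕ}, (∀ i, 0 ≤ m i) →
      (∀ i ∈ s, 0 ≤ x i) → (∀ i ∈ s, ⌊x i⌋₊ ∈ J) →
      ∑ i ∈ s, ∑ i' ∈ s, m i * m i' / (1 + (x i - x i') ^ 2) ≤
        K * ∑ j ∈ J, (∑ i ∈ s with ⌊x i⌋₊ = j, m i) ^ 2 := by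
  obtain ⟨K, hK, hrow⟩ := exists_sum_one_div_one_add_sub_sq_le
  refine ⟨3 * K, by positivity, fun {ι s m x J} hm hx hJ ↦ ?_⟩
  have hfloor : ∀ i ∈ s, ∀ i' ∈ s, m i * m i' / (1 + (x i - x i') ^ 2) ≤
      3 * (m i * m i' * (1 / (1 + ((⌊x i⌋₊ : ℝ) - ⌊x i'⌋₊) ^ 2))) := by
    intro i hi i' hi'
    have := mul_nonneg (hm i) (hm i')
    rw [mul_one_div, ← mul_div_assoc, div_le_div_iff₀ (by positivity) (by positivity)]
    linarith [mul_le_mul_of_nonneg_left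
      (one_add_natFloor_sub_sq_le (hx i hi) (hx i' hi')) this]
  calc _ ≤ ∑ i ∈ s, ∑ i' ∈ s, 3 * (m i * m i' * (1 / (1 + ((⌊x i⌋₊ : ℝ) - ⌊x i'⌋₊) ^ 2))) :=
        Finset.sum_le_sum fun i hi ↦ Finset.sum_le_sum fun i' hi' ↦ hfloor i hi i' hi'
    _ = 3 * ∑ i ∈ s, ∑ i' ∈ s, m i * m i' * (1 / (1 + ((⌊x i⌋₊ : ℝ) - ⌊x i'⌋₊) ^ 2)) := by
        simp_rw [Finset.mul_sum]
    _ ≤ _ := by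
        rw [sum_sum_mul_comp_eq_sum_sum_fiber hJ m fun j k : ℕ ↦ 1 / (1 + ((j : ℝ) - k) ^ 2),
          mul_assoc]
        gcongr
        refine sum_sum_mul_le_of_sum_le (fun _ _ ↦ by positivity) (fun j k ↦ ?_)
          (fun j _ ↦ hrow J j) _
        rw [← neg_sub, neg_sq]

end Bins

section Integral

theorem sum_le_mul_integral {L : ℝ} (hL : 0 < L) {g : ℝ → ℝ} (hg : Continuous g) {c : ℕ → ℝ}
    (hc : ∀ j : ℕ, ∀ t ∈ Icc (j / L) ((j + 1 : ℕ) / L), c j ≤ g t) (J : ℕ) :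
    ∑ j ∈ Finset.range J, c j ≤ L * ∫ t in (0 : ℝ)..J / L, g t := by
  have hstep (j : ℕ) : c j ≤ L * ∫ t in (j / L)..((j + 1 : ℕ) / L), g t := by
    have hle : (j : ℝ) / L ≤ (j + 1 : ℕ) / L := by
      gcongr
      exact j.le_succ
    have hmono := intervalIntegral.integral_mono_on hle (f := fun _ ↦ c j) (μ := volume)
      (continuous_const.intervalIntegrable _ _) (hg.intervalIntegrable _ _) (hc j)
    have hlength : ((j + 1 : ℕ) / L - j / L : ℝ) = L⁻¹ := by
      push_cast
      ring
    rwa [intervalIntegral.integral_const, smul_eq_mul, hlength, inv_mul_le_iff₀ hL] at hmono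
  calc ∑ j ∈ Finset.range J, c j
      ≤ L * ∑ j ∈ Finset.range J, ∫ t in (j / L)..((j + 1 : ℕ) / L), g t := by
        rw [Finset.mul_sum]
        exact Finset.sum_le_sum fun j _ ↦ hstep j
    _ = _ := by
        rw [intervalIntegral.sum_integral_adjacent_intervals (a := fun j : ℕ ↦ j / L)
          fun _ _ ↦ hg.intervalIntegrable _ _]
        simp

theorem continuous_primePolynomial (L : ℝ) : Continuous (primePolynomial L) := by
  unfold primePolynomial
  fun_prop

theorem continuous_localZerosBound (L : ℝ) : Continuous (localZerosBound L) := by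
  have := continuous_primePolynomial L
  have hlog (t : ℝ) : 2 + |t| ≠ 0 := by positivity
  have hden (t : ℝ) : 1 + |t| ≠ 0 := by positivity
  unfold localZerosBound
  fun_prop (disch := assumption)

theorem localZerosBound_sq_le {L t : ℝ} (hL : 4 ≤ L) (ht : t ∈ Icc 0 (Real.exp (8 * L) + 1)) :
    localZerosBound L t ^ 2 ≤
      3 * (81 + Real.exp (2 * L) * (1 + t ^ 2)⁻¹ + ‖primePolynomial L t‖ ^ 2) := by
  have hlog : Real.log (2 + |t|) ≤ 8 * L + 1 := by
    rw [Real.log_le_iff_le_exp (by positivity), abs_of_nonneg ht.1, Real.exp_add]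
    nlinarith [ht.2, Real.add_one_le_exp (8 * L), Real.add_one_le_exp (1 : ℝ)]
  have hlog₀ : 0 ≤ Real.log (2 + |t|) := Real.log_nonneg (by linarith [abs_nonneg t])
  have harch : ((Real.log (2 + |t|) + 1) / L) ^ 2 ≤ 81 := by
    rw [show (81 : ℝ) = 9 ^ 2 by norm_num]
    gcongr
    rw [div_le_iff₀ (by linarith)]
    linarith
  have hpole : (Real.exp L / (1 + |t|)) ^ 2 ≤ Real.exp (2 * L) * (1 + t ^ 2)⁻¹ := by
    rw [div_pow, ← Real.exp_nat_mul, Nat.cast_ofNat, div_eq_mul_inv]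
    gcongr
    nlinarith [abs_nonneg t, sq_abs t]
  have hsq (a b c : ℝ) : (a + b + c) ^ 2 ≤ 3 * (a ^ 2 + b ^ 2 + c ^ 2) := by
    nlinarith [sq_nonneg (a - b), sq_nonneg (b - c), sq_nonneg (a - c)]
  refine (hsq _ _ _).trans ?_
  gcongr

theorem exists_integral_localZerosBound_sq_le : ∃ C > 0, ∀ L, 4 ≤ L →
    ∫ t in (0 : ℝ)..Real.exp (8 * L) + 1, localZerosBound L t ^ 2 ≤ C * Real.exp (8 * L) := by
  obtain ⟨C, hC, hprime⟩ := exists_integral_norm_sq_primePolynomial_le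
  refine ⟨3 * (2 * 81 + π + 3 * C), by positivity, fun L hL ↦ ?_⟩
  set T := Real.exp (8 * L) with hT
  have hT₁ : 1 ≤ T := Real.one_le_exp (by linarith)
  have harch : IntervalIntegrable (fun _ : ℝ ↦ (81 : ℝ)) volume 0 (T + 1) :=
    continuous_const.intervalIntegrable _ _
  have hpole : IntervalIntegrable (fun t : ℝ ↦ Real.exp (2 * L) * (1 + t ^ 2)⁻¹) volume 0
      (T + 1) :=
    integrable_inv_one_add_sq.intervalIntegrable.const_mul _
  have hpoly : IntervalIntegrable (fun t : ℝ ↦ ‖primePolynomial L t‖ ^ 2) volume 0 (T + 1) :=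
    ((continuous_primePolynomial L).norm.pow 2).intervalIntegrable _ _
  calc ∫ t in (0 : ℝ)..T + 1, localZerosBound L t ^ 2
      ≤ ∫ t in (0 : ℝ)..T + 1,
          3 * (81 + Real.exp (2 * L) * (1 + t ^ 2)⁻¹ + ‖primePolynomial L t‖ ^ 2) :=
        intervalIntegral.integral_mono_on (by linarith)
          (((continuous_localZerosBound L).pow 2).intervalIntegrable _ _)
          (((harch.add hpole).add hpoly).const_mul 3) fun _ ↦ localZerosBound_sq_le hL
    _ = 3 * ((T + 1) * 81 + Real.exp (2 * L) * Real.arctan (T + 1) +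
          ∫ t in (0 : ℝ)..T + 1, ‖primePolynomial L t‖ ^ 2) := by
        rw [intervalIntegral.integral_const_mul,
          intervalIntegral.integral_add (harch.add hpole) hpoly,
          intervalIntegral.integral_add harch hpole, intervalIntegral.integral_const_mul,
          integral_inv_one_add_sq]
        simp
    _ ≤ 3 * ((T + T) * 81 + T * π + C * (T + T + T)) := by
        have harctan : Real.arctan (T + 1) ≤ π := by
          linarith [Real.arctan_lt_pi_div_two (T + 1), Real.pi_pos]
        have hexp {c : ℝ} (hc : c ≤ 8) : Real.exp (c * L) ≤ T := by
          rw [hT]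
          gcongr
        gcongr
        · exact hexp (by norm_num)
        · refine (hprime L (by linarith) (T + 1) (by linarith)).trans ?_
          gcongr
          exact hexp (by norm_num)
    _ = _ := by ring

end Integral

theorem abs_sub_le_inv_of_natFloor_mul_eq {L x t : ℝ} {j : ℕ} (hL : 0 < L) (hx : 0 ≤ x)
    (hj : ⌊x * L⌋₊ = j) (ht : t ∈ Icc (j / L) ((j + 1 : ℕ) / L)) : |x - t| ≤ L⁻¹ := by
  rw [Nat.floor_eq_iff (by positivity), ← div_le_iff₀ hL, ← lt_div_iff₀ hL, ← Nat.cast_succ] at hj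
  calc |x - t| ≤ (j + 1 : ℕ) / L - j / L := Real.dist_le_of_mem_Icc ⟨hj.1, hj.2.le⟩ ht
    _ = L⁻¹ := by
      push_cast
      ring

theorem sum_zetaMult_natFloor_eq_le {L T t : ℝ} {j : ℕ} (hL : 0 < L)
    (ht : t ∈ Icc (j / L) ((j + 1 : ℕ) / L)) :
    ∑ ρ ∈ zerosFinset T with ⌊ρ.im * L⌋₊ = j, (zetaMult ρ : ℝ) ≤
      ∑ ρ ∈ zerosFinset T with |ρ.im - t| ≤ L⁻¹, (zetaMult ρ : ℝ) := by
  refine Finset.sum_le_sum_of_subset_of_nonneg (fun ρ hρ ↦ ?_) fun _ _ _ ↦ Nat.cast_nonneg _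
  rw [Finset.mem_filter] at hρ ⊢
  have him := (mem_zerosFinset.1 hρ.1).2.1.le
  exact ⟨hρ.1, abs_sub_le_inv_of_natFloor_mul_eq hL him hρ.2 ht⟩

theorem exists_sum_sum_zetaMult_mul_div_le (hRH : RiemannHypothesis) : ∃ C > 0, ∀ L, 4 ≤ L →
    ∑ ρ ∈ zerosFinset (Real.exp (8 * L)), ∑ ρ' ∈ zerosFinset (Real.exp (8 * L)),
      (zetaMult ρ : ℝ) * zetaMult ρ' / (1 + (ρ.im * L - ρ'.im * L) ^ 2) ≤
        C * (L * Real.exp (8 * L)) := by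
  obtain ⟨C₁, hC₁, hlocal⟩ := exists_sum_zetaMult_le_localZerosBound hRH
  obtain ⟨C₂, hC₂, hint⟩ := exists_integral_localZerosBound_sq_le
  obtain ⟨K, hK, hbins⟩ := exists_sum_sum_mul_div_one_add_sq_le
  refine ⟨K * (C₁ ^ 2 * C₂), by positivity, fun L hL ↦ ?_⟩
  have hL₀ : 0 < L := by linarith
  set T := Real.exp (8 * L)
  set J := ⌊T * L⌋₊ + 1
  have hcont : Continuous fun t ↦ (C₁ * localZerosBound L t) ^ 2 :=
    ((continuous_localZerosBound L).const_mul C₁).pow 2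
  have hJ : (J : ℝ) / L ≤ T + 1 := by
    rw [div_le_iff₀ hL₀, Nat.cast_succ]
    linarith [Nat.floor_le (by positivity : 0 ≤ T * L)]
  have hbin (j : ℕ) (t : ℝ) (ht : t ∈ Icc (j / L) ((j + 1 : ℕ) / L)) :
      (∑ ρ ∈ zerosFinset T with ⌊ρ.im * L⌋₊ = j, (zetaMult ρ : ℝ)) ^ 2 ≤
        (C₁ * localZerosBound L t) ^ 2 := by
    gcongr
    exact (sum_zetaMult_natFloor_eq_le hL₀ ht).trans (hlocal L hL T t)
  calc _ ≤ K * ∑ j ∈ Finset.range J,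
          (∑ ρ ∈ zerosFinset T with ⌊ρ.im * L⌋₊ = j, (zetaMult ρ : ℝ)) ^ 2 := by
        refine hbins (fun _ ↦ Nat.cast_nonneg _) (fun ρ hρ ↦ ?_) fun ρ hρ ↦ ?_
        all_goals rw [mem_zerosFinset] at hρ
        · exact mul_nonneg hρ.2.1.le hL₀.le
        · rw [Finset.mem_range, Nat.lt_succ_iff]
          gcongr
          exact hρ.2.2
    _ ≤ K * (L * ∫ t in (0 : ℝ)..J / L, (C₁ * localZerosBound L t) ^ 2) := by
        gcongr
        exact sum_le_mul_integral hL₀ hcont hbin J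
    _ ≤ K * (L * ∫ t in (0 : ℝ)..T + 1, (C₁ * localZerosBound L t) ^ 2) := by
        gcongr
        exact intervalIntegral.integral_mono_interval le_rfl (by positivity) hJ
          (.of_forall fun _ ↦ sq_nonneg _) (hcont.intervalIntegrable _ _)
    _ ≤ K * (L * (C₁ ^ 2 * (C₂ * T))) := by
        simp_rw [mul_pow]
        rw [intervalIntegral.integral_const_mul]
        gcongr
        exact hint L hL
    _ = _ := by ring

/-! ### A lower bound for the number of zeros -/

theorem exists_norm_arithmeticPart_le_of_one_le_re :
    ∃ C, ∀ z : ℂ, 1 ≤ z.re → ‖arithmeticPart z‖ ≤ C := by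
  set Λ : ℕ → ℂ := fun n ↦ (ArithmeticFunction.vonMangoldt n : ℂ)
  have hsum : Summable fun n ↦ ‖LSeries.term Λ (3 / 2 : ℝ) n‖ :=
    (ArithmeticFunction.LSeriesSummable_vonMangoldt (by norm_num)).norm
  refine ⟨2 + ∑' n, ‖LSeries.term Λ (3 / 2 : ℝ) n‖, fun z hz ↦ ?_⟩
  rw [arithmeticPart_eq_sub_LSeries (by linarith)]
  refine norm_sub_le_of_le ?_ ?_
  · have hdist : 1 / 2 ≤ ‖z - 1 / 2‖ := by
      refine le_trans ?_ (re_le_norm _)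
      rw [sub_re, show (1 / 2 : ℂ).re = 1 / 2 by norm_num]
      linarith
    rw [norm_div, norm_one, div_le_iff₀ (by linarith)]
    linarith
  · refine tsum_of_norm_bounded hsum.hasSum fun n ↦ LSeries.norm_term_le_of_re_le_re _ ?_ n
    rw [ofReal_re, add_re, show (1 / 2 : ℂ).re = 1 / 2 by norm_num]
    linarith

theorem exists_abs_re_logDeriv_shiftedXi_sub_log_le :
    ∃ C, ∀ z : ℂ, 1 ≤ z.re → |(logDeriv shiftedXi z).re - Real.log (1 + ‖z‖) / 2| ≤ C := by
  obtain ⟨C₁, h₁⟩ := exists_norm_archimedeanPart_sub_le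
  obtain ⟨C₂, h₂⟩ := exists_norm_arithmeticPart_le_of_one_le_re
  refine ⟨C₁ + C₂, fun z hz ↦ ?_⟩
  have hsplit : (logDeriv shiftedXi z).re - Real.log (1 + ‖z‖) / 2 =
      ((archimedeanPart z - Real.log (1 + ‖z‖) / 2) + arithmeticPart z).re := by
    rw [arithmeticPart, add_re, sub_re, sub_re, ← ofReal_ofNat, ← ofReal_div, ofReal_re]
    ring
  rw [hsplit]
  exact (abs_re_le_norm _).trans (norm_add_le_of_le (h₁ z (by linarith)) (h₂ z hz))

theorem sum_order_mul_le_sum_zetaMult_mul {w : ℝ → ℝ} (hw : ∀ x, 0 ≤ w x) {T : ℝ} (S : Finset ℂ)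
    (hS : ∀ a ∈ S, shiftedXi a = 0 ∧ 0 < a.im ∧ a.im ≤ T) :
    ∑ a ∈ S, (analyticOrderNatAt shiftedXi a : ℝ) * w a.im ≤
      ∑ ρ ∈ zerosFinset T, (zetaMult ρ : ℝ) * w ρ.im := by
  have hmem {a : ℂ} (ha : a ∈ S) : 1 / 2 + a ∈ zerosFinset T := by
    obtain ⟨hzero, him⟩ := hS a ha
    exact mem_zerosFinset.2 ⟨shiftedXi_eq_zero_iff.1 hzero, by simpa using him⟩
  have hterm {a : ℂ} (ha : a ∈ S) : (analyticOrderNatAt shiftedXi a : ℝ) * w a.im =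
      (zetaMult (1 / 2 + a) : ℝ) * w (1 / 2 + a).im := by
    obtain ⟨hzero, him, -⟩ := mem_zerosFinset.1 (hmem ha)
    rw [← analyticOrderNatAt_shiftedXi hzero.2.1 (ne_of_apply_ne im (by simpa using him.ne')),
      add_sub_cancel_left]
    simp
  rw [Finset.sum_congr rfl fun a ha ↦ hterm ha,
    ← Finset.sum_image (f := fun ρ ↦ (zetaMult ρ : ℝ) * w ρ.im) (add_right_injective _).injOn]
  refine Finset.sum_le_sum_of_subset_of_nonneg (Finset.image_subset_iff.2 fun a ↦ hmem)
    fun ρ _ _ ↦ mul_nonneg (Nat.cast_nonneg _) (hw _)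

-- Zeros beyond the height `s`, as seen from `t`, are controlled by the real part of the
-- logarithmic derivative at height `s` itself, at horizontal distance comparable to `|t - s|`.
theorem sum_order_mul_inv_le_re_logDeriv_shiftedXi (hRH : RiemannHypothesis) {s t : ℝ}
    (S : Finset ℂ) (hS : ∀ a ∈ S, shiftedXi a = 0 ∧ (t - s) * (a.im - s) ≤ 0) :
    ∑ a ∈ S, (analyticOrderNatAt shiftedXi a : ℝ) * (1 + (t - a.im) ^ 2)⁻¹ ≤
      2 * (1 + |t - s|)⁻¹ * (logDeriv shiftedXi ((1 + |t - s| : ℝ) + s * I)).re := by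
  set y := 1 + |t - s|
  have hy : 0 < y := by positivity
  have hre : ((y : ℂ) + s * I).re = y := by simp
  have him : ((y : ℂ) + s * I).im = s := by simp
  have hsum := sum_le_re_logDeriv_shiftedXi hRH (hre ▸ hy) S fun a ha ↦ (hS a ha).1
  refine le_trans ?_ (mul_le_mul_of_nonneg_left hsum (by positivity))
  rw [Finset.mul_sum]
  refine Finset.sum_le_sum fun a ha ↦ ?_
  obtain ⟨hzero, hbeyond⟩ := hS a ha
  have hle : y ^ 2 + (s - a.im) ^ 2 ≤ 2 * (1 + (t - a.im) ^ 2) := by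
    have : y ^ 2 ≤ 2 * (1 + (t - s) ^ 2) := by
      rw [← sq_abs (t - s)]
      linarith [sq_nonneg (1 - |t - s|), show y ^ 2 = 1 + 2 * |t - s| + |t - s| ^ 2 by ring]
    linarith [sq_nonneg (s - a.im),
      show (t - a.im) ^ 2 = (t - s) ^ 2 + (s - a.im) ^ 2 - 2 * ((t - s) * (a.im - s)) by ring]
  rw [re_one_div_sub_eq_div_sq_add_sq (re_eq_zero_of_shiftedXi_eq_zero hRH hzero), hre, him]
  calc (analyticOrderNatAt shiftedXi a : ℝ) * (1 + (t - a.im) ^ 2)⁻¹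
      ≤ analyticOrderNatAt shiftedXi a * (2 * (y ^ 2 + (s - a.im) ^ 2)⁻¹) := by
        gcongr
        rw [inv_le_comm₀ (by positivity) (by positivity), mul_inv, inv_inv]
        linarith
    _ = _ := by field_simp

theorem re_logDeriv_shiftedXi_one_add_le (hRH : RiemannHypothesis) {T t : ℝ}
    (ht : t ∈ Icc 0 T) :
    (logDeriv shiftedXi (1 + t * I)).re ≤
      ∑ ρ ∈ zerosFinset T, (zetaMult ρ : ℝ) * (1 + (t - ρ.im) ^ 2)⁻¹ +
        (2 * (1 + |t - T|)⁻¹ * (logDeriv shiftedXi ((1 + |t - T| : ℝ) + T * I)).re +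
        2 * (1 + |t - 0|)⁻¹ * (logDeriv shiftedXi ((1 + |t - 0| : ℝ) + (0 : ℝ) * I)).re) := by
  refine re_logDeriv_shiftedXi_le hRH (by simp) fun S hS ↦ ?_
  have hterm {a : ℂ} (ha : a ∈ S) : (analyticOrderNatAt shiftedXi a : ℝ) *
      (1 / (1 + t * I - a)).re = analyticOrderNatAt shiftedXi a * (1 + (t - a.im) ^ 2)⁻¹ := by
    rw [re_one_div_sub_eq_div_sq_add_sq (re_eq_zero_of_shiftedXi_eq_zero hRH (hS a ha))]
    simp
  rw [Finset.sum_congr rfl fun a ha ↦ hterm ha,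
    ← Finset.sum_filter_add_sum_filter_not S fun a ↦ 0 < a.im ∧ a.im ≤ T,
    ← Finset.sum_filter_add_sum_filter_not {a ∈ S | ¬(0 < a.im ∧ a.im ≤ T)} fun a ↦ 0 < a.im]
  refine add_le_add ?_ (add_le_add ?_ ?_)
  · refine sum_order_mul_le_sum_zetaMult_mul (w := fun x ↦ (1 + (t - x) ^ 2)⁻¹)
      (fun _ ↦ by positivity) _ fun a ha ↦ ?_
    rw [Finset.mem_filter] at ha
    exact ⟨hS a ha.1, ha.2⟩
  all_goals
    refine sum_order_mul_inv_le_re_logDeriv_shiftedXi hRH _ fun a ha ↦ ?_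
    simp only [Finset.mem_filter, not_and, not_le, not_lt] at ha
    obtain ⟨⟨haS, him⟩, hpos⟩ := ha
    refine ⟨hS a haS, ?_⟩
  · exact mul_nonpos_of_nonpos_of_nonneg (sub_nonpos.2 ht.2) (sub_nonneg.2 (him hpos).le)
  · exact mul_nonpos_of_nonneg_of_nonpos (sub_nonneg.2 ht.1) (sub_nonpos.2 hpos)

theorem exists_log_le_sum_zetaMult_mul_inv (hRH : RiemannHypothesis) :
    ∃ C, 0 ≤ C ∧ ∀ T, ∀ t ∈ Icc 0 T, Real.log (1 + t) / 2 - C ≤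
      ∑ ρ ∈ zerosFinset T, (zetaMult ρ : ℝ) * (1 + (t - ρ.im) ^ 2)⁻¹ +
        (Real.log (3 * (1 + T)) + C) * ((1 + T - t)⁻¹ + (1 + t)⁻¹) := by
  obtain ⟨C, hC⟩ := exists_abs_re_logDeriv_shiftedXi_sub_log_le
  have hC₀ : 0 ≤ C := (abs_nonneg _).trans (hC 1 (by simp))
  refine ⟨2 * C, by positivity, fun T t ht ↦ ?_⟩
  obtain ⟨ht₀, htT⟩ := ht
  have hupper {y s : ℝ} (hy : 1 ≤ y) (hs : 0 ≤ s) (hys : y + s ≤ 2 * (1 + T)) :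
      (logDeriv shiftedXi (y + s * I)).re ≤ (Real.log (3 * (1 + T)) + 2 * C) / 2 := by
    have hnorm : ‖(y + s * I : ℂ)‖ ≤ y + s := by
      refine norm_add_le_of_le ?_ ?_ <;> simp [abs_of_nonneg, hs, zero_le_one.trans hy]
    have hlog : Real.log (1 + ‖(y + s * I : ℂ)‖) ≤ Real.log (3 * (1 + T)) :=
      Real.log_le_log (by positivity) (by linarith)
    linarith [(abs_le.1 (hC (y + s * I) (by simpa using hy))).2]
  have hlower : Real.log (1 + t) / 2 - C ≤ (logDeriv shiftedXi (1 + t * I)).re := by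
    have hnorm : t ≤ ‖(1 + t * I : ℂ)‖ := by simpa using im_le_norm (1 + t * I)
    have hlog : Real.log (1 + t) ≤ Real.log (1 + ‖(1 + t * I : ℂ)‖) :=
      Real.log_le_log (by linarith) (by linarith)
    linarith [(abs_le.1 (hC (1 + t * I) (by simp))).1]
  have habs : |t - T| = T - t := by rw [abs_of_nonpos (by linarith), neg_sub]
  have hsum := re_logDeriv_shiftedXi_one_add_le hRH ⟨ht₀, htT⟩
  rw [habs, sub_zero, abs_of_nonneg ht₀, ← add_sub_assoc] at hsum
  refine (sub_le_sub_left (by linarith) _).trans ((hlower.trans hsum).trans ?_)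
  have hT := mul_le_mul_of_nonneg_left (hupper (y := 1 + T - t) (s := T) (by linarith)
    (by linarith) (by linarith)) (show 0 ≤ 2 * (1 + T - t)⁻¹ from
      mul_nonneg two_pos.le (inv_nonneg.2 (by linarith)))
  have h₀ := mul_le_mul_of_nonneg_left (hupper (y := 1 + t) (by linarith) le_rfl (by linarith))
    (show 0 ≤ 2 * (1 + t)⁻¹ by positivity)
  linarith

theorem integral_sum_mul_inv_one_add_sub_sq_le {ι : Type*} (S : Finset ι) {m : ι → ℝ}
    (hm : ∀ i ∈ S, 0 ≤ m i) (γ : ι → ℝ) (a b : ℝ) :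
    ∫ t in a..b, ∑ i ∈ S, m i * (1 + (t - γ i) ^ 2)⁻¹ ≤ π * ∑ i ∈ S, m i := by
  have hcont (i : ι) : Continuous fun t ↦ m i * (1 + (t - γ i) ^ 2)⁻¹ :=
    continuous_const.mul (Continuous.inv₀ (by fun_prop) fun t ↦ by positivity)
  rw [intervalIntegral.integral_finsetSum fun i _ ↦ (hcont i).intervalIntegrable _ _, mul_comm,
    Finset.sum_mul]
  refine Finset.sum_le_sum fun i hi ↦ ?_
  rw [intervalIntegral.integral_const_mul,
    intervalIntegral.integral_comp_sub_right (fun x ↦ (1 + x ^ 2)⁻¹), integral_inv_one_add_sq]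
  gcongr
  · exact hm i hi
  · linarith [Real.arctan_lt_pi_div_two (b - γ i), Real.neg_pi_div_two_lt_arctan (a - γ i)]

theorem log_sq_le {x : ℝ} (hx : 1 ≤ x) : Real.log x ^ 2 ≤ 4 * x := by
  have hx₀ : 0 ≤ x := zero_le_one.trans hx
  have hlog : Real.log x ≤ 2 * √x := by
    have h := Real.log_le_rpow_div hx₀ one_half_pos
    rw [← Real.sqrt_eq_rpow] at h
    linarith
  calc Real.log x ^ 2 ≤ (2 * √x) ^ 2 := by
        gcongr
        exact Real.log_nonneg hx
    _ = 4 * x := by rw [mul_pow, Real.sq_sqrt hx₀]; norm_num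

/-- The number `N(T)` of zeros with `0 < Im ρ ≤ T`, counted with multiplicity. -/
def zeroCount (T : ℝ) : ℝ :=
  ∑ ρ ∈ zerosFinset T, (zetaMult ρ : ℝ)

theorem exists_integral_log_le_zeroCount (hRH : RiemannHypothesis) :
    ∃ C, 0 ≤ C ∧ ∀ T, 0 ≤ T → ((1 + T) * Real.log (1 + T) - T) / 2 - C * T ≤
      π * zeroCount T + 2 * (Real.log (3 * (1 + T)) + C) * Real.log (1 + T) := by
  obtain ⟨C, hC, hpoint⟩ := exists_log_le_sum_zetaMult_mul_inv hRH
  refine ⟨C, hC, fun T hT ↦ ?_⟩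
  have hpos {t : ℝ} (ht : t ∈ uIcc 0 T) : 0 < 1 + t ∧ 0 < 1 + T - t := by
    rw [uIcc_of_le hT] at ht
    constructor <;> linarith [ht.1, ht.2]
  have hlog : IntervalIntegrable (fun t ↦ Real.log (1 + t) / 2) volume 0 T :=
    ((ContinuousOn.log (by fun_prop) fun t ht ↦ (hpos ht).1.ne').div_const _).intervalIntegrable
  have hinv : IntervalIntegrable (fun t ↦ (1 + t)⁻¹) volume 0 T :=
    (ContinuousOn.inv₀ (by fun_prop) fun t ht ↦ (hpos ht).1.ne').intervalIntegrable
  have hinv' : IntervalIntegrable (fun t ↦ (1 + T - t)⁻¹) volume 0 T :=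
    (ContinuousOn.inv₀ (by fun_prop) fun t ht ↦ (hpos ht).2.ne').intervalIntegrable
  have hsum : IntervalIntegrable
      (fun t ↦ ∑ ρ ∈ zerosFinset T, (zetaMult ρ : ℝ) * (1 + (t - ρ.im) ^ 2)⁻¹) volume 0 T :=
    (continuous_finsetSum _ fun ρ _ ↦ continuous_const.mul
      (Continuous.inv₀ (by fun_prop) fun t ↦ by positivity)).intervalIntegrable _ _
  have hintegral := intervalIntegral.integral_mono_on hT
    (hlog.sub intervalIntegrable_const) (hsum.add ((hinv'.add hinv).const_mul _)) (hpoint T)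
  rw [intervalIntegral.integral_sub hlog intervalIntegrable_const,
    intervalIntegral.integral_add hsum ((hinv'.add hinv).const_mul _),
    intervalIntegral.integral_const_mul, intervalIntegral.integral_add hinv' hinv,
    intervalIntegral.integral_div, intervalIntegral.integral_const,
    intervalIntegral.integral_comp_add_left (fun t ↦ Real.log t), integral_log,
    intervalIntegral.integral_comp_add_left (fun t ↦ t⁻¹),
    intervalIntegral.integral_comp_sub_left (fun t ↦ t⁻¹),
    integral_inv_of_pos (by linarith) (by linarith),
    integral_inv_of_pos (by linarith) (by linarith)] at hintegral
  have hcount := integral_sum_mul_inv_one_add_sub_sq_le (zerosFinset T)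
    (m := fun ρ ↦ zetaMult ρ) (fun _ _ ↦ Nat.cast_nonneg _) im 0 T
  simp only [add_sub_cancel_right, add_zero, div_one, Real.log_one, mul_zero, sub_zero,
    smul_eq_mul] at hintegral
  rw [zeroCount]
  linarith

theorem exists_sub_le_zeroCount (hRH : RiemannHypothesis) :
    ∃ C, ∀ T, 2 ≤ T → T / (2 * π) * Real.log T - C * T ≤ zeroCount T := by
  obtain ⟨C, hC, hcount⟩ := exists_integral_log_le_zeroCount hRH
  refine ⟨1 / 2 + C + (36 + 9 * C), fun T hT ↦ ?_⟩
  set x := 3 * (1 + T)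
  have hlog : T * Real.log T ≤ (1 + T) * Real.log (1 + T) := by
    gcongr
    · exact Real.log_nonneg (by linarith)
    all_goals linarith
  have herror : 2 * (Real.log x + C) * Real.log (1 + T) ≤ (36 + 9 * C) * T :=
    calc 2 * (Real.log x + C) * Real.log (1 + T) ≤ 2 * (Real.log x + C) * Real.log x := by
          have : 0 ≤ Real.log x := Real.log_nonneg (by linarith)
          gcongr
          linarith
      _ = 2 * Real.log x ^ 2 + 2 * C * Real.log x := by ring
      _ ≤ 2 * (4 * x) + 2 * C * x := by
          gcongr
          · exact log_sq_le (by linarith)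
          · exact Real.log_le_self (by linarith)
      _ = (8 + 2 * C) * x := by ring
      _ ≤ (8 + 2 * C) * (9 / 2 * T) := by
          gcongr
          linarith
      _ = (36 + 9 * C) * T := by ring
  have hmul : (1 / 2 + C + (36 + 9 * C)) * T ≤ (1 / 2 + C + (36 + 9 * C)) * T * π :=
    le_mul_of_one_le_right (by positivity) (by linarith [Real.pi_gt_three])
  refine le_of_mul_le_mul_right ?_ Real.pi_pos
  calc (T / (2 * π) * Real.log T - (1 / 2 + C + (36 + 9 * C)) * T) * π
      = T * Real.log T / 2 - (1 / 2 + C + (36 + 9 * C)) * T * π := by field_simp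
    _ ≤ zeroCount T * π := by linarith [hcount T (by linarith)]

/-! ### Fejér means of the pair correlation function -/

/-- The integral of `f` over `[0, k]` against the Fejér weight `1 - α / k`. -/
def fejerIntegral (f : ℝ → ℝ) (k : ℝ) : ℝ :=
  ∫ α in (0 : ℝ)..k, (1 - α / k) * f α

theorem integral_one_sub_div {k : ℝ} (hk : k ≠ 0) : ∫ α in (0 : ℝ)..k, (1 - α / k) = k / 2 := by
  rw [intervalIntegral.integral_sub intervalIntegrable_const
    (Continuous.intervalIntegrable (by fun_prop) _ _), intervalIntegral.integral_div, integral_id,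
    integral_one]
  field

theorem fejerIntegral_one {k : ℝ} (hk : k ≠ 0) : fejerIntegral (fun _ ↦ 1) k = k / 2 := by
  simp_rw [fejerIntegral, mul_one, integral_one_sub_div hk]

theorem fejerIntegral_cos_mul {k v : ℝ} (hk : k ≠ 0) (hv : v ≠ 0) :
    fejerIntegral (fun α ↦ Real.cos (α * v)) k = (1 - Real.cos (k * v)) / (k * v ^ 2) := by
  have hderiv (x : ℝ) :
      HasDerivAt (fun x ↦ (1 - x / k) * (Real.sin (x * v) / v) - Real.cos (x * v) / (k * v ^ 2))
        ((1 - x / k) * Real.cos (x * v)) x := by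
    have hmul : HasDerivAt (fun x ↦ x * v) v x := hasDerivAt_mul_const v
    have hweight : HasDerivAt (fun x ↦ 1 - x / k) (-(1 / k)) x :=
      ((hasDerivAt_id' x).div_const k).const_sub 1
    refine ((hweight.mul (hmul.sin.div_const v)).sub
      (hmul.cos.div_const (k * v ^ 2))).congr_deriv ?_
    field
  rw [fejerIntegral, intervalIntegral.integral_eq_sub_of_hasDerivAt (fun x _ ↦ hderiv x)
    (Continuous.intervalIntegrable (by fun_prop) _ _), div_self hk, zero_div, zero_mul,
    Real.sin_zero, Real.cos_zero]
  ring

theorem fejerIntegral_cos_mul_nonneg {k : ℝ} (hk : 0 < k) (v : ℝ) :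
    0 ≤ fejerIntegral (fun α ↦ Real.cos (α * v)) k := by
  obtain rfl | hv := eq_or_ne v 0
  · simp_rw [mul_zero, Real.cos_zero, fejerIntegral_one hk.ne']
    positivity
  · rw [fejerIntegral_cos_mul hk.ne' hv]
    exact div_nonneg (sub_nonneg.2 (Real.cos_le_one _)) (by positivity)

theorem fejerIntegral_cos_mul_le {k : ℝ} (hk : 0 < k) (v : ℝ) :
    fejerIntegral (fun α ↦ Real.cos (α * v)) k ≤ k / (1 + (k * v / 2) ^ 2) := by
  obtain rfl | hv := eq_or_ne v 0
  · simp_rw [mul_zero, Real.cos_zero, fejerIntegral_one hk.ne']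
    norm_num
    exact hk.le
  · have hquadratic := Real.one_sub_sq_div_two_le_cos (x := k * v)
    have hbounded : (1 - Real.cos (k * v)) * (k * v) ^ 2 ≤ 2 * (k * v) ^ 2 := by
      gcongr
      linarith [Real.neg_one_le_cos (k * v)]
    rw [fejerIntegral_cos_mul hk.ne' hv, div_le_div_iff₀ (by positivity) (by positivity)]
    linarith

section FejerIntegral

variable {f : ℝ → ℝ} (hf : Continuous f)
include hf

theorem integral_zero_one_fejer (k : ℝ) : ∫ α in (0 : ℝ)..1, (1 - α / k) * f α =
    (1 - 1 / k) * (∫ α in (0 : ℝ)..1, f α) + 1 / k * fejerIntegral f 1 := by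
  rw [fejerIntegral, ← intervalIntegral.integral_const_mul, ← intervalIntegral.integral_const_mul,
    ← intervalIntegral.integral_add (Continuous.intervalIntegrable (by fun_prop) _ _)
      (Continuous.intervalIntegrable (by fun_prop) _ _)]
  congr 1 with α
  ring

theorem fejerIntegral_eq_add (k : ℝ) : fejerIntegral f k =
    (∫ α in (0 : ℝ)..1, (1 - α / k) * f α) + ∫ α in (1 : ℝ)..k, (1 - α / k) * f α :=
  have hcont : Continuous fun α ↦ (1 - α / k) * f α := by fun_prop
  (intervalIntegral.integral_add_adjacent_intervals (hcont.intervalIntegrable _ _)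
    (hcont.intervalIntegrable _ _)).symm

-- On `[0, 1]` the weight `1 - α / M` is at most twice the weight `1 - α / 2`.
theorem fejerIntegral_le {M B : ℝ} (hM : 2 ≤ M) (hB : ∀ α ∈ Icc 1 M, f α ∈ Icc 0 B)
    (h₁ : 0 ≤ fejerIntegral f 1) (h₂ : 0 ≤ fejerIntegral f 2) :
    fejerIntegral f M ≤ M / 2 * B + 2 * fejerIntegral f 2 := by
  have hM₀ : 0 < M := by linarith
  have hweight {α : ℝ} (hα : α ≤ M) : 0 ≤ 1 - α / M := sub_nonneg.2 ((div_le_one hM₀).2 hα)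
  have hB₀ : 0 ≤ B := (hB 1 ⟨le_rfl, by linarith⟩).1.trans (hB 1 ⟨le_rfl, by linarith⟩).2
  have htail₂ : 0 ≤ ∫ α in (1 : ℝ)..2, (1 - α / 2) * f α :=
    intervalIntegral.integral_nonneg one_le_two fun α hα ↦
      mul_nonneg (by linarith [hα.2]) (hB α ⟨hα.1, hα.2.trans hM⟩).1
  have htail : ∫ α in (1 : ℝ)..M, (1 - α / M) * f α ≤ M / 2 * B :=
    calc ∫ α in (1 : ℝ)..M, (1 - α / M) * f α ≤ ∫ α in (1 : ℝ)..M, (1 - α / M) * B := by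
          refine intervalIntegral.integral_mono_on (by linarith)
            (Continuous.intervalIntegrable (by fun_prop) _ _)
            (Continuous.intervalIntegrable (by fun_prop) _ _) fun α hα ↦ ?_
          exact mul_le_mul_of_nonneg_left (hB α hα).2 (hweight hα.2)
      _ = (∫ α in (1 : ℝ)..M, (1 - α / M)) * B := intervalIntegral.integral_mul_const ..
      _ ≤ (∫ α in (0 : ℝ)..M, (1 - α / M)) * B := by
          gcongr
          refine intervalIntegral.integral_mono_interval zero_le_one (by linarith) le_rfl ?_
            (Continuous.intervalIntegrable (by fun_prop) _ _)
          filter_upwards [ae_restrict_mem measurableSet_Ioc] with α hα using hweight hα.2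
      _ = M / 2 * B := by rw [integral_one_sub_div hM₀.ne']
  have hsplit₂ := fejerIntegral_eq_add hf 2
  have hsplit := fejerIntegral_eq_add hf M
  rw [integral_zero_one_fejer hf] at hsplit₂ hsplit
  have hinv : 1 / M ≤ 1 / 2 := one_div_le_one_div_of_le two_pos hM
  have hinv₀ : 0 ≤ 1 / M := by positivity
  nlinarith

end FejerIntegral

/-- The real part `∑ m_ρ m_ρ' w(γ - γ') cos(α (γ - γ') log T)` of Montgomery's `F(T ^ α, T)`. -/
def pairSum (T α : ℝ) : ℝ :=
  ∑ ρ ∈ zerosFinset T, ∑ ρ' ∈ zerosFinset T, (zetaMult ρ : ℝ) * zetaMult ρ' *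
    (4 / (4 + (ρ.im - ρ'.im) ^ 2)) * Real.cos (α * ((ρ.im - ρ'.im) * Real.log T))

theorem continuous_pairSum (T : ℝ) : Continuous (pairSum T) :=
  continuous_finsetSum _ fun _ _ ↦ continuous_finsetSum _ fun _ _ ↦ by fun_prop

theorem sum_zerosFinset {E : Type*} [AddCommMonoid E] [TopologicalSpace E] (T : ℝ) (g : ℂ → E) :
    ∑ ρ ∈ zerosFinset T, g ρ = ∑' ρ : zerosUpTo T, g ρ := by
  rw [← Finset.tsum_subtype', zerosFinset, Finite.coe_toFinset]

theorem Nstar_eq (T : ℝ) :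
    Nstar T = (T / (2 * π) * Real.log T)⁻¹ * ∑ ρ ∈ zerosFinset T, (zetaMult ρ : ℝ) ^ 2 := by
  rw [Nstar, sum_zerosFinset]

theorem Fxt_eq_sum (x T : ℝ) : Fxt x T =
    ∑ ρ ∈ zerosFinset T, ∑ ρ' ∈ zerosFinset T, (zetaMult ρ * zetaMult ρ' : ℂ) *
      Complex.exp (I * ((ρ.im - ρ'.im : ℝ) : ℂ) * (Real.log x : ℂ)) *
        ((4 / (4 + (ρ.im - ρ'.im) ^ 2) : ℝ) : ℂ) := by
  have := (zerosUpTo_finite T).to_subtype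
  simp_rw [sum_zerosFinset]
  rw [Fxt, Summable.tsum_prod .of_finite]

theorem re_FF {T : ℝ} (hT : 0 < T) (α : ℝ) :
    (FF α T).re = (T / (2 * π) * Real.log T)⁻¹ * pairSum T α := by
  rw [FF, Fxt_eq_sum, ← ofReal_inv, re_ofReal_mul, pairSum]
  congr 1
  simp_rw [re_sum]
  refine Finset.sum_congr rfl fun ρ _ ↦ Finset.sum_congr rfl fun ρ' _ ↦ ?_
  have hexp : I * ((ρ.im - ρ'.im : ℝ) : ℂ) * ((α * Real.log T : ℝ) : ℂ) =
      ((α * ((ρ.im - ρ'.im) * Real.log T) : ℝ) : ℂ) * I := by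
    push_cast
    ring
  rw [re_mul_ofReal, Real.log_rpow hT, hexp, ← Nat.cast_mul, ← ofReal_natCast, re_ofReal_mul,
    exp_ofReal_mul_I_re, Nat.cast_mul]
  ring

theorem fejerIntegral_pairSum (T k : ℝ) : fejerIntegral (pairSum T) k =
    ∑ ρ ∈ zerosFinset T, ∑ ρ' ∈ zerosFinset T, (zetaMult ρ : ℝ) * zetaMult ρ' *
      (4 / (4 + (ρ.im - ρ'.im) ^ 2)) *
        fejerIntegral (fun α ↦ Real.cos (α * ((ρ.im - ρ'.im) * Real.log T))) k := by
  simp_rw [fejerIntegral, pairSum, Finset.mul_sum, ← intervalIntegral.integral_const_mul]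
  rw [intervalIntegral.integral_finsetSum fun _ _ ↦ Continuous.intervalIntegrable
    (continuous_finsetSum _ fun _ _ ↦ by fun_prop) _ _]
  refine Finset.sum_congr rfl fun ρ _ ↦ ?_
  rw [intervalIntegral.integral_finsetSum fun _ _ ↦
    Continuous.intervalIntegrable (by fun_prop) _ _]
  simp_rw [mul_left_comm]

theorem fejerIntegral_pairSum_nonneg (T : ℝ) {k : ℝ} (hk : 0 < k) :
    0 ≤ fejerIntegral (pairSum T) k := by
  rw [fejerIntegral_pairSum]
  exact Finset.sum_nonneg fun ρ _ ↦ Finset.sum_nonneg fun ρ' _ ↦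
    mul_nonneg (by positivity) (fejerIntegral_cos_mul_nonneg hk _)

-- The diagonal terms `ρ = ρ'` contribute `k / 2 * ∑ m_ρ ^ 2`.
theorem sum_sq_zetaMult_le_fejerIntegral (T : ℝ) {k : ℝ} (hk : 0 < k) :
    k / 2 * ∑ ρ ∈ zerosFinset T, (zetaMult ρ : ℝ) ^ 2 ≤ fejerIntegral (pairSum T) k := by
  rw [fejerIntegral_pairSum, Finset.mul_sum]
  refine Finset.sum_le_sum fun ρ hρ ↦ le_of_eq_of_le ?_ (Finset.single_le_sum
    (fun ρ' _ ↦ mul_nonneg (by positivity) (fejerIntegral_cos_mul_nonneg hk _)) hρ)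
  simp_rw [sub_self, zero_mul, mul_zero, Real.cos_zero, fejerIntegral_one hk.ne']
  ring

theorem exists_fejerIntegral_two_le (hRH : RiemannHypothesis) :
    ∃ C, ∀ T, Real.exp 32 ≤ T → fejerIntegral (pairSum T) 2 ≤ C * (T * Real.log T) := by
  obtain ⟨C, -, hpair⟩ := exists_sum_sum_zetaMult_mul_div_le hRH
  refine ⟨C / 4, fun T hT ↦ ?_⟩
  have hT₀ : 0 < T := (Real.exp_pos _).trans_le hT
  set L := Real.log T / 8 with hL
  have hL_log : 8 * L = Real.log T := by ring
  have hL₄ : 4 ≤ L := by linarith [(Real.le_log_iff_exp_le hT₀).2 hT]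
  have hbound := hpair L hL₄
  rw [hL_log, Real.exp_log hT₀] at hbound
  calc fejerIntegral (pairSum T) 2
      ≤ ∑ ρ ∈ zerosFinset T, ∑ ρ' ∈ zerosFinset T,
          2 * ((zetaMult ρ : ℝ) * zetaMult ρ' / (1 + (ρ.im * L - ρ'.im * L) ^ 2)) := by
        rw [fejerIntegral_pairSum]
        refine Finset.sum_le_sum fun ρ _ ↦ Finset.sum_le_sum fun ρ' _ ↦ ?_
        have hw : 4 / (4 + (ρ.im - ρ'.im) ^ 2) ≤ 1 :=
          div_le_one_of_le₀ (le_add_of_nonneg_right (sq_nonneg _)) (by positivity)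
        have hfejer : fejerIntegral (fun α ↦ Real.cos (α * ((ρ.im - ρ'.im) * Real.log T))) 2 ≤
            2 / (1 + (ρ.im * L - ρ'.im * L) ^ 2) := by
          refine (fejerIntegral_cos_mul_le two_pos _).trans ?_
          gcongr 2 / (1 + ?_)
          rw [← hL_log, show 2 * ((ρ.im - ρ'.im) * (8 * L)) / 2 =
            8 * (ρ.im * L - ρ'.im * L) by ring, mul_pow]
          linarith [sq_nonneg (ρ.im * L - ρ'.im * L)]
        calc _ ≤ (zetaMult ρ : ℝ) * zetaMult ρ' * 1 *
              (2 / (1 + (ρ.im * L - ρ'.im * L) ^ 2)) := by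
              gcongr
              exact fejerIntegral_cos_mul_nonneg two_pos _
          _ = _ := by ring
    _ ≤ 2 * (C * (L * T)) := by
        simp_rw [← Finset.mul_sum]
        linarith
    _ = C / 4 * (T * Real.log T) := by rw [← hL_log]; ring

theorem div_two_pi_mul_log_pos {T : ℝ} (hT : 1 < T) : 0 < T / (2 * π) * Real.log T :=
  mul_pos (by positivity) (Real.log_pos hT)

theorem pairSum_mem_Icc {T α ε : ℝ} (hT : 1 < T) (hε : ε ≤ 1) (hF : ‖FF α T - 1‖ ≤ ε) :
    pairSum T α ∈ Icc 0 ((1 + ε) * (T / (2 * π) * Real.log T)) := by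
  have hre := abs_le.1 ((abs_re_le_norm _).trans hF)
  have hn := div_two_pi_mul_log_pos hT
  rw [sub_re, one_re, re_FF (one_pos.trans hT)] at hre
  constructor
  · exact (mul_nonneg_iff_of_pos_left (inv_pos.2 hn)).1 (by linarith)
  · rw [mul_comm, ← inv_mul_le_iff₀ hn]
    linarith

theorem exists_Nstar_le (hRH : RiemannHypothesis) :
    ∃ C, ∀ M ε T : ℝ, 2 ≤ M → ε ≤ 1 → Real.exp 32 ≤ T →
      (∀ α, 1 ≤ α → α ≤ M → ‖FF α T - 1‖ ≤ ε) → Nstar T ≤ 1 + ε + C / M := by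
  obtain ⟨C, hC⟩ := exists_fejerIntegral_two_le hRH
  refine ⟨8 * π * C, fun M ε T hM hε hT hF ↦ ?_⟩
  have hM₀ : 0 < M := by linarith
  have hT₁ : 1 < T := (Real.one_lt_exp_iff.2 (by norm_num)).trans_le hT
  have hn := div_two_pi_mul_log_pos hT₁
  have hfejer := fejerIntegral_le (continuous_pairSum T) hM
    (fun α hα ↦ pairSum_mem_Icc hT₁ hε (hF α hα.1 hα.2))
    (fejerIntegral_pairSum_nonneg T one_pos) (fejerIntegral_pairSum_nonneg T two_pos)
  have hdiag := sum_sq_zetaMult_le_fejerIntegral T hM₀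
  rw [Nstar_eq, inv_mul_le_iff₀ hn]
  refine le_of_mul_le_mul_left ?_ (half_pos hM₀)
  calc M / 2 * ∑ ρ ∈ zerosFinset T, (zetaMult ρ : ℝ) ^ 2
      ≤ M / 2 * ((1 + ε) * (T / (2 * π) * Real.log T)) + 2 * (C * (T * Real.log T)) := by
        linarith [hC T hT]
    _ = _ := by field

theorem exists_le_Nstar (hRH : RiemannHypothesis) :
    ∃ C, ∀ T, 2 ≤ T → 1 - C / Real.log T ≤ Nstar T := by
  obtain ⟨C, hC⟩ := exists_sub_le_zeroCount hRH
  refine ⟨2 * π * C, fun T hT ↦ ?_⟩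
  have hlog : 0 < Real.log T := Real.log_pos (by linarith)
  have hsq : zeroCount T ≤ ∑ ρ ∈ zerosFinset T, (zetaMult ρ : ℝ) ^ 2 :=
    Finset.sum_le_sum fun ρ _ ↦ mod_cast Nat.le_self_pow two_ne_zero _
  rw [Nstar_eq, le_inv_mul_iff₀ (div_two_pi_mul_log_pos (by linarith))]
  calc T / (2 * π) * Real.log T * (1 - 2 * π * C / Real.log T)
      = T / (2 * π) * Real.log T - C * T := by field
    _ ≤ _ := (hC T hT).trans hsq

end PairCorrelation

/-- Assuming RH and the Strong Pair Correlation Conjecture, the Simple Zeros Conjecture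
holds: `N*(T) → 1` as `T → ∞`. -/
theorem SPC_implies_SZC (hRH : RiemannHypothesis) (hSPC : SPC) :
    Filter.Tendsto Nstar Filter.atTop (nhds 1) := by
  obtain ⟨C₁, hlower⟩ := PairCorrelation.exists_le_Nstar hRH
  obtain ⟨C₂, hupper⟩ := PairCorrelation.exists_Nstar_le hRH
  have hlower_lim : Tendsto (fun T ↦ 1 - C₁ / Real.log T) atTop (nhds 1) := by
    simpa using (Real.tendsto_log_atTop.const_div_atTop C₁).const_sub 1
  refine tendsto_order.2 ⟨fun a ha ↦ ?_, fun b hb ↦ ?_⟩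
  · filter_upwards [hlower_lim.eventually_const_lt ha, eventually_ge_atTop 2] with T haT hT
    exact haT.trans_le (hlower T hT)
  · obtain ⟨ε, hε, hεb⟩ := exists_between (lt_min one_pos (sub_pos.2 hb))
    have hM_lim : Tendsto (fun M ↦ 1 + ε + C₂ / M) atTop (nhds (1 + ε)) := by
      simpa using (tendsto_id.const_div_atTop C₂).const_add (1 + ε)
    have hεb' : 1 + ε < b := by linarith [hεb.trans_le (min_le_right _ _)]
    obtain ⟨M, hMb, hM⟩ :=
      ((hM_lim.eventually_lt_const hεb').and (eventually_ge_atTop 2)).exists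
    obtain ⟨T₀, hF⟩ := hSPC M (by linarith) ε hε
    filter_upwards [eventually_ge_atTop T₀, eventually_ge_atTop (Real.exp 32)] with T hT₀ hT
    exact (hupper M ε T hM (hεb.le.trans (min_le_left _ _)) hT (hF T hT₀)).trans_lt hMb
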